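/- arXiv:math/0701869 — 7 statements merged into one kernel-verified Lean document; each statement's English description precedes it below -/
import Mathlib

section
/- Let q, A, B, C₁, C₂, C₃, C₄ be real numbers with q ≠ 1/2. Define, for real parameters a₁, a₂, b₂, α₂, the rational functions R(x) = −[(b₂ + 2a₁q + a₁)x² + (b₂ − 1 + 2q + 2a₁)x]/(1+x)² and P(x) = −[(a₂x² + α₂x)/(1+x) − (b₂x − 1)(a₁x² + x)/(1+x)² − q(a₁x² + x)²/(1+x)³] (these arise from the quadratic system with b₁ = α₁ = β₁ = 1, c₂ = −q, β₂ = −1). Then there exist real numbers a₁, a₂, b₂, α₂ such that R(x) = (Ax+B)x/(1+x)² and P(x) = (C₁x³ + C₂x² + C₃x + C₄)x/(1+x)³ for all x ≠ −1 if and only if ((B−A)/(2q−1)²)·((1−q)B + (3q−2)A) = 2C₂ − 3C₁ − C₃ and ((B−A)/(2q−1)²)·(B + 2(q−1)A) = C₂ − 2C₁ − C₄. Moreover, in that case one may take a₁ = 1 + (B−A)/(2q−1), a₂ = −(q+1)a₁² − Aa₁ − C₁, b₂ = −A − a₁(2q+1), α₂ = a₁² − 2a₁ + A(a₁−1) + (2C₁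 − C₂). -/
/-!
Put `t = (B - A) / (2q - 1)`, so that `B = A + (2q - 1) t`. Clearing denominators turns the two
identities of rational functions into identities of polynomials, i.e. into six equations between
coefficients (`forall_Rquad_eq_iff`, `forall_Pquad_eq_iff`). The two coming from `R` force
`a₁ = 1 + t` and the stated `b₂`; the two top ones coming from `P` then force `a₂` and `α₂`; the
remaining two become `A t + (1 - q) t² = 2C₂ - 3C₁ - C₃` and `A t + t² = C₂ - 2C₁ - C₄`, which are
the compatibility conditions written in terms of `t`.
-/

/-- The rational function `R` arising from the quadratic system with
`b₁ = α₁ = β₁ = 1`, `c₂ = -q`, `β₂ = -1`. -/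
noncomputable def Rquad (a₁ b₂ q x : ℝ) : ℝ :=
  -(((b₂ + 2 * a₁ * q + a₁) * x ^ 2 + (b₂ - 1 + 2 * q + 2 * a₁) * x) / (1 + x) ^ 2)

/-- The rational function `P` arising from the quadratic system with
`b₁ = α₁ = β₁ = 1`, `c₂ = -q`, `β₂ = -1`. -/
noncomputable def Pquad (a₁ a₂ b₂ α₂ q x : ℝ) : ℝ :=
  -((a₂ * x ^ 2 + α₂ * x) / (1 + x)
    - (b₂ * x - 1) * (a₁ * x ^ 2 + x) / (1 + x) ^ 2
    - q * (a₁ * x ^ 2 + x) ^ 2 / (1 + x) ^ 3)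

theorem forall_Rquad_eq_iff (q A B a₁ b₂ : ℝ) :
    (∀ x : ℝ, x ≠ -1 → Rquad a₁ b₂ q x = (A * x + B) * x / (1 + x) ^ 2) ↔
      (-(b₂ + 2 * a₁ * q + a₁) = A ∧ -(b₂ - 1 + 2 * q + 2 * a₁) = B) := by
  constructor
  · intro h
    have h1 := h 1 (by norm_num)
    have h2 := h 2 (by norm_num)
    norm_num [Rquad] at h1 h2
    constructor <;> linarith
  · rintro ⟨rfl, rfl⟩ x hx
    unfold Rquad
    ring

theorem forall_Pquad_eq_iff (q a₁ a₂ b₂ α₂ C₁ C₂ C₃ C₄ : ℝ) :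
    (∀ x : ℝ, x ≠ -1 → Pquad a₁ a₂ b₂ α₂ q x
        = (C₁ * x ^ 3 + C₂ * x ^ 2 + C₃ * x + C₄) * x / (1 + x) ^ 3) ↔
      (-a₂ + a₁ * b₂ + q * a₁ ^ 2 = C₁ ∧
        -(2 * a₂ + α₂) + b₂ * (a₁ + 1) - a₁ + 2 * q * a₁ = C₂ ∧
        -(a₂ + 2 * α₂) + b₂ - a₁ - 1 + q = C₃ ∧
        -α₂ - 1 = C₄) := by
  constructor
  · intro h
    -- After division by `x` the numerators are cubics, so four nonzero sample points suffice.
    have h1 := h 1 (by norm_num)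
    have h2 := h 2 (by norm_num)
    have h3 := h 3 (by norm_num)
    have h4 := h (-2) (by norm_num)
    norm_num [Pquad] at h1 h2 h3 h4
    refine ⟨?_, ?_, ?_, ?_⟩ <;> linarith
  · rintro ⟨rfl, rfl, rfl, rfl⟩ x hx
    have hx' : 1 + x ≠ 0 := fun h => hx (by linarith)
    unfold Pquad
    field_simp
    ring

/-- The compatibility conditions in terms of `t = (B - A) / (2q - 1)`. -/
theorem compatibility_iff (q A B t C₁ C₂ C₃ C₄ : ℝ) (hq : 2 * q - 1 ≠ 0)
    (hB : B = A + (2 * q - 1) * t) :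
    ((B - A) / (2 * q - 1) ^ 2 * ((1 - q) * B + (3 * q - 2) * A) = 2 * C₂ - 3 * C₁ - C₃ ∧
        (B - A) / (2 * q - 1) ^ 2 * (B + 2 * (q - 1) * A) = C₂ - 2 * C₁ - C₄) ↔
      (A * t + (1 - q) * t ^ 2 = 2 * C₂ - 3 * C₁ - C₃ ∧
        A * t + t ^ 2 = C₂ - 2 * C₁ - C₄) := by
  have e1 : (B - A) / (2 * q - 1) ^ 2 * ((1 - q) * B + (3 * q - 2) * A)
      = A * t + (1 - q) * t ^ 2 := by
    rw [div_mul_eq_mul_div, div_eq_iff (pow_ne_zero 2 hq), hB]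
    ring
  have e2 : (B - A) / (2 * q - 1) ^ 2 * (B + 2 * (q - 1) * A) = A * t + t ^ 2 := by
    rw [div_mul_eq_mul_div, div_eq_iff (pow_ne_zero 2 hq), hB]
    ring
  rw [e1, e2]

/-- existence of quadratic-system parameters realizing prescribed Liénard data,
iff the two compatibility conditions hold; moreover explicit parameters work. -/
theorem lienard_parameters_realizable_iff
    (q A B C₁ C₂ C₃ C₄ : ℝ) (hq : q ≠ 1 / 2) :
    ((∃ a₁ a₂ b₂ α₂ : ℝ, ∀ x : ℝ, x ≠ -1 →
        Rquad a₁ b₂ q x = (A * x + B) * x / (1 + x) ^ 2 ∧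
        Pquad a₁ a₂ b₂ α₂ q x
          = (C₁ * x ^ 3 + C₂ * x ^ 2 + C₃ * x + C₄) * x / (1 + x) ^ 3)
      ↔ ((B - A) / (2 * q - 1) ^ 2 * ((1 - q) * B + (3 * q - 2) * A)
            = 2 * C₂ - 3 * C₁ - C₃ ∧
          (B - A) / (2 * q - 1) ^ 2 * (B + 2 * (q - 1) * A)
            = C₂ - 2 * C₁ - C₄)) ∧
    (((B - A) / (2 * q - 1) ^ 2 * ((1 - q) * B + (3 * q - 2) * A)
          = 2 * C₂ - 3 * C₁ - C₃ ∧
        (B - A) / (2 * q - 1) ^ 2 * (B + 2 * (q - 1) * A)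
          = C₂ - 2 * C₁ - C₄) →
      ∀ x : ℝ, x ≠ -1 →
        Rquad (1 + (B - A) / (2 * q - 1))
            (-A - (1 + (B - A) / (2 * q - 1)) * (2 * q + 1)) q x
          = (A * x + B) * x / (1 + x) ^ 2 ∧
        Pquad (1 + (B - A) / (2 * q - 1))
            (-(q + 1) * (1 + (B - A) / (2 * q - 1)) ^ 2
              - A * (1 + (B - A) / (2 * q - 1)) - C₁)
            (-A - (1 + (B - A) / (2 * q - 1)) * (2 * q + 1))
            ((1 + (B - A) / (2 * q - 1)) ^ 2 - 2 * (1 + (B - A) / (2 * q - 1))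
              + A * ((1 + (B - A) / (2 * q - 1)) - 1) + (2 * C₁ - C₂)) q x
          = (C₁ * x ^ 3 + C₂ * x ^ 2 + C₃ * x + C₄) * x / (1 + x) ^ 3) := by
  have hq' : 2 * q - 1 ≠ 0 := fun h => hq (by linarith)
  obtain ⟨t, ht⟩ : ∃ t, t = (B - A) / (2 * q - 1) := ⟨_, rfl⟩
  have hB : B = A + (2 * q - 1) * t := by
    rw [ht]
    field_simp
    ring
  rw [compatibility_iff q A B t C₁ C₂ C₃ C₄ hq' hB, ← ht]
  -- The explicit parameters realize the data; this also gives the existence direction.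
  have key : (A * t + (1 - q) * t ^ 2 = 2 * C₂ - 3 * C₁ - C₃ ∧
      A * t + t ^ 2 = C₂ - 2 * C₁ - C₄) → ∀ x : ℝ, x ≠ -1 →
        Rquad (1 + t) (-A - (1 + t) * (2 * q + 1)) q x = (A * x + B) * x / (1 + x) ^ 2 ∧
        Pquad (1 + t) (-(q + 1) * (1 + t) ^ 2 - A * (1 + t) - C₁)
            (-A - (1 + t) * (2 * q + 1))
            ((1 + t) ^ 2 - 2 * (1 + t) + A * ((1 + t) - 1) + (2 * C₁ - C₂)) q x
          = (C₁ * x ^ 3 + C₂ * x ^ 2 + C₃ * x + C₄) * x / (1 + x) ^ 3 := by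
    rintro ⟨h1, h2⟩ x hx
    refine ⟨(forall_Rquad_eq_iff q A B _ _).2 ⟨by ring, by rw [hB]; ring⟩ x hx,
      (forall_Pquad_eq_iff q _ _ _ _ C₁ C₂ C₃ C₄).2 ⟨by ring, by ring, ?_, ?_⟩ x hx⟩
    · linear_combination -h1
    · linear_combination -h2
  refine ⟨⟨?_, fun h => ⟨_, _, _, _, key h⟩⟩, key⟩
  rintro ⟨a₁, a₂, b₂, α₂, h⟩
  obtain ⟨hA, hB'⟩ := (forall_Rquad_eq_iff q A B a₁ b₂).1 fun x hx => (h x hx).1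
  obtain ⟨h1, h2, h3, h4⟩ :=
    (forall_Pquad_eq_iff q a₁ a₂ b₂ α₂ C₁ C₂ C₃ C₄).1 fun x hx => (h x hx).2
  have ha : a₁ = 1 + t := mul_left_cancel₀ hq' (by linear_combination hB - hA + hB')
  subst ha
  obtain rfl : b₂ = -A - (1 + t) * (2 * q + 1) := by linear_combination -hA
  constructor
  · linear_combination 2 * h2 - 3 * h1 - h3
  · linear_combination h2 - 2 * h1 - h4
end

section
/- Let x₀ ∈ ℝ and let F(x, ε), G(x, ε) be smooth real functions on a neighborhood of the point (x₀, 0); set f(x) = F(x, 0), g(x) = G(x, 0), and assume f(x₀) = g(x₀) = 0. Assume there is a function ε ↦ x_ε, defined and continuous for small ε ≥ 0 with x_0 = x₀, such that G(x_ε, ε) = 0 and F(x_ε, ε) > 0 for all sufficiently small ε > 0. If f''(x₀)g'(x₀) − g''(x₀)f'(x₀) < 0 and g'(x₀) > 0, then there exists ε₀ > 0 such that for every ε ∈ (0, ε₀) the planar system ẋ = y, ẏ = −F(x, ε)y − G(x, ε) has a nonconstant periodic solution. -/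
/-!
Put `x = x_ε + r cos θ`, `y = -ω r sin θ` with `ω ^ 2 = ∂G/∂x (x_ε, ε)`. Near the equilibrium the
angle increases along orbits, so orbits are graphs `r(θ)` of solutions of a `2π`-periodic scalar
equation `dr/dθ = r * polarN / polarD`, and cycles correspond to its positive periodic solutions
(`exists_cycle_of_polar_solution`).

A periodic solution is trapped between two closed curves around the equilibrium. Since
`F (x_ε, ε) > 0`, the equilibrium is attracting for `ε > 0`, and very small curves
`r = ρ exp (η sin θ cos θ)` are crossed inward (`exists_inner_barrier`). For `ε = 0` the equilibrium
is a weak focus: averaging `dr/dθ` to third order gives the leading term `m r ^ 3` with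
`m = (g'' f' - f'' g') / (16 g' ^ (3 / 2)) > 0`, so it is repelling, and a curve
`r = ρ (1 + ρ p(θ) + ρ ^ 2 q(θ))`, with trigonometric polynomials `p`, `q` that remove the
oscillating terms, is crossed outward strictly (`exists_outer_barrier`). By compactness this fixed
curve is still crossed outward for all small `ε > 0` (`eventually_outer_barrier`), whereas the inner
curve may be chosen afterwards, depending on `ε`. The annulus between the two curves is left by all
orbits crossing its boundary, so the backward Poincaré map sends an interval into itself and has a
fixed point (`exists_periodic_of_expelling_strip`).
-/

open Set Function Filter Topology

/-! ### Periodic solutions of scalar periodic equations -/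

/-- A solution on `[0, T]` of a `T`-periodic equation with equal end values extends periodically
to a solution on the whole line. At multiples of `T` the two one-sided derivatives agree because the
equation is periodic. -/
theorem hasDerivAt_toIcoMod_of_closed {v : ℝ → ℝ → ℝ} {T : ℝ} (hT : 0 < T)
    (hv : ∀ t r, v (t + T) r = v t r) {r : ℝ → ℝ}
    (hr : ∀ t ∈ Icc 0 T, HasDerivWithinAt r (v t (r t)) (Icc 0 T) t) (h0 : r 0 = r T) :
    ∀ t, HasDerivAt (fun s => r (toIcoMod hT 0 s))
      (v t (r (toIcoMod hT 0 t))) t := by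
  set u : ℝ → ℝ := fun s => r (toIcoMod hT 0 s) with hu
  have hup : Periodic u T := fun s => by simp [hu, toIcoMod_add_right]
  have hvp : ∀ x, Periodic (fun t => v t x) T := fun x t => hv t x
  have hur : ∀ s ∈ Icc 0 T, u s = r s := by
    intro s hs
    rcases hs.2.eq_or_lt with h | h
    · have : toIcoMod hT 0 T = 0 := by simpa using toIcoMod_apply_right hT 0
      simp only [hu, h, this, h0]
    · simp only [hu]
      rw [(toIcoMod_eq_self hT).2 ⟨hs.1, by simpa using h⟩]
  have hU : ∀ t ∈ Icc 0 T, HasDerivWithinAt u (v t (u t)) (Icc 0 T) t := fun t ht => by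
    rw [hur t ht]
    exact (hr t ht).congr hur (hur t ht)
  have hshift : ∀ (n : ℤ) (t : ℝ), HasDerivAt u (v t (u t)) t →
      HasDerivAt u (v (t + n * T) (u (t + n * T))) (t + n * T) := by
    intro n t h
    have e1 : u (t + n * T) = u t := hup.int_mul n t
    have e2 : v (t + n * T) (u t) = v t (u t) := (hvp (u t)).int_mul n t
    rw [e1, e2]
    have h' : HasDerivAt u (v t (u t)) (t + n * T - n * T) := by simpa using h
    have := h'.comp_sub_const (t + n * T) (n * T)
    refine this.congr_of_eventuallyEq (Eventually.of_forall fun s => ?_)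
    exact ((hup.int_mul n).sub_eq s).symm
  have hmain : ∀ t ∈ Ico 0 T, HasDerivAt u (v t (u t)) t := by
    intro t ht
    rcases ht.1.eq_or_lt with h | h
    · subst h
      have hR : HasDerivWithinAt u (v 0 (u 0)) (Ici 0) 0 :=
        (hU 0 ⟨le_rfl, hT.le⟩).mono_of_mem_nhdsWithin (Icc_mem_nhdsGE hT)
      have hL0 : HasDerivWithinAt u (v T (u T)) (Iic T) T :=
        (hU T ⟨hT.le, le_rfl⟩).mono_of_mem_nhdsWithin (Icc_mem_nhdsLE hT)
      have hL : HasDerivWithinAt u (v 0 (u 0)) (Iic 0) 0 := by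
        have e1 : u T = u 0 := by simpa using hup 0
        have e2 : v T (u 0) = v 0 (u 0) := by simpa using hv 0 (u 0)
        rw [e1, e2] at hL0
        have hc : HasDerivWithinAt (fun s : ℝ => s + T) 1 (Iic 0) 0 :=
          ((hasDerivAt_id (0 : ℝ)).add_const T).hasDerivWithinAt
        have h2 : HasDerivWithinAt u (v 0 (u 0)) (Iic T) (0 + T) := by simpa using hL0
        have := h2.comp (0 : ℝ) hc (fun s hs => by simpa using hs)
        rw [mul_one] at this
        refine this.congr (fun s _ => (hup s).symm) (hup 0).symm
      have := hR.union hL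
      rwa [Ici_union_Iic, hasDerivWithinAt_univ] at this
    · exact (hU t ⟨ht.1, ht.2.le⟩).hasDerivAt (Icc_mem_nhds h ht.2)
  intro t
  have h1 : toIcoMod hT 0 t + (toIcoDiv hT 0 t) * T = t := by
    simp
  have := hshift (toIcoDiv hT 0 t) _ (hmain _ (by simpa using toIcoMod_mem_Ico hT 0 t))
  rwa [h1] at this

/-- If the vector field points inward along both boundary curves of a periodic strip, the Poincaré
map sends `[α 0, β 0]` into itself and hence has a fixed point. -/
theorem exists_periodic_of_invariant_strip {R : ℝ → ℝ → ℝ} {α β α' β' : ℝ → ℝ} {T : ℝ} (hT : 0 < T)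
    (hα : ∀ t, HasDerivAt α (α' t) t) (hβ : ∀ t, HasDerivAt β (β' t) t)
    (hαT : α T = α 0) (hβT : β T = β 0) (hαβ : ∀ t, α t < β t)
    (hRp : ∀ t r, R (t + T) r = R t r) (hRc : ∀ r, Continuous fun t => R t r)
    {K M : NNReal} (hRL : ∀ t, LipschitzWith K (R t)) (hRM : ∀ t r, |R t r| ≤ M)
    (hinα : ∀ t, α' t < R t (α t)) (hinβ : ∀ t, R t (β t) < β' t) :
    ∃ u : ℝ → ℝ, Periodic u T ∧ (∀ t, HasDerivAt u (R t (u t)) t) ∧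
      ∀ t ∈ Icc 0 T, α t ≤ u t ∧ u t ≤ β t := by
  set r : NNReal := ⟨β 0 - α 0, by linarith [hαβ 0]⟩ with hr
  set T' : NNReal := ⟨T, hT.le⟩ with hT'
  have hPL : IsPicardLindelof R (tmin := 0) (tmax := T) ⟨0, ⟨le_rfl, hT.le⟩⟩ (α 0)
      (r + M * T') r M K := by
    refine ⟨fun t _ => (hRL t).lipschitzOnWith, fun x _ => (hRc x).continuousOn,
      fun t _ x _ => hRM t x, ?_⟩
    have : max T 0 = T := max_eq_left hT.le
    change (M : ℝ) * max (T - 0) (0 - 0) ≤ (r : ℝ) + M * T - r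
    rw [sub_zero, sub_zero, this]
    linarith
  obtain ⟨φ, hφ, L, hL⟩ := hPL.exists_forall_mem_closedBall_eq_hasDerivWithinAt_lipschitzOnWith
  have hball : ∀ x ∈ Icc (α 0) (β 0), x ∈ Metric.closedBall (α 0) (r : ℝ) := by
    intro x hx
    rw [Metric.mem_closedBall, Real.dist_eq, abs_of_nonneg (by linarith [hx.1])]
    change x - α 0 ≤ β 0 - α 0
    linarith [hx.2]
  have hstay : ∀ x ∈ Icc (α 0) (β 0), ∀ t ∈ Icc 0 T, α t ≤ φ x t ∧ φ x t ≤ β t := by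
    intro x hx
    obtain ⟨h0, hd⟩ := hφ x (hball x hx)
    have hc : ContinuousOn (φ x) (Icc 0 T) := fun t ht => (hd t ht).continuousWithinAt
    have hd' : ∀ t ∈ Ico 0 T, HasDerivWithinAt (φ x) (R t (φ x t)) (Ici t) t := fun t ht =>
      (hd t ⟨ht.1, ht.2.le⟩).mono_of_mem_nhdsWithin
        (mem_of_superset (Icc_mem_nhdsGE ht.2) (Icc_subset_Icc ht.1 le_rfl))
    intro t ht
    constructor
    · refine image_le_of_deriv_right_lt_deriv_boundary' (f := α) (f' := α') (B := φ x)
        (B' := fun t => R t (φ x t))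
        (fun t _ => (hα t).continuousAt.continuousWithinAt) (fun t _ => (hα t).hasDerivWithinAt)
        ?_ hc hd' ?_ ht
      · rw [show φ x 0 = x from h0]; exact hx.1
      · intro s _ hs
        simp only [← hs]; exact hinα s
    · refine image_le_of_deriv_right_lt_deriv_boundary hc hd' (B := β) (B' := β') ?_ hβ ?_ ht
      · rw [show φ x 0 = x from h0]; exact hx.2
      · intro s _ hs
        rw [hs]; exact hinβ s
  have hTm : T ∈ Icc 0 T := ⟨hT.le, le_rfl⟩
  obtain ⟨x, hx, hfix⟩ := exists_mem_Icc_isFixedPt_of_mapsTo (f := fun x => φ x T)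
    ((hL T hTm).continuousOn.mono hball) (hαβ 0).le
    (fun x hx => by simpa [hαT, hβT] using hstay x hx T hTm)
  obtain ⟨h0, hd⟩ := hφ x (hball x hx)
  have h0T : φ x 0 = φ x T := by
    rw [show φ x 0 = x from h0]; exact hfix.symm
  refine ⟨fun s => φ x (toIcoMod hT 0 s), fun s => by simp [toIcoMod_add_right],
    hasDerivAt_toIcoMod_of_closed hT hRp hd h0T, ?_⟩
  intro t ht
  have : φ x (toIcoMod hT 0 t) = φ x t := by
    rcases ht.2.eq_or_lt with h | h
    · have : toIcoMod hT 0 T = 0 := by simpa using toIcoMod_apply_right hT 0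
      simp only [h, this, h0T]
    · rw [(toIcoMod_eq_self hT).2 ⟨ht.1, by simpa using h⟩]
  simp only [this]
  exact hstay x hx t ht

theorem hasDerivAt_comp_neg_real {f : ℝ → ℝ} {d t : ℝ} (h : HasDerivAt f d (-t)) :
    HasDerivAt (fun s => f (-s)) (-d) t :=
  (h.comp t (hasDerivAt_neg t)).congr_deriv (by ring)

/-- A periodic strip whose boundary curves are crossed outward contains a periodic solution: reverse
the independent variable. -/
theorem exists_periodic_of_expelling_strip {R : ℝ → ℝ → ℝ} {α β α' β' : ℝ → ℝ} {T : ℝ} (hT : 0 < T)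
    (hα : ∀ t, HasDerivAt α (α' t) t) (hβ : ∀ t, HasDerivAt β (β' t) t)
    (hαT : Periodic α T) (hβT : Periodic β T) (hαβ : ∀ t, α t < β t)
    (hRp : ∀ t r, R (t + T) r = R t r) (hRc : ∀ r, Continuous fun t => R t r)
    {K M : NNReal} (hRL : ∀ t, LipschitzWith K (R t)) (hRM : ∀ t r, |R t r| ≤ M)
    (houtα : ∀ t, R t (α t) < α' t) (houtβ : ∀ t, β' t < R t (β t)) :
    ∃ u : ℝ → ℝ, Periodic u T ∧ (∀ t, HasDerivAt u (R t (u t)) t) ∧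
      ∀ t, α t ≤ u t ∧ u t ≤ β t := by
  obtain ⟨u, hup, hud, hus⟩ := exists_periodic_of_invariant_strip
    (R := fun t r => -R (-t) r) (α := fun t => α (-t)) (β := fun t => β (-t))
    (α' := fun t => -α' (-t)) (β' := fun t => -β' (-t)) (K := K) (M := M) hT
    (fun t => hasDerivAt_comp_neg_real (hα (-t)))
    (fun t => hasDerivAt_comp_neg_real (hβ (-t)))
    (by simpa using hαT.neg 0) (by simpa using hβT.neg 0) (fun t => hαβ _)
    (fun t r => by
      have := hRp (-(t + T)) r
      rw [← this]; congr 2; ring)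
    (fun r => ((hRc r).comp continuous_neg).neg)
    (fun t => (hRL (-t)).neg) (fun t r => by simpa using hRM (-t) r)
    (fun t => neg_lt_neg (houtα _)) (fun t => neg_lt_neg (houtβ _))
  have hup' : Periodic (fun t => u (-t)) T := fun t => by
    have := hup (-(t + T))
    simp only [← this]; congr 1; ring
  refine ⟨fun t => u (-t), hup', fun t => ?_, fun t => ?_⟩
  · simpa using hasDerivAt_comp_neg_real (hud (-t))
  · obtain ⟨s, hs, he⟩ : ∃ s ∈ Ico 0 T, (-t) = s + (toIcoDiv hT 0 (-t)) * T :=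
      ⟨toIcoMod hT 0 (-t), by simpa using toIcoMod_mem_Ico hT 0 (-t), by simp⟩
    have h1 := hus s ⟨hs.1, hs.2.le⟩
    set n := toIcoDiv hT 0 (-t)
    have e1 : u (-t) = u s := by rw [he]; exact hup.int_mul n s
    have e2 : t = -s - n * T := by linarith
    have e3 : α t = α (-s) := by rw [e2]; exact (hαT.int_mul n).sub_eq _
    have e4 : β t = β (-s) := by rw [e2]; exact (hβT.int_mul n).sub_eq _
    rw [e3, e4]; simp only [e1]
    exact h1

/-- The autonomous scalar equation `θ̇ = h θ` with `h` positive and `p`-periodic: its solution is the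
inverse of `s ↦ ∫₀ˢ 1 / h`, and it advances by `p` in the time `T = ∫₀ᵖ 1 / h`. -/
theorem exists_angle_of_speed {h : ℝ → ℝ} (hc : Continuous h) (hpos : ∀ s, 0 < h s)
    {p : ℝ} (hp : 0 < p) (hper : Periodic h p) :
    ∃ (θ : ℝ → ℝ) (T : ℝ), 0 < T ∧ (∀ t, HasDerivAt θ (h (θ t)) t) ∧
      (∀ t, θ (t + T) = θ t + p) ∧ Surjective θ := by
  set w : ℝ → ℝ := fun s => (h s)⁻¹ with hw
  have hwc : Continuous w := hc.inv₀ fun s => (hpos s).ne'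
  have hwpos : ∀ s, 0 < w s := fun s => inv_pos.2 (hpos s)
  have hwper : Periodic w p := fun s => by simp [hw, hper s]
  set τ : ℝ → ℝ := fun s => ∫ x in (0 : ℝ)..s, w x with hτ
  have hτd : ∀ s, HasDerivAt τ (w s) s := fun s =>
    intervalIntegral.integral_hasDerivAt_right (hwc.intervalIntegrable _ _)
      (hwc.stronglyMeasurableAtFilter _ _) hwc.continuousAt
  have hmono : StrictMono τ := strictMono_of_deriv_pos fun s => by
    rw [(hτd s).deriv]; exact hwpos s
  have hτ0 : τ 0 = 0 := by simp [hτ]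
  set T := τ p with hT
  have hTpos : 0 < T := by rw [← hτ0]; exact hmono hp
  have hadd : ∀ s, τ (s + p) = τ s + T := by
    intro s
    have h1 := hwper.intervalIntegral_add_eq s 0
    have h2 := intervalIntegral.integral_add_adjacent_intervals
      (hwc.intervalIntegrable (μ := MeasureTheory.volume) 0 s) (hwc.intervalIntegrable s (s + p))
    rw [zero_add] at h1
    simp only [hτ, hT]
    rw [← h2, h1]
  have hint : ∀ n : ℤ, τ (n * p) = n * T := by
    have hper' : Periodic (fun s => τ s - T / p * s) p := fun s => by
      simp only [hadd]; field_simp; ring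
    intro n
    have := hper'.int_mul n 0
    simp only [hτ0, zero_add, mul_zero, sub_zero] at this
    have h3 : T / p * (n * p) = n * T := by field_simp
    linarith
  have hcont : Continuous τ := continuous_iff_continuousAt.2 fun s => (hτd s).continuousAt
  have hsurj : Surjective τ := by
    refine hcont.surjective (tendsto_atTop_atTop_of_monotone hmono.monotone fun b => ?_)
      (tendsto_atBot_atBot_of_monotone hmono.monotone fun b => ?_)
    · refine ⟨(⌈b / T⌉ : ℤ) * p, ?_⟩
      rw [hint]
      exact (div_le_iff₀ hTpos).1 (Int.le_ceil _)
    · refine ⟨(⌊b / T⌋ : ℤ) * p, ?_⟩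
      rw [hint]
      exact (le_div_iff₀ hTpos).1 (Int.floor_le _)
  set e := hmono.orderIsoOfSurjective τ hsurj with he
  have heτ : ∀ s, e s = τ s := fun s => rfl
  refine ⟨e.symm, T, hTpos, fun t => ?_, fun t => ?_, e.symm.surjective⟩
  · have := (hτd (e.symm t)).of_local_left_inverse (g := e.symm) (a := t)
      e.symm.continuous.continuousAt (hwpos _).ne'
      (Eventually.of_forall fun s => by rw [← heτ]; simp)
    simpa [hw] using this
  · rw [OrderIso.symm_apply_eq, heτ, hadd, ← heτ]; simp

/-! ### The system in polar coordinates -/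

/-- Radial speed `ṙ` of `ẋ = y`, `ẏ = -F(x) y - G(x)` in the polar coordinates
`x = a + r cos θ`, `y = -ω r sin θ`. The minus sign makes `θ` increase with time. -/
noncomputable def polarN (F G : ℝ → ℝ) (a ω θ r : ℝ) : ℝ :=
  -F (a + r * Real.cos θ) * r * Real.sin θ ^ 2
    + Real.sin θ * (G (a + r * Real.cos θ) / ω - ω * r * Real.cos θ)

/-- The quantity `r θ̇` for `ẋ = y`, `ẏ = -F(x) y - G(x)` in the polar coordinates
`x = a + r cos θ`, `y = -ω r sin θ`. Where it is positive, orbits solve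
`dr/dθ = r * polarN / polarD`. -/
noncomputable def polarD (F G : ℝ → ℝ) (a ω θ r : ℝ) : ℝ :=
  ω * r * Real.sin θ ^ 2 - F (a + r * Real.cos θ) * r * Real.sin θ * Real.cos θ
    + Real.cos θ * G (a + r * Real.cos θ) / ω

/-- A positive `2π`-periodic solution `u` of `dr/dθ = r * polarN / polarD` yields a cycle of the
planar system, by letting the angle run with speed `polarD / u`. -/
theorem exists_cycle_of_polar_solution {F G : ℝ → ℝ} {a ω : ℝ} (hω : 0 < ω) {u : ℝ → ℝ}
    (hup : Periodic u (2 * Real.pi)) (hupos : ∀ s, 0 < u s)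
    (hD : ∀ s, 0 < polarD F G a ω s (u s))
    (hDc : Continuous fun s => polarD F G a ω s (u s))
    (hud : ∀ s, HasDerivAt u (u s * polarN F G a ω s (u s) / polarD F G a ω s (u s)) s) :
    ∃ (x y : ℝ → ℝ) (T : ℝ), 0 < T ∧
      (∀ t, HasDerivAt x (y t) t) ∧
      (∀ t, HasDerivAt y (-(F (x t)) * y t - G (x t)) t) ∧
      (∀ t, x (t + T) = x t ∧ y (t + T) = y t) ∧
      (∃ t₁ t₂ : ℝ, (x t₁, y t₁) ≠ (x t₂, y t₂)) := by
  have huc : Continuous u := continuous_iff_continuousAt.2 fun s => (hud s).continuousAt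
  obtain ⟨θ, T, hT, hθd, hθT, hθs⟩ := exists_angle_of_speed
    (h := fun s => polarD F G a ω s (u s) / u s) (hDc.div huc fun s => (hupos s).ne')
    (fun s => div_pos (hD s) (hupos s)) Real.two_pi_pos
    (fun s => by simp only [hup s, polarD, Real.cos_add_two_pi, Real.sin_add_two_pi])
  refine ⟨fun t => a + u (θ t) * Real.cos (θ t), fun t => -ω * (u (θ t) * Real.sin (θ t)), T, hT,
    fun t => ?_, fun t => ?_, fun t => ?_, ?_⟩
  · have h1 := ((hud (θ t)).comp t (hθd t)).mul ((hθd t).cos)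
    refine (h1.const_add a).congr_deriv ?_
    have h2 := (hupos (θ t)).ne'
    have h3 := (hD (θ t)).ne'
    have h4 : Real.cos (θ t) * polarN F G a ω (θ t) (u (θ t))
        - Real.sin (θ t) * polarD F G a ω (θ t) (u (θ t)) = -ω * (u (θ t) * Real.sin (θ t)) := by
      have := Real.sin_sq_add_cos_sq (θ t)
      simp only [polarN, polarD]
      linear_combination (-ω * u (θ t) * Real.sin (θ t)) * this
    change _ = -ω * (u (θ t) * Real.sin (θ t))
    rw [← h4]
    simp only [Function.comp]
    field_simp
    ring
  · have h1 := ((hud (θ t)).comp t (hθd t)).mul ((hθd t).sin)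
    refine (h1.const_mul (-ω)).congr_deriv ?_
    have h2 := (hupos (θ t)).ne'
    have h3 := (hD (θ t)).ne'
    have h4 : -ω * (Real.sin (θ t) * polarN F G a ω (θ t) (u (θ t))
        + Real.cos (θ t) * polarD F G a ω (θ t) (u (θ t))) =
        -F (a + u (θ t) * Real.cos (θ t)) * (-ω * (u (θ t) * Real.sin (θ t)))
          - G (a + u (θ t) * Real.cos (θ t)) := by
      have := Real.sin_sq_add_cos_sq (θ t)
      simp only [polarN, polarD]
      field_simp
      linear_combination (ω * F (a + u (θ t) * Real.cos (θ t)) * (u (θ t) * Real.sin (θ t))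
          - G (a + u (θ t) * Real.cos (θ t))) * this
    rw [← h4]
    simp only [Function.comp]
    field_simp
  · simp [hθT, hup (θ t)]
  · obtain ⟨t₁, h₁⟩ := hθs 0
    obtain ⟨t₂, h₂⟩ := hθs (Real.pi / 2)
    refine ⟨t₁, t₂, fun h => ?_⟩
    have := congrArg Prod.snd h
    simp only [h₁, h₂, Real.sin_zero, Real.sin_pi_div_two] at this
    have h5 := mul_pos hω (hupos (Real.pi / 2))
    linarith

theorem contDiffOn_polar {F : ℝ → ℝ} {a d r₁ r₂ : ℝ}
    (h₁ : 0 < r₁) (h₂ : r₂ < d) (hF : ContDiffOn ℝ 1 F (Ioo (a - d) (a + d))) :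
    ContDiffOn ℝ 1 (fun p : ℝ × ℝ => F (a + p.2 * Real.cos p.1)) (univ ×ˢ Icc r₁ r₂) := by
  refine hF.comp (t := Ioo (a - d) (a + d)) (f := fun p : ℝ × ℝ => a + p.2 * Real.cos p.1)
    (by fun_prop) ?_
  rintro ⟨s, r⟩ ⟨-, hr⟩
  have hr1 : r₁ ≤ r := hr.1
  have hr2 : r ≤ r₂ := hr.2
  have := abs_le.1 (Real.abs_cos_le_one s)
  constructor <;> simp only <;> nlinarith

/-- A cycle exists as soon as orbits cross an inner barrier `α` inward and an outer barrier `β`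
outward. The field `r * polarN / polarD` is defined only for small `r`; composing `r` with the
projection onto `[r₁, r₂]` makes it globally Lipschitz without changing it between the barriers. -/
theorem exists_cycle_of_polar_barriers {F G : ℝ → ℝ} {a ω d r₁ r₂ : ℝ} (hω : 0 < ω)
    (hF : ContDiffOn ℝ 1 F (Ioo (a - d) (a + d))) (hG : ContDiffOn ℝ 1 G (Ioo (a - d) (a + d)))
    (hD : ∀ s, ∀ r, 0 < r → r < d → 0 < polarD F G a ω s r)
    {α β α' β' : ℝ → ℝ} (h₁ : 0 < r₁) (h₂ : r₂ < d)
    (hα₁ : ∀ s, r₁ ≤ α s) (hβ₂ : ∀ s, β s ≤ r₂) (hαβ : ∀ s, α s < β s)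
    (hα : ∀ t, HasDerivAt α (α' t) t) (hβ : ∀ t, HasDerivAt β (β' t) t)
    (hαT : Periodic α (2 * Real.pi)) (hβT : Periodic β (2 * Real.pi))
    (houtα : ∀ s, α s * polarN F G a ω s (α s) < α' s * polarD F G a ω s (α s))
    (houtβ : ∀ s, β' s * polarD F G a ω s (β s) < β s * polarN F G a ω s (β s)) :
    ∃ (x y : ℝ → ℝ) (T : ℝ), 0 < T ∧
      (∀ t, HasDerivAt x (y t) t) ∧
      (∀ t, HasDerivAt y (-(F (x t)) * y t - G (x t)) t) ∧
      (∀ t, x (t + T) = x t ∧ y (t + T) = y t) ∧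
      (∃ t₁ t₂ : ℝ, (x t₁, y t₁) ≠ (x t₂, y t₂)) := by
  have h12 : r₁ ≤ r₂ := (hα₁ 0).trans ((hαβ 0).le.trans (hβ₂ 0))
  set S : ℝ → ℝ → ℝ := fun s r => r * polarN F G a ω s r / polarD F G a ω s r with hS
  have hFp := contDiffOn_polar (a := a) h₁ h₂ hF
  have hGp := contDiffOn_polar (a := a) h₁ h₂ hG
  have hsin : ContDiffOn ℝ 1 (fun p : ℝ × ℝ => Real.sin p.1) (univ ×ˢ Icc r₁ r₂) :=
    (Real.contDiff_sin.comp contDiff_fst).contDiffOn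
  have hcos : ContDiffOn ℝ 1 (fun p : ℝ × ℝ => Real.cos p.1) (univ ×ˢ Icc r₁ r₂) :=
    (Real.contDiff_cos.comp contDiff_fst).contDiffOn
  have hNc : ContDiffOn ℝ 1 (fun p : ℝ × ℝ => polarN F G a ω p.1 p.2) (univ ×ˢ Icc r₁ r₂) := by
    unfold polarN
    exact ((hFp.neg.mul contDiffOn_snd).mul (hsin.pow 2)).add
      (hsin.mul ((hGp.div_const ω).sub ((contDiffOn_const.mul contDiffOn_snd).mul hcos)))
  have hDc : ContDiffOn ℝ 1 (fun p : ℝ × ℝ => polarD F G a ω p.1 p.2) (univ ×ˢ Icc r₁ r₂) := by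
    unfold polarD
    exact (((contDiffOn_const.mul contDiffOn_snd).mul (hsin.pow 2)).sub
      (((hFp.mul contDiffOn_snd).mul hsin).mul hcos)).add ((hcos.mul hGp).div_const ω)
  have hSc : ContDiffOn ℝ 1 (uncurry S) (univ ×ˢ Icc r₁ r₂) := by
    refine ContDiffOn.div (f := fun p : ℝ × ℝ => p.2 * polarN F G a ω p.1 p.2)
      (g := fun p : ℝ × ℝ => polarD F G a ω p.1 p.2) (by fun_prop) hDc ?_
    rintro ⟨s, r⟩ ⟨-, hr⟩
    exact (hD s r (h₁.trans_le hr.1) (hr.2.trans_lt h₂)).ne'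
  set B : Set (ℝ × ℝ) := Icc 0 (2 * Real.pi) ×ˢ Icc r₁ r₂ with hB
  have hBu : B ⊆ univ ×ˢ Icc r₁ r₂ := prod_mono (subset_univ _) le_rfl
  have hBc : IsCompact B := isCompact_Icc.prod isCompact_Icc
  obtain ⟨K, hK⟩ := (hSc.mono hBu).exists_lipschitzOnWith one_ne_zero
    ((convex_Icc _ _).prod (convex_Icc _ _)) hBc
  obtain ⟨M, hM⟩ := hBc.exists_bound_of_continuousOn (hSc.mono hBu).continuousOn
  have hSper : Periodic S (2 * Real.pi) := fun s => by
    funext r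
    simp only [hS, polarN, polarD, Real.cos_add_two_pi, Real.sin_add_two_pi]
  have hred : ∀ t, ∃ s ∈ Icc 0 (2 * Real.pi), S t = S s := fun t => by
    obtain ⟨s, hs, h⟩ := hSper.exists_mem_Ico₀ Real.two_pi_pos t
    exact ⟨s, ⟨hs.1, hs.2.le⟩, h⟩
  have hproj : ∀ r, r₁ ≤ r → r ≤ r₂ → (projIcc r₁ r₂ h12 r : ℝ) = r := fun r ha hb => by
    rw [projIcc_of_mem h12 ⟨ha, hb⟩]
  obtain ⟨u, hup, hud, hu⟩ := exists_periodic_of_expelling_strip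
    (R := fun t r => S t (projIcc r₁ r₂ h12 r)) (α := α) (β := β) (α' := α') (β' := β')
    (K := K) (M := M.toNNReal) Real.two_pi_pos hα hβ hαT hβT hαβ
    (fun t r => by rw [hSper t])
    (fun r => by
      have : ContinuousOn (uncurry S) (univ ×ˢ Icc r₁ r₂) := hSc.continuousOn
      exact this.comp_continuous (f := fun t : ℝ => (t, (projIcc r₁ r₂ h12 r : ℝ))) (by fun_prop)
        fun t => ⟨mem_univ _, (projIcc r₁ r₂ h12 r).2⟩)
    (fun t => by
      obtain ⟨s, hs, h⟩ := hred t
      refine LipschitzWith.of_dist_le_mul fun x y => ?_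
      simp only [h]
      refine (hK.dist_le_mul (s, _) ⟨hs, (projIcc r₁ r₂ h12 x).2⟩
        (s, _) ⟨hs, (projIcc r₁ r₂ h12 y).2⟩).trans ?_
      gcongr
      rw [Prod.dist_eq, dist_self, max_eq_right dist_nonneg]
      have := (LipschitzWith.projIcc h12).dist_le_mul x y
      rwa [NNReal.coe_one, one_mul, Subtype.dist_eq] at this)
    (fun t r => by
      obtain ⟨s, hs, h⟩ := hred t
      simp only [h]
      exact (hM (s, _) ⟨hs, (projIcc r₁ r₂ h12 r).2⟩).trans (Real.le_coe_toNNReal _))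
    (fun t => by
      have hb : α t ≤ r₂ := (hαβ t).le.trans (hβ₂ t)
      simp only [hproj _ (hα₁ t) hb, hS]
      rw [div_lt_iff₀ (hD t _ (h₁.trans_le (hα₁ t)) (hb.trans_lt h₂))]
      exact houtα t)
    (fun t => by
      have hb : r₁ ≤ β t := (hα₁ t).trans (hαβ t).le
      simp only [hproj _ hb (hβ₂ t), hS]
      rw [lt_div_iff₀ (hD t _ (h₁.trans_le hb) ((hβ₂ t).trans_lt h₂))]
      exact houtβ t)
  have hu1 : ∀ t, r₁ ≤ u t := fun t => (hα₁ t).trans (hu t).1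
  have hu2 : ∀ t, u t ≤ r₂ := fun t => (hu t).2.trans (hβ₂ t)
  have huc : Continuous u := continuous_iff_continuousAt.2 fun s => (hud s).continuousAt
  refine exists_cycle_of_polar_solution hω hup (fun s => h₁.trans_le (hu1 s))
    (fun s => hD s _ (h₁.trans_le (hu1 s)) ((hu2 s).trans_lt h₂)) ?_ (fun s => ?_)
  · exact hDc.continuousOn.comp_continuous (f := fun s => (s, u s)) (by fun_prop)
      fun s => ⟨mem_univ _, hu1 s, hu2 s⟩
  -- Between the barriers the projection onto `[r₁, r₂]` is the identity.
  · have := hud s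
    simpa only [hproj _ (hu1 s) (hu2 s), hS] using this

/-! ### The inner barrier -/

/-- The crossing inequality at a point of the inner barrier, with `S = sin θ`, `c = cos θ`,
`f = F a`, and `e₁`, `e₂` the errors of the linearization of `F` and `G` at `a`. The main part of
the difference of the two sides is `r f (S ^ 2 + (c ^ 2 - S ^ 2) / 4)`, which is at least `r f / 4`;
the remaining terms, of size `η f`, `e₁` and `e₂`, are dominated by it. -/
theorem inner_barrier_inequality {r f η ω S c e₁ e₂ : ℝ} (hr : 0 < r) (hf : 0 < f) (hη0 : 0 < η)
    (hη1 : η ≤ 1 / 4) (hηω : η * ω = f / 4) (hone : S ^ 2 + c ^ 2 = 1)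
    (he₁ : |e₁| ≤ f / 64) (he₂ : |e₂| ≤ f / 64) :
    -(f + e₁) * r * S ^ 2 + S * (ω * r * c + r * e₂ - ω * r * c)
      < η * (c ^ 2 - S ^ 2) * (ω * r * S ^ 2 - (f + e₁) * r * S * c
        + c * (ω * r * c + r * e₂)) := by
  have hc1 : |c| ≤ 1 := abs_le_one_iff_mul_self_le_one.2 (by nlinarith [sq_nonneg S])
  have hS1 : |S| ≤ 1 := abs_le_one_iff_mul_self_le_one.2 (by nlinarith [sq_nonneg c])
  have hSc : |S * c| ≤ 1 / 2 := by
    rw [abs_le]; constructor <;> nlinarith [sq_nonneg (S + c), sq_nonneg (S - c)]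
  have hC1 : |c ^ 2 - S ^ 2| ≤ 1 := by
    rw [abs_le]; constructor <;> nlinarith [sq_nonneg S, sq_nonneg c]
  have hf64 : 0 ≤ f / 64 := by positivity
  have b1 : |(c ^ 2 - S ^ 2) * (S * c)| ≤ 1 / 2 := by
    rw [abs_mul]
    calc _ ≤ 1 * (1 / 2 : ℝ) := by gcongr
      _ = 1 / 2 := one_mul _
  have b2 : |e₁ * (S ^ 2 - η * ((c ^ 2 - S ^ 2) * (S * c)))| ≤ f / 64 * 2 := by
    rw [abs_mul]
    have h2 : |η * ((c ^ 2 - S ^ 2) * (S * c))| ≤ 1 / 4 * (1 / 2) := by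
      rw [abs_mul, abs_of_pos hη0]
      gcongr
    have h3 : |S ^ 2 - η * ((c ^ 2 - S ^ 2) * (S * c))| ≤ 2 := by
      rw [abs_le] at h2 ⊢
      constructor <;> linarith [sq_nonneg S, sq_nonneg c]
    gcongr
  have b3 : |e₂ * (η * (c * (c ^ 2 - S ^ 2)) - S)| ≤ f / 64 * 2 := by
    rw [abs_mul]
    have h2 : |η * (c * (c ^ 2 - S ^ 2))| ≤ 1 / 4 * (1 * 1) := by
      rw [abs_mul, abs_of_pos hη0, abs_mul]
      gcongr
    have h3 : |η * (c * (c ^ 2 - S ^ 2)) - S| ≤ 2 := by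
      rw [abs_le] at h2 hS1 ⊢
      constructor <;> linarith
    gcongr
  have b4 : η * f * ((c ^ 2 - S ^ 2) * (S * c)) ≤ 1 / 4 * f * (1 / 2) := by
    calc η * f * ((c ^ 2 - S ^ 2) * (S * c)) ≤ η * f * (1 / 2) := by
          gcongr
          exact (abs_le.1 b1).2
      _ ≤ 1 / 4 * f * (1 / 2) := by gcongr
  have h7 : 0 ≤ f * S ^ 2 := by positivity
  have hpos : 0 < r * (f / 4 * (1 - 2 * S ^ 2) - η * f * ((c ^ 2 - S ^ 2) * (S * c)) + f * S ^ 2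
      + e₁ * (S ^ 2 - η * ((c ^ 2 - S ^ 2) * (S * c)))
      + e₂ * (η * (c * (c ^ 2 - S ^ 2)) - S)) := by
    refine mul_pos hr ?_
    linarith [(abs_le.1 b2).1, (abs_le.1 b3).1]
  rw [← sub_pos]
  refine hpos.trans_eq ?_
  linear_combination (-r * (1 - 2 * S ^ 2)) * hηω - r * (η * ω) * (c ^ 2 - S ^ 2 + 1) * hone

/-- Damping `F a > 0` at the equilibrium `a` makes arbitrarily small curves
`r = ρ exp (η sin θ cos θ)`, `η = F a / (4 ω)`, be crossed inward. The exponential compensates for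
the vanishing of the damping `-F r sin² θ` where `sin θ = 0`, at which circles are not crossed
strictly. -/
theorem exists_inner_barrier {F G : ℝ → ℝ} {a ω : ℝ} (hω : 0 < ω) (hF : ContinuousAt F a)
    (hFa : 0 < F a) (hFω : F a ≤ ω) (hG : HasDerivAt G (ω ^ 2) a) (hGa : G a = 0)
    {b : ℝ} (hb : 0 < b) :
    ∃ (α α' : ℝ → ℝ) (r₁ : ℝ), 0 < r₁ ∧ (∀ s, r₁ ≤ α s) ∧ (∀ s, α s < b) ∧
      (∀ s, HasDerivAt α (α' s) s) ∧ Periodic α (2 * Real.pi) ∧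
      ∀ s, α s * polarN F G a ω s (α s) < α' s * polarD F G a ω s (α s) := by
  set κ : ℝ := F a / 64 with hκ
  have hκ0 : 0 < κ := by positivity
  have hFe : ∀ᶠ x in 𝓝 a, |F x - F a| < κ := by
    have := Metric.tendsto_nhds.1 hF.tendsto κ hκ0
    simpa [Real.dist_eq] using this
  have hGe : ∀ᶠ x in 𝓝 a, |G x - ω ^ 2 * (x - a)| ≤ κ * ω * |x - a| := by
    have := (hasDerivAt_iff_isLittleO.1 hG).def (mul_pos hκ0 hω)
    simpa [hGa, mul_comm] using this
  obtain ⟨d, hd, hball⟩ := Metric.eventually_nhds_iff.1 (hFe.and hGe)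
  set η : ℝ := F a / (4 * ω) with hη
  have hη0 : 0 < η := by positivity
  have hη1 : η ≤ 1 / 4 := by
    rw [hη, div_le_iff₀ (by positivity)]; linarith
  have hηω : η * ω = F a / 4 := by rw [hη]; field_simp
  set ρ : ℝ := min b d / (2 * Real.exp 1) with hρ
  have hmin : 0 < min b d := lt_min hb hd
  have hρ0 : 0 < ρ := by positivity
  have hρe : ρ * Real.exp 1 = min b d / 2 := by rw [hρ]; field_simp
  set α : ℝ → ℝ := fun s => ρ * Real.exp (η * (Real.sin s * Real.cos s)) with hα
  have hsc : ∀ s : ℝ, |Real.sin s * Real.cos s| ≤ 1 / 2 := fun s => by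
    rw [abs_le]; constructor <;> nlinarith [Real.sin_sq_add_cos_sq s,
      sq_nonneg (Real.sin s + Real.cos s), sq_nonneg (Real.sin s - Real.cos s)]
  have hexp : ∀ s : ℝ, |η * (Real.sin s * Real.cos s)| ≤ 1 := fun s => by
    rw [abs_mul, abs_of_pos hη0]
    nlinarith [hsc s, abs_nonneg (Real.sin s * Real.cos s)]
  have hαpos : ∀ s, 0 < α s := fun s => by positivity
  have hαlt : ∀ s, α s < min b d := fun s => by
    have : α s ≤ ρ * Real.exp 1 := by
      simp only [hα]
      gcongr
      exact (abs_le.1 (hexp s)).2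
    linarith
  refine ⟨α, fun s => α s * (η * (Real.cos s ^ 2 - Real.sin s ^ 2)), ρ * Real.exp (-1),
    by positivity, fun s => ?_, fun s => (hαlt s).trans_le (min_le_left _ _), fun s => ?_,
    fun s => by simp [hα], fun s => ?_⟩
  · simp only [hα]
    gcongr
    exact (abs_le.1 (hexp s)).1
  · have h1 := (((Real.hasDerivAt_sin s).mul (Real.hasDerivAt_cos s)).const_mul η).exp.const_mul ρ
    refine h1.congr_deriv ?_
    simp only [hα, Pi.mul_apply]; ring
  · have hr := hαpos s
    set r := α s with hrdef
    change r * _ < r * (η * (Real.cos s ^ 2 - Real.sin s ^ 2)) * _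
    rw [mul_assoc r]
    refine mul_lt_mul_of_pos_left ?_ hr
    set S := Real.sin s with hS
    set c := Real.cos s with hc
    have hone : S ^ 2 + c ^ 2 = 1 := Real.sin_sq_add_cos_sq s
    have hc1 : |c| ≤ 1 := Real.abs_cos_le_one s
    have hdist : dist (a + r * c) a < d := by
      rw [Real.dist_eq, add_sub_cancel_left, abs_mul, abs_of_pos hr]
      have : r < d := (hαlt s).trans_le (min_le_right _ _)
      nlinarith [abs_nonneg c]
    obtain ⟨hF1, hG1⟩ := hball hdist
    obtain ⟨e₁, he₁, hFe1⟩ : ∃ e₁, |e₁| ≤ κ ∧ F (a + r * c) = F a + e₁ :=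
      ⟨F (a + r * c) - F a, hF1.le, by ring⟩
    obtain ⟨e₂, he₂, hGe1⟩ : ∃ e₂, |e₂| ≤ κ ∧ G (a + r * c) = ω ^ 2 * (r * c) + ω * r * e₂ := by
      refine ⟨(G (a + r * c) - ω ^ 2 * (r * c)) / (ω * r), ?_, by field_simp; ring⟩
      rw [abs_div, abs_of_pos (mul_pos hω hr), div_le_iff₀ (mul_pos hω hr)]
      rw [add_sub_cancel_left, abs_mul r, abs_of_pos hr] at hG1
      refine hG1.trans ?_
      have : κ * ω * r * |c| ≤ κ * ω * r * 1 := by gcongr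
      linarith
    have hGω : G (a + r * c) / ω = ω * r * c + r * e₂ := by rw [hGe1]; field_simp
    have := inner_barrier_inequality hr hFa hη0 hη1 hηω hone (e₁ := e₁) (e₂ := e₂)
      (he₁.trans hκ.le) (he₂.trans hκ.le)
    simp only [polarN, polarD, ← hS, ← hc, mul_div_assoc, hGω, hFe1]
    exact this

/-! ### The outer barrier at `ε = 0` -/

/-- The coefficient `p` of the outer barrier `ρ (1 + ρ p + ρ ^ 2 q)`, as a polynomial in
`s = sin θ`, `c = cos θ`. Its `θ`-derivative is the `r ^ 2` coefficient of `dr/dθ` when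
`F (a + u) = ω (φ₁ u + ⋯)` and `G (a + u) = ω ^ 2 (u + k₁ u ^ 2 + ⋯)`. -/
noncomputable def barP (k₁ φ₁ s c : ℝ) : ℝ := -(k₁ * c ^ 3 + φ₁ * s ^ 3) / 3

/-- The coefficient `q` of the outer barrier `ρ (1 + ρ p + ρ ^ 2 q)`, as a polynomial in
`s = sin θ`, `c = cos θ`. It is a primitive of the cubic-order terms of `dr/dθ` after their mean
`(k₁ φ₁ - φ₂) / 8` has been removed; a periodic function has a derivative of mean zero, so no
larger part could be matched. -/
noncomputable def barQ (k₁ k₂ φ₁ φ₂ s c : ℝ) : ℝ :=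
  barP k₁ φ₁ s c ^ 2 + k₁ ^ 2 * c ^ 6 / 6 - k₂ * c ^ 4 / 4 - φ₁ ^ 2 * (s ^ 4 / 4 - s ^ 6 / 6)
    + k₁ * φ₁ * (s * c) ^ 3 / 3 - (k₁ * φ₁ - φ₂) / 8 * (s * c * (c ^ 2 - s ^ 2))

/-- The derivative of `barP` along `s = sin θ`, `c = cos θ`. -/
noncomputable def barP' (k₁ φ₁ s c : ℝ) : ℝ := k₁ * s * c ^ 2 - φ₁ * c * s ^ 2

/-- The derivative of `barQ` along `s = sin θ`, `c = cos θ`, simplified by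
`s ^ 2 + c ^ 2 = 1`. -/
noncomputable def barQ' (k₁ k₂ φ₁ φ₂ s c : ℝ) : ℝ :=
  2 * barP k₁ φ₁ s c * barP' k₁ φ₁ s c - k₁ ^ 2 * s * c ^ 5 + 2 * k₁ * φ₁ * s ^ 2 * c ^ 4
    - φ₁ ^ 2 * c ^ 3 * s ^ 3 - φ₂ * c ^ 2 * s ^ 2 + k₂ * s * c ^ 3 - (k₁ * φ₁ - φ₂) / 8

theorem hasDerivAt_barP (k₁ φ₁ t : ℝ) :
    HasDerivAt (fun t => barP k₁ φ₁ (Real.sin t) (Real.cos t))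
      (barP' k₁ φ₁ (Real.sin t) (Real.cos t)) t := by
  have hs := Real.hasDerivAt_sin t
  have hc := Real.hasDerivAt_cos t
  unfold barP barP'
  refine ((((hc.pow 3).const_mul k₁).add ((hs.pow 3).const_mul φ₁)).neg.div_const 3).congr_deriv ?_
  simp; ring

theorem hasDerivAt_barQ (k₁ k₂ φ₁ φ₂ t : ℝ) :
    HasDerivAt (fun t => barQ k₁ k₂ φ₁ φ₂ (Real.sin t) (Real.cos t))
      (barQ' k₁ k₂ φ₁ φ₂ (Real.sin t) (Real.cos t)) t := by
  have hs := Real.hasDerivAt_sin t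
  have hc := Real.hasDerivAt_cos t
  have hp := hasDerivAt_barP k₁ φ₁ t
  unfold barQ barQ'
  refine ((((((hp.pow 2).add (((hc.pow 6).const_mul (k₁ ^ 2)).div_const 6)).sub
    (((hc.pow 4).const_mul k₂).div_const 4)).sub
    ((((hs.pow 4).div_const 4).sub ((hs.pow 6).div_const 6)).const_mul (φ₁ ^ 2))).add
    ((((hs.mul hc).pow 3).const_mul (k₁ * φ₁)).div_const 3)).sub
    (((hs.mul hc).mul ((hc.pow 2).sub (hs.pow 2))).const_mul ((k₁ * φ₁ - φ₂) / 8))).congr_deriv ?_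
  have h1 := Real.sin_sq_add_cos_sq t
  simp only [Pi.mul_apply, Pi.pow_apply, Pi.sub_apply]
  set s := Real.sin t
  set c := Real.cos t
  set P := barP k₁ φ₁ s c
  set P' := barP' k₁ φ₁ s c
  norm_num
  linear_combination (φ₁ ^ 2 * (c * s ^ 3) - k₁ * φ₁ * (s ^ 2 * c ^ 2)
    - (k₁ * φ₁ - φ₂) / 8 * (s ^ 2 + c ^ 2 + 1)) * h1

/-- Expansion in `ρ` of `β' * polarD - β * polarN`, divided by `ρ ^ 3 v ω`, for the barrier
`β = ρ v`, `v = 1 + ρ (p + ρ q)`. The terms of order `0` cancel, the term of order `1` is minus the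
mean `(k₁ φ₁ - φ₂) / 8` up to the Taylor errors `e` of `F` and `e'` of `G`, and the rest is `ρ ^ 2`
times a polynomial, bounded on the box of parameters. -/
theorem exists_barrier_remainder_bound (k₁ k₂ φ₁ φ₂ : ℝ) :
    ∃ C : ℝ, 0 < C ∧ ∀ ρ ∈ Icc (0 : ℝ) 1, ∀ s ∈ Icc (-1 : ℝ) 1, ∀ c ∈ Icc (-1 : ℝ) 1,
      ∀ e ∈ Icc (-1 : ℝ) 1, ∀ e' ∈ Icc (-1 : ℝ) 1,
      |barP k₁ φ₁ s c + ρ * barQ k₁ k₂ φ₁ φ₂ s c| ≤ C ∧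
      ∀ v, v = 1 + ρ * (barP k₁ φ₁ s c + ρ * barQ k₁ k₂ φ₁ φ₂ s c) →
        (barP' k₁ φ₁ s c + ρ * barQ' k₁ k₂ φ₁ φ₂ s c) *
            (1 + ρ * v * ((k₁ + (k₂ + e') * (ρ * v * c)) * c ^ 3
              - (φ₁ + (φ₂ + e) * (ρ * v * c)) * c ^ 2 * s))
          - v ^ 2 * (-(φ₁ + (φ₂ + e) * (ρ * v * c)) * c * s ^ 2
              + (k₁ + (k₂ + e') * (ρ * v * c)) * s * c ^ 2)
        ≤ ρ * (-((k₁ * φ₁ - φ₂) / 8) + |e| + |e'|) + ρ ^ 2 * C := by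
  -- The coefficient of `ρ ^ 2` in the expansion, with `A₂`, `B₂` the next-order parts of `polarN`
  -- and `polarD`.
  set Q : ℝ × ℝ × ℝ × ℝ × ℝ → ℝ := fun z =>
    let ρ := z.1
    let s := z.2.1
    let c := z.2.2.1
    let e := z.2.2.2.1
    let e' := z.2.2.2.2
    let p := barP k₁ φ₁ s c
    let q := barQ k₁ k₂ φ₁ φ₂ s c
    let p₁ := barP' k₁ φ₁ s c
    let q₁ := barQ' k₁ k₂ φ₁ φ₂ s c
    let σ := p + ρ * q
    let v := 1 + ρ * σ
    let B₁ := k₁ * c ^ 3 - φ₁ * c ^ 2 * s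
    let B₂ := (k₂ + e') * c ^ 4 - (φ₂ + e) * c ^ 3 * s
    let A₂ := -(φ₂ + e) * c ^ 2 * s ^ 2 + (k₂ + e') * s * c ^ 3
    σ * p₁ * B₁ + v * q₁ * B₁ + v ^ 2 * p₁ * B₂ + ρ * v ^ 2 * q₁ * B₂ - σ ^ 2 * p₁ - 2 * q * p₁
      - (3 * σ + 3 * ρ * σ ^ 2 + ρ ^ 2 * σ ^ 3) * A₂ with hQ
  have hQc : Continuous Q := by
    simp only [hQ, barP, barQ, barP', barQ']
    fun_prop
  have hσc : Continuous fun z : ℝ × ℝ × ℝ × ℝ × ℝ =>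
      barP k₁ φ₁ z.2.1 z.2.2.1 + z.1 * barQ k₁ k₂ φ₁ φ₂ z.2.1 z.2.2.1 := by
    simp only [barP, barQ]
    fun_prop
  have hK : IsCompact (Icc (0 : ℝ) 1 ×ˢ Icc (-1 : ℝ) 1 ×ˢ Icc (-1 : ℝ) 1 ×ˢ Icc (-1 : ℝ) 1 ×ˢ
      Icc (-1 : ℝ) 1) :=
    isCompact_Icc.prod (isCompact_Icc.prod (isCompact_Icc.prod (isCompact_Icc.prod isCompact_Icc)))
  obtain ⟨C₁, hC₁⟩ := hK.exists_bound_of_continuousOn hQc.continuousOn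
  obtain ⟨C₂, hC₂⟩ := hK.exists_bound_of_continuousOn hσc.continuousOn
  refine ⟨max (max C₁ C₂) 1, by positivity, fun ρ hρ s hs c hc e he e' he' => ?_⟩
  have hz : ((ρ, s, c, e, e') : ℝ × ℝ × ℝ × ℝ × ℝ) ∈ Icc (0 : ℝ) 1 ×ˢ Icc (-1 : ℝ) 1 ×ˢ
      Icc (-1 : ℝ) 1 ×ˢ Icc (-1 : ℝ) 1 ×ˢ Icc (-1 : ℝ) 1 := ⟨hρ, hs, hc, he, he'⟩
  refine ⟨(hC₂ _ hz).trans ((le_max_right _ _).trans (le_max_left _ _)), fun v hv => ?_⟩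
  have h1 : Q (ρ, s, c, e, e') ≤ max (max C₁ C₂) 1 :=
    (le_abs_self _).trans ((hC₁ _ hz).trans ((le_max_left _ _).trans (le_max_left _ _)))
  have h2 : ρ ^ 2 * Q (ρ, s, c, e, e') ≤ ρ ^ 2 * max (max C₁ C₂) 1 := by gcongr
  have hs1 : |s| ≤ 1 := abs_le.2 hs
  have hc1 : |c| ≤ 1 := abs_le.2 hc
  have h3 : e * (c ^ 2 * s ^ 2) ≤ |e| := by
    refine (le_abs_self _).trans ?_
    rw [abs_mul, abs_mul, abs_pow, abs_pow]
    exact mul_le_of_le_one_right (abs_nonneg e)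
      (mul_le_one₀ (pow_le_one₀ (abs_nonneg _) hc1) (by positivity) (pow_le_one₀ (abs_nonneg _) hs1))
  have h4 : -(e' * (s * c ^ 3)) ≤ |e'| := by
    refine (neg_le_abs _).trans ?_
    rw [abs_mul, abs_mul, abs_pow]
    exact mul_le_of_le_one_right (abs_nonneg e')
      (mul_le_one₀ hs1 (by positivity) (pow_le_one₀ (abs_nonneg _) hc1))
  have h5 : ρ * (-((k₁ * φ₁ - φ₂) / 8) + e * (c ^ 2 * s ^ 2) - e' * (s * c ^ 3))
      ≤ ρ * (-((k₁ * φ₁ - φ₂) / 8) + |e| + |e'|) :=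
    mul_le_mul_of_nonneg_left (by linarith) hρ.1
  refine le_trans (le_of_eq ?_) (add_le_add h5 h2)
  rw [hv]
  simp only [hQ]
  simp only [barQ']
  generalize barQ k₁ k₂ φ₁ φ₂ s c = q
  generalize barP k₁ φ₁ s c = p
  simp only [barP']
  ring

/-- Taylor's formula with Peano remainder, in terms of `iteratedDeriv`. -/
theorem eventually_taylor_bound {f : ℝ → ℝ} {x₀ : ℝ} {n : ℕ} (hf : ContDiffAt ℝ n f x₀)
    {κ : ℝ} (hκ : 0 < κ) :
    ∀ᶠ u in 𝓝 (0 : ℝ), |f (x₀ + u) - ∑ i ∈ Finset.range (n + 1),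
      ((i.factorial : ℝ)⁻¹ * u ^ i) * iteratedDeriv i f x₀| ≤ κ * |u| ^ n := by
  obtain ⟨V, hV, hfV⟩ := hf.contDiffOn le_rfl (by simp)
  obtain ⟨d, hd, hball⟩ := Metric.mem_nhds_iff.1 hV
  have hx : x₀ ∈ Metric.ball x₀ d := Metric.mem_ball_self hd
  have h := (taylor_isLittleO (convex_ball x₀ d) hx (hfV.mono hball)).def hκ
  rw [Metric.isOpen_ball.nhdsWithin_eq hx] at h
  have ht : Tendsto (fun u : ℝ => x₀ + u) (𝓝 0) (𝓝 x₀) := by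
    have : Continuous fun u : ℝ => x₀ + u := by fun_prop
    simpa using this.tendsto 0
  filter_upwards [ht.eventually h] with u hu
  simp only [taylor_within_apply, add_sub_cancel_left, Real.norm_eq_abs, smul_eq_mul,
    iteratedDerivWithin_of_isOpen Metric.isOpen_ball hx, abs_pow] at hu
  exact hu

/-- If the mean `(k₁ φ₁ - φ₂) / 8` of the cubic terms of `dr/dθ` is positive, a small curve
`r = ρ (1 + ρ p + ρ ^ 2 q)` is crossed outward. -/
theorem exists_outer_barrier {F G : ℝ → ℝ} {a ω k₁ k₂ φ₁ φ₂ : ℝ} (hω : 0 < ω)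
    (hm : 0 < k₁ * φ₁ - φ₂)
    (hT : ∀ κ > 0, ∃ d > 0, ∀ u, |u| < d → ∃ e e', |e| ≤ κ ∧ |e'| ≤ κ ∧
      F (a + u) = ω * (φ₁ * u + (φ₂ + e) * u ^ 2) ∧
      G (a + u) = ω ^ 2 * (u + k₁ * u ^ 2 + (k₂ + e') * u ^ 3))
    {b : ℝ} (hb : 0 < b) :
    ∃ (β β' : ℝ → ℝ) (b₁ b₂ : ℝ), 0 < b₁ ∧ (∀ s, b₁ ≤ β s) ∧ (∀ s, β s ≤ b₂) ∧ b₂ < b ∧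
      (∀ s, HasDerivAt β (β' s) s) ∧ Continuous β' ∧ Periodic β (2 * Real.pi) ∧
      Periodic β' (2 * Real.pi) ∧
      ∀ s, β' s * polarD F G a ω s (β s) < β s * polarN F G a ω s (β s) := by
  obtain ⟨C, hC, hCb⟩ := exists_barrier_remainder_bound k₁ k₂ φ₁ φ₂
  set m : ℝ := (k₁ * φ₁ - φ₂) / 8 with hmdef
  have hm0 : 0 < m := by positivity
  obtain ⟨d, hd, hTd⟩ := hT (min 1 (m / 4)) (by positivity)
  -- Small enough that `1 / 2 ≤ v ≤ 3 / 2`, that `ρ C` and the Taylor errors stay below the mean `m`,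
  -- and that the barrier stays where the Taylor bounds hold.
  set ρ : ℝ := min (min 1 (1 / (2 * C))) (min (m / (4 * C)) (min b d / 2)) with hρ
  have hmin : 0 < min b d := lt_min hb hd
  have hρ0 : 0 < ρ := by positivity
  have hρ1 : ρ ≤ 1 := (min_le_left _ _).trans (min_le_left _ _)
  have hρ2 : ρ * C ≤ 1 / 2 := by
    have : ρ ≤ 1 / (2 * C) := (min_le_left _ _).trans (min_le_right _ _)
    calc ρ * C ≤ 1 / (2 * C) * C := by gcongr
      _ = 1 / 2 := by field_simp
  have hρ3 : ρ * C ≤ m / 4 := by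
    have : ρ ≤ m / (4 * C) := (min_le_right _ _).trans (min_le_left _ _)
    calc ρ * C ≤ m / (4 * C) * C := by gcongr
      _ = m / 4 := by field_simp
  have hρ4 : ρ ≤ min b d / 2 := (min_le_right _ _).trans (min_le_right _ _)
  set p : ℝ → ℝ := fun s => barP k₁ φ₁ (Real.sin s) (Real.cos s) with hp
  set q : ℝ → ℝ := fun s => barQ k₁ k₂ φ₁ φ₂ (Real.sin s) (Real.cos s) with hq
  set p' : ℝ → ℝ := fun s => barP' k₁ φ₁ (Real.sin s) (Real.cos s) with hp'
  set q' : ℝ → ℝ := fun s => barQ' k₁ k₂ φ₁ φ₂ (Real.sin s) (Real.cos s) with hq'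
  set v : ℝ → ℝ := fun s => 1 + ρ * (p s + ρ * q s) with hv
  have hρI : ρ ∈ Icc (0 : ℝ) 1 := ⟨hρ0.le, hρ1⟩
  have hvb : ∀ s, 1 / 2 ≤ v s ∧ v s ≤ 3 / 2 := by
    intro s
    have h := (hCb ρ hρI _ (Real.sin_mem_Icc s) _ (Real.cos_mem_Icc s) 0 (by norm_num)
      0 (by norm_num)).1
    have h2 : |ρ * (p s + ρ * q s)| ≤ 1 / 2 := by
      rw [abs_mul, abs_of_pos hρ0]
      exact (mul_le_mul_of_nonneg_left h hρ0.le).trans hρ2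
    rw [abs_le] at h2
    simp only [hv]
    constructor <;> linarith
  refine ⟨fun s => ρ * v s, fun s => ρ ^ 2 * (p' s + ρ * q' s), ρ / 2, ρ * (3 / 2), by positivity,
    fun s => ?_, fun s => ?_, ?_, fun s => ?_, ?_, fun s => ?_, fun s => ?_, fun s => ?_⟩
  · have := mul_le_mul_of_nonneg_left (hvb s).1 hρ0.le
    linarith
  · exact mul_le_mul_of_nonneg_left (hvb s).2 hρ0.le
  · linarith [min_le_left b d]
  · have h1 := ((hasDerivAt_barP k₁ φ₁ s).add
      ((hasDerivAt_barQ k₁ k₂ φ₁ φ₂ s).const_mul ρ)).const_mul ρ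
    refine ((h1.const_add 1).const_mul ρ).congr_deriv ?_
    simp only [hp', hq']; ring
  · simp only [hp', hq', barP', barQ', barP]
    fun_prop
  · simp only [hv, hp, hq, Real.sin_add_two_pi, Real.cos_add_two_pi]
  · simp only [hp', hq', Real.sin_add_two_pi, Real.cos_add_two_pi]
  · have hvs := hvb s
    have hrd : ρ * v s < d := by nlinarith [min_le_right b d]
    have hr0 : 0 < ρ * v s := mul_pos hρ0 (by linarith)
    have hu : |ρ * v s * Real.cos s| < d := by
      rw [abs_mul, abs_of_pos hr0]
      exact (mul_le_of_le_one_right hr0.le (Real.abs_cos_le_one s)).trans_lt hrd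
    obtain ⟨e, e', he, he', hFe, hGe⟩ := hTd _ hu
    have he1 : e ∈ Icc (-1 : ℝ) 1 := abs_le.1 (he.trans (min_le_left _ _))
    have he1' : e' ∈ Icc (-1 : ℝ) 1 := abs_le.1 (he'.trans (min_le_left _ _))
    have he2 := he.trans (min_le_right _ _)
    have he2' := he'.trans (min_le_right _ _)
    have key := (hCb ρ hρI _ (Real.sin_mem_Icc s) _ (Real.cos_mem_Icc s) e he1 e' he1').2 (v s) rfl
    have hneg : ρ * (-m + |e| + |e'|) + ρ ^ 2 * C < 0 := by
      have h3 : ρ * (-m + |e| + |e'| + ρ * C) < 0 := mul_neg_of_pos_of_neg hρ0 (by linarith)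
      linarith
    have hlt := key.trans_lt hneg
    have hfac := mul_neg_of_pos_of_neg (mul_pos (mul_pos hr0 hω) (pow_pos hρ0 2)) hlt
    rw [← sub_neg]
    refine lt_of_eq_of_lt ?_ hfac
    have hone := Real.sin_sq_add_cos_sq s
    simp only [polarN, polarD, hFe, hGe, hp', hq']
    generalize v s = V
    generalize barP' k₁ φ₁ (Real.sin s) (Real.cos s) = P'
    generalize barQ' k₁ k₂ φ₁ φ₂ (Real.sin s) (Real.cos s) = Q'
    generalize Real.sin s = S at *
    generalize Real.cos s = c at *
    field_simp
    linear_combination ρ * V * (P' + ρ * Q') * hone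

theorem exists_taylor_coefficients {f g : ℝ → ℝ} {x₀ ω : ℝ} (hω : 0 < ω)
    (hf : ContDiffAt ℝ 2 f x₀) (hg : ContDiffAt ℝ 3 g x₀) (hf0 : f x₀ = 0) (hg0 : g x₀ = 0)
    (hg1 : deriv g x₀ = ω ^ 2) {κ : ℝ} (hκ : 0 < κ) :
    ∃ d > 0, ∀ u, |u| < d → ∃ e e', |e| ≤ κ ∧ |e'| ≤ κ ∧
      f (x₀ + u) = ω * (deriv f x₀ / ω * u + (deriv (deriv f) x₀ / (2 * ω) + e) * u ^ 2) ∧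
      g (x₀ + u) = ω ^ 2 * (u + deriv (deriv g) x₀ / (2 * ω ^ 2) * u ^ 2
        + (iteratedDeriv 3 g x₀ / (6 * ω ^ 2) + e') * u ^ 3) := by
  have hit : ∀ h : ℝ → ℝ, iteratedDeriv 2 h = deriv (deriv h) := fun h => by
    rw [iteratedDeriv_succ, iteratedDeriv_one]
  have h1 := eventually_taylor_bound (n := 2) (by exact_mod_cast hf) (mul_pos hκ hω)
  have h2 := eventually_taylor_bound (n := 3) (by exact_mod_cast hg) (mul_pos hκ (pow_pos hω 2))
  obtain ⟨d, hd, hball⟩ := Metric.eventually_nhds_iff.1 (h1.and h2)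
  refine ⟨d, hd, fun u hu => ?_⟩
  obtain ⟨hfu, hgu⟩ := hball (y := u) (by simpa using hu)
  rcases eq_or_ne u 0 with rfl | hu0
  · exact ⟨0, 0, by simpa using hκ.le, by simpa using hκ.le, by simp [hf0], by simp [hg0]⟩
  have hu2 : 0 < |u| := abs_pos.2 hu0
  simp only [Finset.sum_range_succ, Finset.sum_range_zero, iteratedDeriv_zero, iteratedDeriv_one,
    hit, hf0, hg0, hg1] at hfu hgu
  norm_num [Nat.factorial] at hfu hgu
  set A := f (x₀ + u) - (u * deriv f x₀ + 1 / 2 * u ^ 2 * deriv (deriv f) x₀) with hA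
  set B := g (x₀ + u) - (u * ω ^ 2 + 1 / 2 * u ^ 2 * deriv (deriv g) x₀
    + 1 / 6 * u ^ 3 * iteratedDeriv 3 g x₀) with hB
  refine ⟨A / (ω * u ^ 2), B / (ω ^ 2 * u ^ 3), ?_, ?_, ?_, ?_⟩
  · rw [abs_div, div_le_iff₀ (by positivity), abs_mul, abs_of_pos hω, abs_pow, sq_abs]
    linarith
  · rw [abs_div, div_le_iff₀ (by positivity), abs_mul, abs_of_pos (pow_pos hω 2), abs_pow]
    linarith
  · field_simp
    rw [hA]; ring
  · field_simp
    rw [hB]; ring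

/-! ### Perturbation in `ε` and conclusion -/

/-- Near the equilibrium the angle increases along orbits: `c * G (a + r c)` is at least
`(ω ^ 2 / 4) r c ^ 2`, and the cross term with `F` is dominated. -/
theorem polarD_pos {F G G' : ℝ → ℝ} {a ω d : ℝ} (hω : 0 < ω) (hGa : G a = 0)
    (hG : ∀ x ∈ Ioo (a - d) (a + d), HasDerivAt G (G' x) x)
    (hG' : ∀ x ∈ Ioo (a - d) (a + d), ω ^ 2 / 4 ≤ G' x)
    (hF : ∀ x ∈ Ioo (a - d) (a + d), |F x| ≤ ω / 2) (s : ℝ) {r : ℝ} (hr : 0 < r) (hrd : r < d) :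
    0 < polarD F G a ω s r := by
  have hu : |r * Real.cos s| < d := by
    rw [abs_mul, abs_of_pos hr]
    exact (mul_le_of_le_one_right hr.le (Real.abs_cos_le_one s)).trans_lt hrd
  have hone := Real.sin_sq_add_cos_sq s
  unfold polarD
  generalize Real.cos s = c at *
  generalize Real.sin s = S at *
  rw [abs_lt] at hu
  have hmem : a + r * c ∈ Ioo (a - d) (a + d) := ⟨by linarith, by linarith⟩
  have ha : a ∈ Ioo (a - d) (a + d) := ⟨by linarith, by linarith⟩
  -- The function `G x - (ω ^ 2 / 4) (x - a)` is monotone and vanishes at `a`.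
  have hmono : MonotoneOn (fun x => G x - ω ^ 2 / 4 * (x - a)) (Ioo (a - d) (a + d)) := by
    have hder : ∀ x ∈ Ioo (a - d) (a + d),
        HasDerivAt (fun x => G x - ω ^ 2 / 4 * (x - a)) (G' x - ω ^ 2 / 4) x := by
      intro x hx
      refine ((hG x hx).sub (((hasDerivAt_id x).sub_const a).const_mul (ω ^ 2 / 4))).congr_deriv ?_
      ring
    refine monotoneOn_of_deriv_nonneg (convex_Ioo _ _)
      (fun x hx => (hder x hx).continuousAt.continuousWithinAt) ?_ ?_
    · rw [interior_Ioo]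
      exact fun x hx => (hder x hx).differentiableAt.differentiableWithinAt
    · rw [interior_Ioo]
      intro x hx
      rw [(hder x hx).deriv]
      linarith [hG' x hx]
  have hcG : ω ^ 2 / 4 * (r * c ^ 2) ≤ c * G (a + r * c) := by
    rcases le_total 0 c with hc | hc
    · have := hmono ha hmem (by nlinarith)
      simp only [hGa, sub_self, mul_zero, add_sub_cancel_left] at this
      nlinarith
    · have := hmono hmem ha (by nlinarith)
      simp only [hGa, sub_self, mul_zero, add_sub_cancel_left] at this
      nlinarith
  have hcG' : ω / 4 * (r * c ^ 2) ≤ c * G (a + r * c) / ω := by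
    rw [le_div_iff₀ hω]
    linarith
  have hFx := hF _ hmem
  have h3 : F (a + r * c) * (S * c) ≤ ω / 2 * |S * c| := by
    refine (le_abs_self _).trans ?_
    rw [abs_mul]
    exact mul_le_mul_of_nonneg_right hFx (abs_nonneg _)
  have h4 : |S * c| < 2 * S ^ 2 + c ^ 2 / 2 := by
    rw [abs_lt]
    constructor <;> nlinarith [sq_nonneg (S - c / 2), sq_nonneg (S + c / 2), sq_nonneg S]
  have h5 : F (a + r * c) * (S * c) < ω * S ^ 2 + ω / 4 * c ^ 2 := by nlinarith
  have h6 := mul_lt_mul_of_pos_left h5 hr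
  have h7 : ω * r * S ^ 2 - F (a + r * c) * r * S * c + c * G (a + r * c) / ω
      = c * G (a + r * c) / ω + r * (ω * S ^ 2) - r * (F (a + r * c) * (S * c)) := by ring
  linarith

/-- The strict crossing inequality on the outer barrier persists under small changes of the centre,
of `ε` and of the frequency (the three components of `z`), by compactness of a period. -/
theorem eventually_outer_barrier {F G : ℝ × ℝ → ℝ} {x₀ ω₀ : ℝ} (hω₀ : 0 < ω₀) {β β' : ℝ → ℝ}
    (hβ : Continuous β) (hβ' : Continuous β') (hβT : Periodic β (2 * Real.pi))
    (hβT' : Periodic β' (2 * Real.pi))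
    (hF : ∀ s, ContinuousAt F (x₀ + β s * Real.cos s, 0))
    (hG : ∀ s, ContinuousAt G (x₀ + β s * Real.cos s, 0))
    (hlt : ∀ s, β' s * polarD (fun x => F (x, 0)) (fun x => G (x, 0)) x₀ ω₀ s (β s)
      < β s * polarN (fun x => F (x, 0)) (fun x => G (x, 0)) x₀ ω₀ s (β s)) :
    ∀ᶠ z : ℝ × ℝ × ℝ in 𝓝 (x₀, 0, ω₀), ∀ s,
      β' s * polarD (fun x => F (x, z.2.1)) (fun x => G (x, z.2.1)) z.1 z.2.2 s (β s)
      < β s * polarN (fun x => F (x, z.2.1)) (fun x => G (x, z.2.1)) z.1 z.2.2 s (β s) := by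
  have hcpt : ∀ᶠ z : ℝ × ℝ × ℝ in 𝓝 (x₀, 0, ω₀), ∀ s ∈ Icc 0 (2 * Real.pi),
      β' s * polarD (fun x => F (x, z.2.1)) (fun x => G (x, z.2.1)) z.1 z.2.2 s (β s)
      < β s * polarN (fun x => F (x, z.2.1)) (fun x => G (x, z.2.1)) z.1 z.2.2 s (β s) := by
    refine isCompact_Icc.eventually_forall_of_forall_eventually fun s _ => ?_
    have hm : Continuous fun w : (ℝ × ℝ × ℝ) × ℝ =>
        ((w.1.1 + β w.2 * Real.cos w.2, w.1.2.1) : ℝ × ℝ) := by fun_prop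
    have hFc : ContinuousAt (fun w : (ℝ × ℝ × ℝ) × ℝ =>
        F (w.1.1 + β w.2 * Real.cos w.2, w.1.2.1)) ((x₀, 0, ω₀), s) :=
      ContinuousAt.comp (f := fun w : (ℝ × ℝ × ℝ) × ℝ =>
        ((w.1.1 + β w.2 * Real.cos w.2, w.1.2.1) : ℝ × ℝ)) (hF s) hm.continuousAt
    have hGc : ContinuousAt (fun w : (ℝ × ℝ × ℝ) × ℝ =>
        G (w.1.1 + β w.2 * Real.cos w.2, w.1.2.1)) ((x₀, 0, ω₀), s) :=
      ContinuousAt.comp (f := fun w : (ℝ × ℝ × ℝ) × ℝ =>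
        ((w.1.1 + β w.2 * Real.cos w.2, w.1.2.1) : ℝ × ℝ)) (hG s) hm.continuousAt
    have hne : ((((x₀, 0, ω₀), s) : (ℝ × ℝ × ℝ) × ℝ)).1.2.2 ≠ 0 := hω₀.ne'
    refine ContinuousAt.eventually_lt ?_ ?_ (hlt s)
    · unfold polarD
      fun_prop (disch := assumption)
    · unfold polarN
      fun_prop (disch := assumption)
  filter_upwards [hcpt] with z hz s
  obtain ⟨n, hn⟩ : ∃ n : ℤ, s + n • (2 * Real.pi) ∈ Ico 0 (0 + 2 * Real.pi) :=
    (existsUnique_add_zsmul_mem_Ico Real.two_pi_pos s 0).exists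
  rw [zero_add] at hn
  have h := hz _ (Ico_subset_Icc_self hn)
  have hc := Real.cos_periodic.zsmul n s
  have hs := Real.sin_periodic.zsmul n s
  simpa only [polarN, polarD, hc, hs, hβT.zsmul n s, hβT'.zsmul n s] using h

/-- Theorem 1: existence of small cycles of `ẋ = y, ẏ = -F(x,ε)y - G(x,ε)`
near a weak equilibrium, under `f''(x₀)g'(x₀) - g''(x₀)f'(x₀) < 0`, `g'(x₀) > 0`, and
`F(x_ε, ε) > 0` for the nearby zero `x_ε` of `G(·, ε)`. -/
theorem small_cycle_existence
    (x₀ : ℝ) (F G : ℝ × ℝ → ℝ)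
    (U : Set (ℝ × ℝ)) (hU : U ∈ nhds ((x₀, 0) : ℝ × ℝ))
    (hF : ContDiffOn ℝ (⊤ : ℕ∞) F U) (hG : ContDiffOn ℝ (⊤ : ℕ∞) G U)
    (f g : ℝ → ℝ)
    (hf : ∀ x, f x = F (x, 0)) (hg : ∀ x, g x = G (x, 0))
    (hfx₀ : f x₀ = 0) (hgx₀ : g x₀ = 0)
    (xε : ℝ → ℝ) (hxε0 : xε 0 = x₀)
    (hxεcont : ContinuousWithinAt xε (Set.Ici 0) 0)
    (δ : ℝ) (hδ : 0 < δ)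
    (hεprops : ∀ ε ∈ Set.Ioo (0 : ℝ) δ, G (xε ε, ε) = 0 ∧ 0 < F (xε ε, ε))
    (hcrit : deriv (deriv f) x₀ * deriv g x₀ - deriv (deriv g) x₀ * deriv f x₀ < 0)
    (hgpos : 0 < deriv g x₀) :
    ∃ ε₀ > 0, ∀ ε ∈ Set.Ioo (0 : ℝ) ε₀,
      ∃ (x y : ℝ → ℝ) (T : ℝ), 0 < T ∧
        (∀ t, HasDerivAt x (y t) t) ∧
        (∀ t, HasDerivAt y (-(F (x t, ε)) * y t - G (x t, ε)) t) ∧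
        (∀ t, x (t + T) = x t ∧ y (t + T) = y t) ∧
        (∃ t₁ t₂ : ℝ, (x t₁, y t₁) ≠ (x t₂, y t₂)) := by
  obtain rfl : f = fun x => F (x, 0) := funext hf
  obtain rfl : g = fun x => G (x, 0) := funext hg
  set ω₀ : ℝ := √(deriv (fun x => G (x, 0)) x₀) with hω₀def
  have hω₀ : 0 < ω₀ := Real.sqrt_pos.2 hgpos
  have hω₀2 : deriv (fun x => G (x, 0)) x₀ = ω₀ ^ 2 := (Real.sq_sqrt hgpos.le).symm
  have hslice : ∀ ε : ℝ, ContDiff ℝ (⊤ : ℕ∞) (fun x : ℝ => ((x, ε) : ℝ × ℝ)) := fun ε => by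
    fun_prop
  have hFat : ∀ z ∈ interior U, ContDiffAt ℝ (⊤ : ℕ∞) F z := fun z hz =>
    hF.contDiffAt (mem_interior_iff_mem_nhds.1 hz)
  have hGat : ∀ z ∈ interior U, ContDiffAt ℝ (⊤ : ℕ∞) G z := fun z hz =>
    hG.contDiffAt (mem_interior_iff_mem_nhds.1 hz)
  have hFs : ∀ x ε, (x, ε) ∈ interior U → ContDiffAt ℝ (⊤ : ℕ∞) (fun x => F (x, ε)) x :=
    fun x ε h => ContDiffAt.comp (f := fun x : ℝ => ((x, ε) : ℝ × ℝ)) x (hFat _ h)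
      (hslice ε).contDiffAt
  have hGs : ∀ x ε, (x, ε) ∈ interior U → ContDiffAt ℝ (⊤ : ℕ∞) (fun x => G (x, ε)) x :=
    fun x ε h => ContDiffAt.comp (f := fun x : ℝ => ((x, ε) : ℝ × ℝ)) x (hGat _ h)
      (hslice ε).contDiffAt
  have h0U : ((x₀, 0) : ℝ × ℝ) ∈ interior U := mem_interior_iff_mem_nhds.2 hU
  -- `H` is the partial derivative `∂G/∂x`.
  set H : ℝ × ℝ → ℝ := fun z => fderiv ℝ G z (1, 0) with hH
  have hGder : ∀ x ε, (x, ε) ∈ interior U → HasDerivAt (fun x => G (x, ε)) (H (x, ε)) x := by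
    intro x ε h
    have h1 : HasFDerivAt G (fderiv ℝ G (x, ε)) (x, ε) :=
      ((hGat _ h).differentiableAt (by simp)).hasFDerivAt
    exact h1.comp_hasDerivAt x ((hasDerivAt_id x).prodMk (hasDerivAt_const x ε))
  have hHc : ContinuousAt H (x₀, 0) := by
    have h1 : ContDiffAt ℝ 0 (fderiv ℝ G) (x₀, 0) :=
      (hGat _ h0U).fderiv_right (m := 0) (by exact_mod_cast le_top)
    exact h1.continuousAt.clm_apply continuousAt_const
  have hH0 : H (x₀, 0) = ω₀ ^ 2 := by rw [← hω₀2, (hGder x₀ 0 h0U).deriv]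
  have hF0 : F (x₀, 0) = 0 := hfx₀
  -- A box around `(x₀, 0)` on which `F` is small and `∂G/∂x` is close to `ω₀ ^ 2`.
  have hbox : ∀ᶠ z in 𝓝 ((x₀, 0) : ℝ × ℝ), z ∈ interior U ∧ |F z| < ω₀ / 4 ∧
      ω₀ ^ 2 / 2 < H z ∧ H z < 2 * ω₀ ^ 2 := by
    have hω2 : 0 < ω₀ ^ 2 := by positivity
    have hFc : ContinuousAt (fun z => |F z|) (x₀, 0) := (hFat _ h0U).continuousAt.abs
    refine (isOpen_interior.eventually_mem h0U).and (Filter.Eventually.and ?_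
      (Filter.Eventually.and ?_ ?_))
    · exact hFc.eventually_lt continuousAt_const (by simp [hF0, hω₀])
    · exact continuousAt_const.eventually_lt hHc (by rw [hH0]; linarith)
    · exact hHc.eventually_lt continuousAt_const (by rw [hH0]; linarith)
  obtain ⟨d₂, hd₂, hball⟩ := Metric.eventually_nhds_iff.1 hbox
  obtain ⟨d, hd, rfl⟩ : ∃ d > 0, d₂ = 2 * d := ⟨d₂ / 2, by positivity, by ring⟩
  have hB : ∀ x ε : ℝ, |x - x₀| < 2 * d → |ε| < 2 * d → (x, ε) ∈ interior U ∧
      |F (x, ε)| < ω₀ / 4 ∧ ω₀ ^ 2 / 2 < H (x, ε) ∧ H (x, ε) < 2 * ω₀ ^ 2 := by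
    intro x ε hx hε
    refine hball ?_
    rw [Prod.dist_eq, Real.dist_eq, Real.dist_eq, sub_zero]
    exact max_lt hx hε
  -- The outer barrier, constructed for `ε = 0`.
  obtain ⟨β, β', b₁, b₂, hb₁, hβ₁, hβ₂, hb₂, hβd, hβc', hβT, hβT', hβlt⟩ :=
    exists_outer_barrier (F := fun x => F (x, 0)) (G := fun x => G (x, 0)) (a := x₀) hω₀
      (k₁ := deriv (deriv fun x => G (x, 0)) x₀ / (2 * ω₀ ^ 2))
      (k₂ := iteratedDeriv 3 (fun x => G (x, 0)) x₀ / (6 * ω₀ ^ 2))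
      (φ₁ := deriv (fun x => F (x, 0)) x₀ / ω₀)
      (φ₂ := deriv (deriv fun x => F (x, 0)) x₀ / (2 * ω₀))
      (by
        rw [hω₀2] at hcrit
        have h1 : deriv (deriv fun x => G (x, 0)) x₀ / (2 * ω₀ ^ 2)
              * (deriv (fun x => F (x, 0)) x₀ / ω₀) - deriv (deriv fun x => F (x, 0)) x₀ / (2 * ω₀)
            = -(deriv (deriv fun x => F (x, 0)) x₀ * ω₀ ^ 2
              - deriv (deriv fun x => G (x, 0)) x₀ * deriv (fun x => F (x, 0)) x₀)
              / (2 * ω₀ ^ 3) := by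
          field_simp
          ring
        rw [h1]
        exact div_pos (neg_pos.2 hcrit) (by positivity))
      (fun κ hκ => exists_taylor_coefficients hω₀
        ((hFs _ _ h0U).of_le (WithTop.coe_le_coe.2 (le_top : (2 : ℕ∞) ≤ ⊤)))
        ((hGs _ _ h0U).of_le (WithTop.coe_le_coe.2 (le_top : (3 : ℕ∞) ≤ ⊤))) hfx₀ hgx₀ hω₀2 hκ) hd
  have hβc : Continuous β := continuous_iff_continuousAt.2 fun s => (hβd s).continuousAt
  have hβU : ∀ s, (x₀ + β s * Real.cos s, (0 : ℝ)) ∈ interior U := by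
    intro s
    refine (hB _ _ ?_ (by simpa using hd)).1
    have hβs : 0 < β s := hb₁.trans_le (hβ₁ s)
    rw [add_sub_cancel_left, abs_mul, abs_of_pos hβs]
    have := mul_le_of_le_one_right hβs.le (Real.abs_cos_le_one s)
    linarith [hβ₂ s]
  have hev := eventually_outer_barrier (F := F) (G := G) hω₀ hβc hβc' hβT hβT'
    (fun s => (hFat _ (hβU s)).continuousAt) (fun s => (hGat _ (hβU s)).continuousAt) hβlt
  -- As `ε → 0⁺`, the equilibrium and its linear frequency converge to `x₀` and `ω₀`.
  have hid : Tendsto (fun ε : ℝ => ε) (𝓝[>] 0) (𝓝 0) := tendsto_nhdsWithin_of_tendsto_nhds tendsto_id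
  have hxt : Tendsto xε (𝓝[>] 0) (𝓝 x₀) := by
    have := hxεcont.tendsto
    rw [hxε0] at this
    exact this.mono_left (nhdsWithin_mono _ Ioi_subset_Ici_self)
  have hωt : Tendsto (fun ε => √(H (xε ε, ε))) (𝓝[>] 0) (𝓝 ω₀) := by
    have h1 := (hHc.tendsto.comp (hxt.prodMk_nhds hid)).sqrt
    rw [hH0, Real.sqrt_sq hω₀.le] at h1
    exact h1
  have hall : ∀ᶠ ε in 𝓝[>] (0 : ℝ), ε < δ ∧ |ε| < 2 * d ∧ |xε ε - x₀| < d ∧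
      ∀ s, β' s * polarD (fun x => F (x, ε)) (fun x => G (x, ε)) (xε ε) (√(H (xε ε, ε))) s (β s)
        < β s * polarN (fun x => F (x, ε)) (fun x => G (x, ε)) (xε ε) (√(H (xε ε, ε))) s (β s) := by
    refine (hid.eventually_lt_const hδ).and (Filter.Eventually.and ?_ (Filter.Eventually.and ?_ ?_))
    · exact hid.abs.eventually_lt_const (by simpa using hd)
    · exact (hxt.sub_const x₀).abs.eventually_lt_const (by simpa using hd)
    · exact (hxt.prodMk_nhds (hid.prodMk_nhds hωt)).eventually hev
  obtain ⟨ε₀, hε₀, hsub⟩ := mem_nhdsGT_iff_exists_Ioo_subset.1 hall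
  refine ⟨ε₀, hε₀, fun ε hε => ?_⟩
  obtain ⟨hεδ, hεd, hxd, hout⟩ := hsub hε
  obtain ⟨hGa, hFa⟩ := hεprops ε ⟨hε.1, hεδ⟩
  set a := xε ε with ha
  set ω := √(H (a, ε)) with hωdef
  obtain ⟨haU, haF, haH, haH'⟩ := hB a ε (by linarith) hεd
  have hω0 : 0 < ω := Real.sqrt_pos.2 (by nlinarith)
  have hω2 : ω ^ 2 = H (a, ε) := Real.sq_sqrt (by nlinarith)
  have hωlow : ω₀ / 2 ≤ ω := by
    refine Real.le_sqrt_of_sq_le ?_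
    nlinarith
  have hnear : ∀ x ∈ Ioo (a - d) (a + d), |x - x₀| < 2 * d := by
    intro x hx
    rw [abs_lt] at hxd ⊢
    constructor <;> linarith [hx.1, hx.2]
  obtain ⟨α, α', r₁, hr₁, hα₁, hα₂, hαd, hαT, hαlt⟩ :=
    exists_inner_barrier (F := fun x => F (x, ε)) (G := fun x => G (x, ε)) hω0
      (hFs a ε haU).continuousAt hFa (by linarith [le_abs_self (F (a, ε))])
      (by rw [hω2]; exact hGder a ε haU) hGa hb₁
  refine exists_cycle_of_polar_barriers (F := fun x => F (x, ε)) (G := fun x => G (x, ε))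
    (d := d) hω0
    (fun x hx => ((hFs x ε (hB x ε (hnear x hx) hεd).1).of_le
      (by exact_mod_cast le_top)).contDiffWithinAt)
    (fun x hx => ((hGs x ε (hB x ε (hnear x hx) hεd).1).of_le
      (by exact_mod_cast le_top)).contDiffWithinAt)
    (fun s r hr hrd => polarD_pos (G' := fun x => H (x, ε)) hω0 hGa
      (fun x hx => hGder x ε (hB x ε (hnear x hx) hεd).1)
      (fun x hx => ?_) (fun x hx => ?_) s hr hrd)
    hr₁ hb₂ hα₁ hβ₂ (fun s => (hα₂ s).trans_le (hβ₁ s)) hαd hβd hαT hβT hαlt hout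
  · have := (hB x ε (hnear x hx) hεd).2.2.1
    change ω ^ 2 / 4 ≤ H (x, ε)
    linarith
  · have := (hB x ε (hnear x hx) hεd).2.1
    change |F (x, ε)| ≤ ω / 2
    linarith
end

section
/- Let f₁, f₂, g₂, g₃ be real numbers with f₂ − f₁g₂ < 0. Then there exists ε₀ > 0 such that for every ε ∈ (0, ε₀) the equation ẍ + (ε + f₁x + f₂x²)ẋ + x + g₂x² + g₃x³ = 0 has at least one nonconstant periodic solution. -/
/-!
The cycle is the one born at the origin in the Hopf bifurcation at `ε = 0`, and it has amplitude of
order `√ε`. Put `ε = μ²` and pass to polar coordinates `x = r cos θ`, `ẋ = -r sin θ`. With the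
rescaled inverse radius `w = μ / r` the orbits satisfy

  `(dw/dθ) θ̇ = -μ A(θ) + μ² (w sin² θ - B(θ) / w)`,  `θ̇ = 1 + O(μ)`,

where `A` and `B` (`radA`, `radB`) are trigonometric polynomials. The function `A` has the periodic
primitive `primA`, so the change of variable `v = w + μ * primA` removes the term of order `μ` and
leaves `dv/dθ = μ² H(θ, v, μ)` (`avgField`), whose average at `μ = 0` is proportional to `v - γ / v`
with `γ = (f₁ g₂ - f₂) / 4 > 0` (`hasDerivAt_avgPrim`, `avgPrim_sub`). This average changes sign at
`v = √γ`, so for small `μ` the displacement of the Poincaré map changes sign too, and the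
intermediate value theorem yields a `2π`-periodic `v` (`scalar_averaging`,
`exists_periodic_extension`). Solving `φ̇ = θ̇(φ)` along it (`exists_phase`) turns the closed orbit
into a periodic solution in time (`polar_identities`). That solution winds once around the origin
and is therefore not constant.
-/

open Set Filter Topology Real
open scoped NNReal

/-! ### Averaging for a scalar periodic equation -/

/-- First-order averaging for a scalar equation. If the mean of `H (·, v, 0)` over `[0, T]` is negative
at `v₁` and positive at `v₂` (expressed through primitives `h₁`, `h₂`), then for small `μ > 0` the
equation `v' = μ² H (θ, v, μ)` has a solution on `[0, T]`, inside the strip `[a, b]`, that returns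
to its initial value. The time-`T` map minus the identity is `μ²` times the mean plus `O(μ³)`, so
it changes sign between `v₁` and `v₂`. -/
lemma scalar_averaging {H : ℝ × ℝ × ℝ → ℝ} {a b v₁ v₂ μ₀ T : ℝ} (hT : 0 < T)
    (hav : a < v₁) (hv : v₁ < v₂) (hvb : v₂ < b) (hμ₀ : 0 < μ₀) {K : ℝ≥0}
    (hH : LipschitzOnWith K H (Icc 0 T ×ˢ Icc a b ×ˢ Icc 0 μ₀)) {h₁ h₂ : ℝ → ℝ}
    (hd₁ : ∀ θ, HasDerivAt h₁ (H (θ, v₁, 0)) θ) (hd₂ : ∀ θ, HasDerivAt h₂ (H (θ, v₂, 0)) θ)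
    (hs₁ : h₁ T < h₁ 0) (hs₂ : h₂ 0 < h₂ T) :
    ∃ μ₁ > 0, ∀ μ ∈ Ioo 0 μ₁, ∃ v : ℝ → ℝ, v T = v 0 ∧ ∀ θ ∈ Icc 0 T,
      v θ ∈ Icc a b ∧ HasDerivWithinAt v (μ ^ 2 * H (θ, v θ, μ)) (Icc 0 T) θ := by
  have hab : a ≤ b := by linarith
  obtain ⟨M', hM'⟩ := (isCompact_Icc.prod
    (isCompact_Icc.prod isCompact_Icc)).exists_bound_of_continuousOn hH.continuousOn
  obtain ⟨M, hM0, hM⟩ : ∃ M : ℝ, 0 ≤ M ∧ ∀ p ∈ Icc 0 T ×ˢ Icc a b ×ˢ Icc 0 μ₀, |H p| ≤ M :=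
    ⟨max M' 0, le_max_right _ _, fun p hp => (hM' p hp).trans (le_max_left _ _)⟩
  have hev : ∀ᶠ μ : ℝ in 𝓝 0, μ < μ₀ ∧ μ < 1 ∧ μ * (M * T) < v₁ - a ∧ μ * (M * T) < b - v₂ ∧
      μ * (K * (M * T + 1) * T) < h₁ 0 - h₁ T ∧ μ * (K * (M * T + 1) * T) < h₂ T - h₂ 0 := by
    have key : ∀ C d : ℝ, 0 < d → ∀ᶠ μ : ℝ in 𝓝 0, μ * C < d := fun C d hd =>
      (continuous_mul_const C).continuousAt.eventually_lt continuousAt_const (by simpa using hd)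
    filter_upwards [eventually_lt_nhds hμ₀, eventually_lt_nhds one_pos, key (M * T) (v₁ - a)
      (by linarith), key (M * T) (b - v₂) (by linarith),
      key (K * (M * T + 1) * T) (h₁ 0 - h₁ T) (by linarith),
      key (K * (M * T + 1) * T) (h₂ T - h₂ 0) (by linarith)] with μ e1 e2 e3 e4 e5 e6
    exact ⟨e1, e2, e3, e4, e5, e6⟩
  obtain ⟨μ₁, hμ₁, hball⟩ := Metric.eventually_nhds_iff.1 hev
  refine ⟨μ₁, hμ₁, fun μ hμ => ?_⟩
  obtain ⟨e1, e2, e3, e4, e5, e6⟩ := hball (y := μ) (by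
    rw [Real.dist_eq, sub_zero, abs_of_pos hμ.1]; exact hμ.2)
  have hμ0 := hμ.1
  have hμm : μ ∈ Icc 0 μ₀ := ⟨hμ0.le, e1.le⟩
  have h0m : (0 : ℝ) ∈ Icc 0 μ₀ := ⟨le_rfl, hμ₀.le⟩
  have hsq : μ ^ 2 ≤ μ := by nlinarith
  -- The vector field, made bounded and globally Lipschitz by clamping `v` to `[a, b]`.
  set f : ℝ → ℝ → ℝ := fun θ v => μ ^ 2 * H (θ, (projIcc a b hab v : ℝ), μ) with hf
  have hfM : ∀ θ ∈ Icc 0 T, ∀ v, |f θ v| ≤ μ ^ 2 * M := fun θ hθ v => by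
    rw [hf, abs_mul, abs_of_nonneg (sq_nonneg μ)]
    exact mul_le_mul_of_nonneg_left (hM _ ⟨hθ, (projIcc a b hab v).2, hμm⟩) (sq_nonneg μ)
  have hPL : IsPicardLindelof f (tmin := 0) (tmax := T) ⟨0, le_rfl, hT.le⟩ ((v₁ + v₂) / 2)
      (.mk ((v₂ - v₁) / 2 + μ ^ 2 * M * T)
        (by linarith [mul_nonneg (mul_nonneg (sq_nonneg μ) hM0) hT.le]))
      (.mk ((v₂ - v₁) / 2) (by linarith)) (.mk (μ ^ 2 * M) (by positivity))
      (.mk (μ ^ 2) (by positivity) * K) := by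
    refine ⟨fun θ hθ => ?_, fun v _ => ?_, fun θ hθ v _ => hfM θ hθ v, ?_⟩
    · refine LipschitzOnWith.of_dist_le_mul fun x _ y _ => ?_
      have h1 := hH.dist_le_mul (θ, (projIcc a b hab x : ℝ), μ)
        ⟨hθ, (projIcc a b hab x).2, hμm⟩ (θ, (projIcc a b hab y : ℝ), μ)
        ⟨hθ, (projIcc a b hab y).2, hμm⟩
      have h2 : |(projIcc a b hab x : ℝ) - projIcc a b hab y| ≤ |x - y| := by
        have := (LipschitzWith.projIcc hab).dist_le_mul x y
        simpa [Subtype.dist_eq, Real.dist_eq] using this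
      simp only [Prod.dist_eq, dist_self, Real.dist_eq] at h1
      simp only [hf, Real.dist_eq, ← mul_sub, abs_mul, abs_of_nonneg (sq_nonneg μ)]
      simp only [NNReal.coe_mul, NNReal.coe_mk]
      rw [mul_assoc]
      refine mul_le_mul_of_nonneg_left (h1.trans ?_) (sq_nonneg μ)
      refine mul_le_mul_of_nonneg_left ?_ K.2
      simpa using h2
    · refine continuousOn_const.mul (hH.continuousOn.comp (by fun_prop) fun θ hθ =>
        ⟨hθ, (projIcc a b hab v).2, hμm⟩)
    · simp [hT.le]
  obtain ⟨α, hα, L', hL'⟩ := hPL.exists_forall_mem_closedBall_eq_hasDerivWithinAt_lipschitzOnWith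
  have hcb : Metric.closedBall ((v₁ + v₂) / 2) ((v₂ - v₁) / 2) = Icc v₁ v₂ := by
    rw [Real.closedBall_eq_Icc]; congr 1 <;> ring
  simp only [NNReal.coe_mk, hcb] at hα hL'
  have hnear : ∀ v ∈ Icc v₁ v₂, ∀ θ ∈ Icc 0 T, |α v θ - v| ≤ μ * (M * T) := fun v hvm θ hθ => by
    have h1 := (convex_Icc 0 T).norm_image_sub_le_of_norm_hasDerivWithin_le (hα v hvm).2
      (fun θ hθ => hfM θ hθ _) ⟨le_rfl, hT.le⟩ hθ
    rw [(hα v hvm).1, Real.norm_eq_abs, Real.norm_eq_abs, sub_zero, abs_of_nonneg hθ.1] at h1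
    calc _ ≤ _ := h1
      _ ≤ μ * M * T := by gcongr; exacts [hθ.1, hθ.2]
      _ = _ := by ring
  have hmem : ∀ v ∈ Icc v₁ v₂, ∀ θ ∈ Icc 0 T, α v θ ∈ Icc a b := fun v hvm θ hθ => by
    have := abs_le.1 (hnear v hvm θ hθ)
    exact ⟨by linarith [hvm.1], by linarith [hvm.2]⟩
  have hder : ∀ v ∈ Icc v₁ v₂, ∀ θ ∈ Icc 0 T,
      HasDerivWithinAt (α v) (μ ^ 2 * H (θ, α v θ, μ)) (Icc 0 T) θ := fun v hvm θ hθ => by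
    have := (hα v hvm).2 θ hθ
    simpa only [hf, projIcc_of_mem hab (hmem v hvm θ hθ)] using this
  -- The Poincaré displacement is `μ²` times the average, up to an error of order `μ³`.
  have hdisp : ∀ v ∈ Icc v₁ v₂, ∀ g : ℝ → ℝ, (∀ θ, HasDerivAt g (H (θ, v, 0)) θ) →
      |α v T - v - μ ^ 2 * (g T - g 0)| ≤ μ ^ 2 * (μ * (K * (M * T + 1) * T)) := by
    intro v hvm g hg
    have h1 := (convex_Icc 0 T).norm_image_sub_le_of_norm_hasDerivWithin_le
      (f := fun θ => α v θ - μ ^ 2 * g θ) (C := μ ^ 2 * (K * (μ * (M * T + 1))))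
      (fun θ hθ => (hder v hvm θ hθ).sub ((hg θ).const_mul (μ ^ 2)).hasDerivWithinAt)
      (fun θ hθ => ?_) ⟨le_rfl, hT.le⟩ (⟨hT.le, le_rfl⟩ : T ∈ Icc 0 T)
    · rw [(hα v hvm).1, Real.norm_eq_abs, Real.norm_eq_abs, sub_zero, abs_of_pos hT] at h1
      calc _ = _ := by congr 1; ring
        _ ≤ _ := h1
        _ = _ := by ring
    · have h2 := hH.dist_le_mul (θ, α v θ, μ) ⟨hθ, hmem v hvm θ hθ, hμm⟩ (θ, v, 0)
        ⟨hθ, ⟨by linarith [hvm.1], by linarith [hvm.2]⟩, h0m⟩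
      rw [← mul_sub, Real.norm_eq_abs, abs_mul, abs_of_nonneg (sq_nonneg μ)]
      refine mul_le_mul_of_nonneg_left (h2.trans ?_) (sq_nonneg μ)
      refine mul_le_mul_of_nonneg_left ?_ K.2
      have h3 := hnear v hvm θ hθ
      have h4 : 0 ≤ M * T := by positivity
      simp only [Prod.dist_eq, dist_self, Real.dist_eq, sub_zero, abs_of_pos hμ0]
      refine max_le (by positivity) (max_le ?_ ?_) <;> nlinarith
  have hm₁ : v₁ ∈ Icc v₁ v₂ := ⟨le_rfl, hv.le⟩
  have hm₂ : v₂ ∈ Icc v₁ v₂ := ⟨hv.le, le_rfl⟩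
  have hμsq : 0 < μ ^ 2 := by positivity
  have hn₁ : α v₁ T - v₁ ≤ 0 := by
    have h1 := (abs_le.1 (hdisp v₁ hm₁ h₁ hd₁)).2
    have h2 := mul_lt_mul_of_pos_left e5 hμsq
    linarith
  have hn₂ : 0 ≤ α v₂ T - v₂ := by
    have h1 := (abs_le.1 (hdisp v₂ hm₂ h₂ hd₂)).1
    have h2 := mul_lt_mul_of_pos_left e6 hμsq
    linarith
  obtain ⟨v, hvm, hv0⟩ := intermediate_value_Icc hv.le (f := fun v => α v T - v)
    ((hL' T ⟨hT.le, le_rfl⟩).continuousOn.sub continuousOn_id) ⟨hn₁, hn₂⟩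
  refine ⟨α v, ?_, fun θ hθ => ⟨hmem v hvm θ hθ, hder v hvm θ hθ⟩⟩
  rw [(hα v hvm).1]
  exact sub_eq_zero.1 hv0

/-! ### From one period to the whole line -/

/-- A solution on `[0, T]` of an equation with `T`-periodic coefficients that takes equal values at the
end points extends to a `T`-periodic solution on the whole line, with values in the same set `s`. -/
lemma exists_periodic_extension {T : ℝ} (hT : 0 < T) {u : ℝ → ℝ} {f : ℝ → ℝ → ℝ} {s : Set ℝ}
    (hf : ∀ θ v, f (θ + T) v = f θ v) (h0 : u T = u 0)
    (hu : ∀ θ ∈ Icc 0 T, u θ ∈ s ∧ HasDerivWithinAt u (f θ (u θ)) (Icc 0 T) θ) :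
    ∃ v : ℝ → ℝ, Function.Periodic v T ∧ ∀ θ, v θ ∈ s ∧ HasDerivAt v (f θ (v θ)) θ := by
  set v : ℝ → ℝ := fun θ => u (toIcoMod hT 0 θ) with hv
  have hper : Function.Periodic v T := fun θ => by simp [hv]
  have hIcc : ∀ θ ∈ Icc 0 T, v θ = u θ := by
    intro θ hθ
    rcases hθ.2.eq_or_lt with rfl | hlt
    · have := toIcoMod_apply_right hT (0 : ℝ)
      rw [zero_add] at this
      simp only [hv, this, h0]
    · have := (toIcoMod_eq_self hT (a := 0) (b := θ)).2 ⟨hθ.1, by simpa using hlt⟩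
      simp only [hv, this]
  have hvI : ∀ θ ∈ Icc 0 T, HasDerivWithinAt v (f θ (v θ)) (Icc 0 T) θ := fun θ hθ => by
    rw [hIcc θ hθ]
    exact (hu θ hθ).2.congr hIcc (hIcc θ hθ)
  -- On one period: the only problematic point is `0`, where the left derivative is read off at `T`.
  have hIco : ∀ θ ∈ Ico 0 T, HasDerivAt v (f θ (v θ)) θ := by
    intro θ hθ
    rcases hθ.1.eq_or_lt with rfl | hpos
    · have hr : HasDerivWithinAt v (f 0 (v 0)) (Ici 0) 0 :=
        (hvI 0 ⟨le_rfl, hT.le⟩).mono_of_mem_nhdsWithin (Icc_mem_nhdsGE hT)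
      have hl : HasDerivWithinAt v (f 0 (v 0)) (Iic 0) 0 := by
        have h1 : HasDerivWithinAt v (f T (v T)) (Iic T) T :=
          (hvI T ⟨hT.le, le_rfl⟩).mono_of_mem_nhdsWithin (Icc_mem_nhdsLE hT)
        have h2 : f T (v T) = f 0 (v 0) := by
          have := hf 0 (v 0)
          have h3 := hper 0
          rw [zero_add] at this h3
          rw [h3, this]
        rw [h2] at h1
        have h4 : HasDerivWithinAt (fun t => v (t + T)) (f 0 (v 0)) (Iic 0) 0 := by
          have h5 := HasDerivWithinAt.comp (h₂ := v) (h := fun t => t + T) (s := Iic 0) (s' := Iic T)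
            (0 : ℝ) (by simpa using h1) ((hasDerivAt_id (0 : ℝ)).add_const T).hasDerivWithinAt
            (fun t ht => by simpa using ht)
          rw [mul_one] at h5
          exact h5
        exact h4.congr (fun t _ => (hper t).symm) (hper 0).symm
      have := hl.union hr
      rwa [Iic_union_Ici, hasDerivWithinAt_univ] at this
    · exact (hvI θ ⟨hθ.1, hθ.2.le⟩).hasDerivAt (Icc_mem_nhds hpos hθ.2)
  have hfz : ∀ (n : ℤ) θ w, f (θ - n • T) w = f θ w := fun n θ w =>
    (show Function.Periodic (fun θ => f θ w) T from fun θ => hf θ w).sub_zsmul_eq n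
  refine ⟨v, hper, fun θ => ⟨?_, ?_⟩⟩
  · have := toIcoMod_mem_Ico' hT θ
    exact (hu _ ⟨this.1, this.2.le⟩).1
  · have h1 := hIco _ (toIcoMod_mem_Ico' hT θ)
    have h2 : toIcoMod hT 0 θ = θ - toIcoDiv hT 0 θ • T := rfl
    rw [h2, hfz, hper.sub_zsmul_eq] at h1
    have h3 := h1.comp_sub_const θ (toIcoDiv hT 0 θ • T)
    simpa only [hper.sub_zsmul_eq] using h3

/-- The autonomous equation `φ' = Θ(φ)` on the line, with `Θ` positive, at most `2` and `p`-periodic,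
has a global solution that advances by `p` in some time `T`. It is the inverse of the time function
`θ ↦ ∫₀^θ 1 / Θ`; the bound `Θ ≤ 2` makes this function onto `ℝ`. -/
lemma exists_phase {Θ : ℝ → ℝ} {p : ℝ} (hp : 0 < p) (hc : Continuous Θ) (hpos : ∀ θ, 0 < Θ θ)
    (hle : ∀ θ, Θ θ ≤ 2) (hper : Function.Periodic Θ p) :
    ∃ (φ : ℝ → ℝ) (T : ℝ), 0 < T ∧ (∀ t, HasDerivAt φ (Θ (φ t)) t) ∧ ∀ t, φ (t + T) = φ t + p := by
  have hci : Continuous fun θ => (Θ θ)⁻¹ := hc.inv₀ fun θ => (hpos θ).ne'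
  set τ : ℝ → ℝ := fun θ => ∫ s in (0 : ℝ)..θ, (Θ s)⁻¹ with hτ
  have hder : ∀ θ, HasDerivAt τ (Θ θ)⁻¹ θ := fun θ => hci.integral_hasStrictDerivAt 0 θ |>.hasDerivAt
  have hmono : StrictMono τ := strictMono_of_hasDerivAt_pos hder fun θ => inv_pos.2 (hpos θ)
  have hmono2 : Monotone fun θ => τ θ - θ / 2 := by
    refine monotone_of_hasDerivAt_nonneg
      (fun θ => (hder θ).sub ((hasDerivAt_id θ).div_const 2)) fun θ => ?_
    have := inv_anti₀ (hpos θ) (hle θ)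
    simp only [Pi.zero_apply]
    linarith
  have hτ0 : τ 0 = 0 := by simp [hτ]
  have htop : Tendsto τ atTop atTop := by
    refine tendsto_atTop_mono' atTop ?_ (tendsto_id.atTop_div_const (r := (2 : ℝ)) two_pos)
    filter_upwards [eventually_ge_atTop 0] with θ hθ
    have := hmono2 hθ
    simp only [hτ0, id] at this ⊢
    linarith
  have hbot : Tendsto τ atBot atBot := by
    refine tendsto_atBot_mono' atBot ?_ (tendsto_id.atBot_div_const (r := (2 : ℝ)) two_pos)
    filter_upwards [eventually_le_atBot 0] with θ hθ
    have := hmono2 hθ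
    simp only [hτ0, id] at this ⊢
    linarith
  have hcont : Continuous τ := continuous_iff_continuousAt.2 fun θ => (hder θ).continuousAt
  let e : ℝ ≃o ℝ := hmono.orderIsoOfSurjective τ (hcont.surjective htop hbot)
  have he : ∀ θ, e θ = τ θ := fun θ => rfl
  have hT : 0 < τ p := by simpa [hτ0] using hmono hp
  have hshift : ∀ θ, τ (θ + p) = τ θ + τ p := fun θ => by
    have hpi : Function.Periodic (fun θ => (Θ θ)⁻¹) p := fun θ => by simp only [hper θ]
    have h1 := hpi.intervalIntegral_add_eq 0 θ
    have hi : ∀ a b, IntervalIntegrable (fun θ => (Θ θ)⁻¹) MeasureTheory.volume a b :=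
      fun a b => hci.intervalIntegrable a b
    rw [zero_add] at h1
    simp only [hτ, h1]
    exact (intervalIntegral.integral_add_adjacent_intervals (hi _ _) (hi _ _)).symm
  refine ⟨e.symm, τ p, hT, fun t => ?_, fun t => ?_⟩
  · have h1 := HasDerivAt.of_local_left_inverse (f := τ) (g := e.symm) (a := t)
      e.symm.continuous.continuousAt (hder _) (inv_ne_zero (hpos _).ne')
      (Eventually.of_forall fun y => by rw [← he, e.apply_symm_apply])
    simpa using h1
  · apply e.injective
    rw [e.apply_symm_apply, he, hshift, ← he (e.symm t), e.apply_symm_apply]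

/-! ### The equation in rescaled polar coordinates -/

/-- The coefficient of `r²` in `ṙ`, for `x = r cos θ`, `ẋ = -r sin θ`. -/
noncomputable def radA (f₁ g₂ θ : ℝ) : ℝ := g₂ * sin θ * cos θ ^ 2 - f₁ * cos θ * sin θ ^ 2

/-- The coefficient of `r³` in `ṙ`. -/
noncomputable def radB (f₂ g₃ θ : ℝ) : ℝ := g₃ * sin θ * cos θ ^ 3 - f₂ * cos θ ^ 2 * sin θ ^ 2

/-- The coefficient of `r` in `θ̇`. -/
noncomputable def angA (f₁ g₂ θ : ℝ) : ℝ := g₂ * cos θ ^ 3 - f₁ * cos θ ^ 2 * sin θ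

/-- The coefficient of `r²` in `θ̇`. -/
noncomputable def angB (f₂ g₃ θ : ℝ) : ℝ := g₃ * cos θ ^ 4 - f₂ * cos θ ^ 3 * sin θ

/-- A `2π`-periodic primitive of `radA` in `θ`. -/
noncomputable def primA (f₁ g₂ θ : ℝ) : ℝ := -(g₂ * cos θ ^ 3 + f₁ * sin θ ^ 3) / 3

/-- The quotient `(θ̇ - 1) / μ` for `ε = μ²` and `r = μ / w`, written so that it makes sense at `μ = 0`. -/
noncomputable def angExcess (f₁ f₂ g₂ g₃ θ w μ : ℝ) : ℝ :=
  angA f₁ g₂ θ * w⁻¹ + μ * (angB f₂ g₃ θ * w⁻¹ ^ 2 - cos θ * sin θ)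

/-- The angular speed `θ̇` for `ε = μ²` and `r = μ / w`. -/
noncomputable def angSpeed (f₁ f₂ g₂ g₃ θ w μ : ℝ) : ℝ := 1 + μ * angExcess f₁ f₂ g₂ g₃ θ w μ

/-- The right-hand side `H (θ, v, μ)` of the equation `dv/dθ = μ² H (θ, v, μ)` satisfied by
`v = w + μ * primA`, where `w = μ / r` and `ε = μ²`. -/
noncomputable def avgField (f₁ f₂ g₂ g₃ : ℝ) (p : ℝ × ℝ × ℝ) : ℝ :=
  (radA f₁ g₂ p.1 * angExcess f₁ f₂ g₂ g₃ p.1 (p.2.1 - p.2.2 * primA f₁ g₂ p.1) p.2.2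
      + sin p.1 ^ 2 * (p.2.1 - p.2.2 * primA f₁ g₂ p.1)
      - radB f₂ g₃ p.1 * (p.2.1 - p.2.2 * primA f₁ g₂ p.1)⁻¹)
    / angSpeed f₁ f₂ g₂ g₃ p.1 (p.2.1 - p.2.2 * primA f₁ g₂ p.1) p.2.2

lemma hasDerivAt_primA (f₁ g₂ θ : ℝ) : HasDerivAt (primA f₁ g₂) (radA f₁ g₂ θ) θ := by
  have h1 := (((((hasDerivAt_cos θ).pow 3).const_mul g₂).add
    (((hasDerivAt_sin θ).pow 3).const_mul f₁)).neg).div_const 3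
  refine h1.congr_deriv ?_
  simp only [radA]; norm_num; ring

/-! ### Estimates and smoothness of the rescaled field -/

lemma abs_pow_cos_le (n : ℕ) (θ : ℝ) : |cos θ ^ n| ≤ 1 := by
  rw [abs_pow]; exact pow_le_one₀ (abs_nonneg _) (abs_cos_le_one θ)

lemma abs_pow_sin_le (n : ℕ) (θ : ℝ) : |sin θ ^ n| ≤ 1 := by
  rw [abs_pow]; exact pow_le_one₀ (abs_nonneg _) (abs_sin_le_one θ)

lemma abs_sub_le_of_trig {p q c d : ℝ} (hc : |c| ≤ 1) (hd : |d| ≤ 1) :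
    |p * c - q * d| ≤ |p| + |q| := by
  refine (abs_sub _ _).trans ?_
  rw [abs_mul, abs_mul]
  exact add_le_add (mul_le_of_le_one_right (abs_nonneg _) hc)
    (mul_le_of_le_one_right (abs_nonneg _) hd)

lemma abs_mul_le_one {c d : ℝ} (hc : |c| ≤ 1) (hd : |d| ≤ 1) : |c * d| ≤ 1 := by
  rw [abs_mul]; exact mul_le_one₀ hc (abs_nonneg _) hd

/-- For small `μ`, uniformly in `θ` and in `v ≥ a`, the inverse radius `w = v - μ * primA` is positive
and the angular speed lies in `[1/2, 2]`. -/
lemma exists_small_parameter (f₁ f₂ g₂ g₃ : ℝ) {a : ℝ} (ha : 0 < a) :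
    ∃ μ₀ > 0, ∀ θ v μ, a ≤ v → μ ∈ Icc 0 μ₀ → 0 < v - μ * primA f₁ g₂ θ ∧
      1 / 2 ≤ angSpeed f₁ f₂ g₂ g₃ θ (v - μ * primA f₁ g₂ θ) μ ∧
      angSpeed f₁ f₂ g₂ g₃ θ (v - μ * primA f₁ g₂ θ) μ ≤ 2 := by
  set C := |g₂| + |f₁| with hC
  set D := |g₃| + |f₂| with hD
  have hC0 : 0 ≤ C := by positivity
  have hD0 : 0 ≤ D := by positivity
  set N := C * (2 / a) + (D * (2 / a) ^ 2 + 1) with hN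
  have hN0 : 0 < N := by positivity
  refine ⟨min 1 (min (1 / (2 * N)) (a / (2 * (C + 1)))), by positivity, fun θ v μ hv hμ => ?_⟩
  have hμ0 := hμ.1
  have hμ1 : μ ≤ 1 := hμ.2.trans (min_le_left _ _)
  have hμ2 : μ ≤ 1 / (2 * N) := hμ.2.trans ((min_le_right _ _).trans (min_le_left _ _))
  have hμ3 : μ ≤ a / (2 * (C + 1)) := hμ.2.trans ((min_le_right _ _).trans (min_le_right _ _))
  rw [le_div_iff₀ (by positivity)] at hμ2 hμ3
  have hα : |primA f₁ g₂ θ| ≤ C := by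
    have h1 := abs_sub_le_of_trig (p := g₂) (q := -f₁) (abs_pow_cos_le 3 θ) (abs_pow_sin_le 3 θ)
    rw [abs_neg] at h1
    have h2 : primA f₁ g₂ θ = -(g₂ * cos θ ^ 3 - -f₁ * sin θ ^ 3) / 3 := by simp [primA]
    rw [h2, abs_div, abs_neg, abs_of_pos (three_pos : (0 : ℝ) < 3)]
    linarith
  have hw : a / 2 ≤ v - μ * primA f₁ g₂ θ := by
    have h1 := mul_le_mul_of_nonneg_left ((le_abs_self _).trans hα) hμ0
    nlinarith
  set w := v - μ * primA f₁ g₂ θ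
  have hw0 : 0 < w := by linarith
  have hwi : |w⁻¹| ≤ 2 / a := by
    rw [abs_of_pos (inv_pos.2 hw0)]
    have := inv_anti₀ (half_pos ha) hw
    rwa [inv_div] at this
  have hA : |angA f₁ g₂ θ| ≤ C := by
    have := abs_sub_le_of_trig (p := g₂) (q := f₁) (abs_pow_cos_le 3 θ)
      (abs_mul_le_one (abs_pow_cos_le 2 θ) (abs_sin_le_one θ))
    rwa [← mul_assoc] at this
  have hB : |angB f₂ g₃ θ| ≤ D := by
    have := abs_sub_le_of_trig (p := g₃) (q := f₂) (abs_pow_cos_le 4 θ)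
      (abs_mul_le_one (abs_pow_cos_le 3 θ) (abs_sin_le_one θ))
    rwa [← mul_assoc] at this
  have hE : |angExcess f₁ f₂ g₂ g₃ θ w μ| ≤ N := by
    refine (abs_add_le _ _).trans (add_le_add ?_ ?_)
    · rw [abs_mul]; gcongr
    · rw [abs_mul, abs_of_nonneg hμ0]
      refine (mul_le_of_le_one_left (abs_nonneg _) hμ1).trans ((abs_sub _ _).trans ?_)
      refine add_le_add ?_ (abs_mul_le_one (abs_cos_le_one θ) (abs_sin_le_one θ))
      rw [abs_mul, abs_pow]; gcongr
  have hμE : |μ * angExcess f₁ f₂ g₂ g₃ θ w μ| ≤ 1 / 2 := by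
    rw [abs_mul, abs_of_nonneg hμ0]
    have := mul_le_mul_of_nonneg_left hE hμ0
    linarith
  have := abs_le.1 hμE
  exact ⟨hw0, by simp only [angSpeed]; linarith, by simp only [angSpeed]; linarith⟩

lemma contDiffOn_avgField (f₁ f₂ g₂ g₃ : ℝ) {s : Set (ℝ × ℝ × ℝ)}
    (hw : ∀ p ∈ s, p.2.1 - p.2.2 * primA f₁ g₂ p.1 ≠ 0)
    (hΘ : ∀ p ∈ s, angSpeed f₁ f₂ g₂ g₃ p.1 (p.2.1 - p.2.2 * primA f₁ g₂ p.1) p.2.2 ≠ 0) :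
    ContDiffOn ℝ 1 (avgField f₁ f₂ g₂ g₃) s := by
  have h1 : ContDiffOn ℝ 1 (fun p : ℝ × ℝ × ℝ => p.2.1 - p.2.2 * primA f₁ g₂ p.1) s := by
    unfold primA; fun_prop
  have h2 := h1.inv hw
  unfold avgField
  refine ContDiffOn.div ?_ ?_ hΘ
  · unfold angExcess radA radB angA angB
    fun_prop
  · unfold angSpeed angExcess angA angB
    fun_prop

/-! ### The averaged equation -/

/-- A `θ`-primitive of `avgField` at `μ = 0`, with `v` held fixed. -/
noncomputable def avgPrim (f₁ f₂ g₂ g₃ v θ : ℝ) : ℝ :=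
  v * ((θ - sin θ * cos θ) / 2)
    - v⁻¹ * (g₃ * (-cos θ ^ 4 / 4) - f₂ * (((θ + sin θ * cos θ) / 2 - sin θ * cos θ ^ 3) / 4)
      + g₂ ^ 2 * (cos θ ^ 6 / 6)
      + 2 * f₁ * g₂ * (((θ + sin θ * cos θ) / 2
          - ((θ + sin θ * cos θ) / 2 - sin θ * cos θ ^ 3) / 4 - sin θ * cos θ ^ 5) / 6)
      - f₁ ^ 2 * (sin θ ^ 4 / 4 - sin θ ^ 6 / 6))

lemma hasDerivAt_avgPrim (f₁ f₂ g₂ g₃ v θ : ℝ) :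
    HasDerivAt (avgPrim f₁ f₂ g₂ g₃ v) (avgField f₁ f₂ g₂ g₃ (θ, v, 0)) θ := by
  have hs := hasDerivAt_sin θ
  have hc := hasDerivAt_cos θ
  have hi := hasDerivAt_id θ
  have hsc := hs.mul hc
  have hc2 := ((hi.add hsc).div_const 2)
  have hs2c2 := (hc2.sub (hs.mul (hc.pow 3))).div_const 4
  have k₁ := ((hi.sub hsc).div_const 2).const_mul v
  have k₂ := (((hc.pow 4).neg.div_const 4).const_mul g₃).sub (hs2c2.const_mul f₂)
  have k₃ := ((hc.pow 6).div_const 6).const_mul (g₂ ^ 2)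
  have k₄ := (((hc2.sub hs2c2).sub (hs.mul (hc.pow 5))).div_const 6).const_mul (2 * f₁ * g₂)
  have k₅ := (((hs.pow 4).div_const 4).sub ((hs.pow 6).div_const 6)).const_mul (f₁ ^ 2)
  have key := k₁.sub ((((k₂.add k₃).add k₄).sub k₅).const_mul v⁻¹)
  refine key.congr_deriv ?_
  have h1 : sin θ ^ 2 = 1 - cos θ ^ 2 := sin_sq θ
  have h3 : sin θ ^ 3 = sin θ * (1 - cos θ ^ 2) := by rw [← h1]; ring
  have h5 : sin θ ^ 5 = sin θ * (1 - cos θ ^ 2) ^ 2 := by rw [← h1]; ring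
  simp only [avgField, angSpeed, angExcess, radA, radB, angA, angB, Pi.pow_apply,
    zero_mul, sub_zero, add_zero, div_one]
  norm_num
  ring_nf
  simp only [h1, h3, h5]
  ring

/-- The averaged equation: its equilibrium is `v² = (f₁ g₂ - f₂) / 4`. -/
lemma avgPrim_sub (f₁ f₂ g₂ g₃ v : ℝ) :
    avgPrim f₁ f₂ g₂ g₃ v (2 * π) - avgPrim f₁ f₂ g₂ g₃ v 0
      = π * (v - (f₁ * g₂ - f₂) / 4 * v⁻¹) := by
  simp [avgPrim]
  ring

/-! ### Return to Cartesian coordinates -/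

/-- Back from polar to Cartesian coordinates. If `w'` is the derivative `dw/dθ` prescribed by the polar
form of the equation, then `x = (μ / w) cos θ` and `y = -(μ / w) sin θ` satisfy `ẋ = y` and the
second-order equation with `ε = μ²`, time derivatives being `θ`-derivatives times `angSpeed`. -/
lemma polar_identities {f₁ f₂ g₂ g₃ θ w μ w' : ℝ} (hw : w ≠ 0)
    (h : w' * angSpeed f₁ f₂ g₂ g₃ θ w μ
      = -μ * radA f₁ g₂ θ + μ ^ 2 * (sin θ ^ 2 * w - radB f₂ g₃ θ * w⁻¹)) :
    (μ * (-w' / w ^ 2) * cos θ + μ * w⁻¹ * (-sin θ)) * angSpeed f₁ f₂ g₂ g₃ θ w μ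
        = -(μ * w⁻¹ * sin θ) ∧
      -(μ * (-w' / w ^ 2) * sin θ + μ * w⁻¹ * cos θ) * angSpeed f₁ f₂ g₂ g₃ θ w μ
        = -(μ ^ 2 + f₁ * (μ * w⁻¹ * cos θ) + f₂ * (μ * w⁻¹ * cos θ) ^ 2) * -(μ * w⁻¹ * sin θ)
          - (μ * w⁻¹ * cos θ + g₂ * (μ * w⁻¹ * cos θ) ^ 2 + g₃ * (μ * w⁻¹ * cos θ) ^ 3) := by
  have hq : w * w⁻¹ = 1 := mul_inv_cancel₀ hw
  have hd : -w' / w ^ 2 = -w' * w⁻¹ ^ 2 := by rw [inv_pow, div_eq_mul_inv]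
  rw [hd]
  have hsc := sin_sq_add_cos_sq θ
  constructor
  · have e1 : (μ * (-w' * w⁻¹ ^ 2) * cos θ + μ * w⁻¹ * (-sin θ)) * angSpeed f₁ f₂ g₂ g₃ θ w μ
        = -μ * w⁻¹ ^ 2 * cos θ * (w' * angSpeed f₁ f₂ g₂ g₃ θ w μ)
          - μ * w⁻¹ * sin θ * angSpeed f₁ f₂ g₂ g₃ θ w μ := by ring
    rw [e1, h]
    simp only [angSpeed, angExcess, radA, radB, angA, angB]
    generalize w⁻¹ = q at *
    linear_combination (-μ ^ 3 * sin θ ^ 2 * cos θ * q) * hq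
  · have e1 : -(μ * (-w' * w⁻¹ ^ 2) * sin θ + μ * w⁻¹ * cos θ) * angSpeed f₁ f₂ g₂ g₃ θ w μ
        = μ * w⁻¹ ^ 2 * sin θ * (w' * angSpeed f₁ f₂ g₂ g₃ θ w μ)
          - μ * w⁻¹ * cos θ * angSpeed f₁ f₂ g₂ g₃ θ w μ := by ring
    rw [e1, h]
    simp only [angSpeed, angExcess, radA, radB, angA, angB]
    generalize w⁻¹ = q at *
    generalize sin θ = s at *
    generalize cos θ = c at *
    linear_combination (μ ^ 3 * s ^ 3 * q) * hq
      + (μ ^ 3 * q * s + μ ^ 2 * q ^ 2 * (f₁ * c * s - g₂ * c ^ 2)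
        + μ ^ 3 * q ^ 3 * (f₂ * c ^ 2 * s - g₃ * c ^ 3)) * hsc

/-! ### Existence of the cycle -/

/-- Example 1: if `f₂ - f₁ g₂ < 0`, then for all sufficiently small `ε > 0`
the equation `ẍ + (ε + f₁x + f₂x²)ẋ + x + g₂x² + g₃x³ = 0` has a nonconstant periodic
solution. -/
theorem example_equation_has_cycle
    (f₁ f₂ g₂ g₃ : ℝ) (h : f₂ - f₁ * g₂ < 0) :
    ∃ ε₀ > 0, ∀ ε ∈ Set.Ioo (0 : ℝ) ε₀,
      ∃ (x y : ℝ → ℝ) (T : ℝ), 0 < T ∧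
        (∀ t, HasDerivAt x (y t) t) ∧
        (∀ t, HasDerivAt y
          (-(ε + f₁ * x t + f₂ * x t ^ 2) * y t
            - (x t + g₂ * x t ^ 2 + g₃ * x t ^ 3)) t) ∧
        (∀ t, x (t + T) = x t ∧ y (t + T) = y t) ∧
        (∃ t₁ t₂ : ℝ, (x t₁, y t₁) ≠ (x t₂, y t₂)) := by
  -- The averaged field vanishes at `σ`; it is negative at `σ / 2` and positive at `2 * σ`.
  obtain ⟨σ, hσ, hσ2⟩ : ∃ σ : ℝ, 0 < σ ∧ (f₁ * g₂ - f₂) / 4 = σ ^ 2 :=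
    ⟨√((f₁ * g₂ - f₂) / 4), Real.sqrt_pos.2 (by linarith), (Real.sq_sqrt (by linarith)).symm⟩
  obtain ⟨μ₀, hμ₀, hsmall⟩ := exists_small_parameter f₁ f₂ g₂ g₃ (a := σ / 4) (by positivity)
  obtain ⟨K, hK⟩ := (contDiffOn_avgField f₁ f₂ g₂ g₃
    (s := Icc 0 (2 * π) ×ˢ Icc (σ / 4) (3 * σ) ×ˢ Icc 0 μ₀)
    (fun p hp => (hsmall p.1 p.2.1 p.2.2 hp.2.1.1 hp.2.2).1.ne')
    (fun p hp => by linarith [(hsmall p.1 p.2.1 p.2.2 hp.2.1.1 hp.2.2).2.1])).exists_lipschitzOnWith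
      one_ne_zero ((convex_Icc _ _).prod ((convex_Icc _ _).prod (convex_Icc _ _)))
      (isCompact_Icc.prod (isCompact_Icc.prod isCompact_Icc))
  have hneg : avgPrim f₁ f₂ g₂ g₃ (σ / 2) (2 * π) < avgPrim f₁ f₂ g₂ g₃ (σ / 2) 0 := by
    have h1 := avgPrim_sub f₁ f₂ g₂ g₃ (σ / 2)
    have h2 : σ / 2 - σ ^ 2 * (σ / 2)⁻¹ = -(3 / 2 * σ) := by field_simp; norm_num
    rw [hσ2, h2] at h1
    nlinarith [mul_pos pi_pos hσ]
  have hpos : avgPrim f₁ f₂ g₂ g₃ (2 * σ) 0 < avgPrim f₁ f₂ g₂ g₃ (2 * σ) (2 * π) := by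
    have h1 := avgPrim_sub f₁ f₂ g₂ g₃ (2 * σ)
    have h2 : 2 * σ - σ ^ 2 * (2 * σ)⁻¹ = 3 / 2 * σ := by field_simp; norm_num
    rw [hσ2, h2] at h1
    nlinarith [mul_pos pi_pos hσ]
  obtain ⟨μ₁, hμ₁, hsol⟩ := scalar_averaging two_pi_pos (a := σ / 4) (v₁ := σ / 2) (v₂ := 2 * σ)
    (b := 3 * σ) (by linarith) (by linarith) (by linarith) hμ₀ hK (hasDerivAt_avgPrim f₁ f₂ g₂ g₃ _)
    (hasDerivAt_avgPrim f₁ f₂ g₂ g₃ _) hneg hpos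
  refine ⟨min μ₀ μ₁ ^ 2, by positivity, fun ε hε => ?_⟩
  obtain ⟨μ, hμ, rfl, hμlt⟩ : ∃ μ : ℝ, 0 < μ ∧ μ ^ 2 = ε ∧ μ < min μ₀ μ₁ :=
    ⟨√ε, Real.sqrt_pos.2 hε.1, Real.sq_sqrt hε.1.le, (Real.sqrt_lt' (by positivity)).2 hε.2⟩
  have hμm : μ ∈ Icc 0 μ₀ := ⟨hμ.le, (hμlt.trans_le (min_le_left _ _)).le⟩
  obtain ⟨u, hu0, hu⟩ := hsol μ ⟨hμ, hμlt.trans_le (min_le_right _ _)⟩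
  obtain ⟨v, hvper, hv⟩ := exists_periodic_extension two_pi_pos
    (f := fun θ v => μ ^ 2 * avgField f₁ f₂ g₂ g₃ (θ, v, μ))
    (fun θ v => by
      simp only [avgField, angSpeed, angExcess, radA, radB, angA, angB, primA, sin_add_two_pi,
        cos_add_two_pi]) hu0 hu
  set w : ℝ → ℝ := fun θ => v θ - μ * primA f₁ g₂ θ with hw
  have hwΘ : ∀ θ, 0 < w θ ∧ 1 / 2 ≤ angSpeed f₁ f₂ g₂ g₃ θ (w θ) μ ∧
      angSpeed f₁ f₂ g₂ g₃ θ (w θ) μ ≤ 2 := fun θ => hsmall θ (v θ) μ (hv θ).1.1 hμm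
  set w' : ℝ → ℝ := fun θ => μ ^ 2 * avgField f₁ f₂ g₂ g₃ (θ, v θ, μ) - μ * radA f₁ g₂ θ with hw'
  have hwder : ∀ θ, HasDerivAt w (w' θ) θ := fun θ =>
    (hv θ).2.sub ((hasDerivAt_primA f₁ g₂ θ).const_mul μ)
  have hwcont : Continuous w := continuous_iff_continuousAt.2 fun θ => (hwder θ).continuousAt
  have hwper : ∀ θ, w (θ + 2 * π) = w θ := fun θ => by
    simp only [hw, hvper θ, primA, sin_add_two_pi, cos_add_two_pi]
  have hw'Θ : ∀ θ, w' θ * angSpeed f₁ f₂ g₂ g₃ θ (w θ) μ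
      = -μ * radA f₁ g₂ θ + μ ^ 2 * (sin θ ^ 2 * w θ - radB f₂ g₃ θ * (w θ)⁻¹) := fun θ => by
    have hne : angSpeed f₁ f₂ g₂ g₃ θ (w θ) μ ≠ 0 := by linarith [(hwΘ θ).2.1]
    have h1 : avgField f₁ f₂ g₂ g₃ (θ, v θ, μ) * angSpeed f₁ f₂ g₂ g₃ θ (w θ) μ
        = radA f₁ g₂ θ * angExcess f₁ f₂ g₂ g₃ θ (w θ) μ + sin θ ^ 2 * w θ
          - radB f₂ g₃ θ * (w θ)⁻¹ := div_mul_cancel₀ _ hne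
    have h2 : angSpeed f₁ f₂ g₂ g₃ θ (w θ) μ = 1 + μ * angExcess f₁ f₂ g₂ g₃ θ (w θ) μ := rfl
    simp only [hw']
    linear_combination μ ^ 2 * h1 - μ * radA f₁ g₂ θ * h2
  obtain ⟨φ, T, hT, hφ, hφT⟩ := exists_phase two_pi_pos
    (Θ := fun θ => angSpeed f₁ f₂ g₂ g₃ θ (w θ) μ)
    (by
      have hwi : Continuous fun θ => (w θ)⁻¹ := hwcont.inv₀ fun θ => (hwΘ θ).1.ne'
      unfold angSpeed angExcess angA angB
      fun_prop)
    (fun θ => by linarith [(hwΘ θ).2.1]) (fun θ => (hwΘ θ).2.2)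
    (fun θ => by
      simp only [hwper, angSpeed, angExcess, angA, angB, sin_add_two_pi, cos_add_two_pi])
  refine ⟨fun t => μ * (w (φ t))⁻¹ * cos (φ t), fun t => -(μ * (w (φ t))⁻¹ * sin (φ t)), T, hT,
    fun t => ?_, fun t => ?_, fun t => ?_, ?_⟩
  · have h1 := (((hwder (φ t)).inv (hwΘ _).1.ne').const_mul μ).mul (hasDerivAt_cos (φ t))
    have h2 := h1.comp t (hφ t)
    exact h2.congr_deriv (polar_identities (hwΘ _).1.ne' (hw'Θ (φ t))).1
  · have h1 := ((((hwder (φ t)).inv (hwΘ _).1.ne').const_mul μ).mul (hasDerivAt_sin (φ t))).neg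
    have h2 := h1.comp t (hφ t)
    exact h2.congr_deriv (polar_identities (hwΘ _).1.ne' (hw'Θ (φ t))).2
  · simp only [hφT, hwper, sin_add_two_pi, cos_add_two_pi, and_self]
  · -- After half a turn both coordinates change sign, and they cannot both vanish.
    have hφc : Continuous φ := continuous_iff_continuousAt.2 fun t => (hφ t).continuousAt
    obtain ⟨t, -, ht⟩ := intermediate_value_Icc hT.le hφc.continuousOn
      (show φ 0 + π ∈ Icc (φ 0) (φ T) by
        have := hφT 0
        rw [zero_add] at this
        rw [this]
        constructor <;> linarith [pi_pos])
    refine ⟨0, t, fun heq => ?_⟩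
    obtain ⟨hx, hy⟩ := Prod.mk.inj heq
    have hq₁ : 0 < μ * (w (φ 0))⁻¹ := mul_pos hμ (inv_pos.2 (hwΘ _).1)
    have hq₂ : 0 < μ * (w (φ t))⁻¹ := mul_pos hμ (inv_pos.2 (hwΘ _).1)
    have hct : cos (φ t) = -cos (φ 0) := by rw [ht, cos_add_pi]
    have hst : sin (φ t) = -sin (φ 0) := by rw [ht, sin_add_pi]
    simp only [hct, hst] at hx hy
    set q₁ := μ * (w (φ 0))⁻¹
    set q₂ := μ * (w (φ t))⁻¹
    have hc : cos (φ 0) = 0 :=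
      (mul_eq_zero.1 (show (q₁ + q₂) * cos (φ 0) = 0 by linear_combination hx)).resolve_left (by positivity)
    have hs : sin (φ 0) = 0 :=
      (mul_eq_zero.1 (show (q₁ + q₂) * sin (φ 0) = 0 by linear_combination -hy)).resolve_left (by positivity)
    have := sin_sq_add_cos_sq (φ 0)
    rw [hc, hs] at this
    norm_num at this
end

section
/- Let F(x) = (x² + 2x)|1 + x|^{−3} and G(x) = (1/9)(x² + 2x)(1 + x)^{−5}, defined for x ≠ −1. The planar system ẋ = y, ẏ = −F(x)y − G(x) is invariant under the change x = −z − 2, y = −ϑ: if (x(t), y(t)) is a solution with x(t) ≠ −1 for all t, then (z(t), ϑ(t)) = (−x(t) − 2, −y(t)) is also a solution of the same system (i.e., ż = ϑ and ϑ̇ = −F(z)ϑ − G(z)), and this change takes the equilibrium (−2, 0) to the equilibrium (0, 0). -/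
/-!
The change `x ↦ -x - 2` is the reflection about the singular line `x = -1`: it sends `1 + x` to
`-(1 + x)` and fixes `x² + 2x = (1 + x)² - 1`. Hence `F10` is even under it (it depends on `|1 + x|`)
and `G10` is odd (odd power of `1 + x`). Negating the second equation of the system then gives the
same equation for the reflected solution.
-/

/-- `F(x) = (x² + 2x)|1 + x|⁻³`. -/
noncomputable def F10 (x : ℝ) : ℝ := (x ^ 2 + 2 * x) * |1 + x| ^ (-3 : ℤ)

/-- `G(x) = (1/9)(x² + 2x)(1 + x)⁻⁵`. -/
noncomputable def G10 (x : ℝ) : ℝ := (1 / 9) * (x ^ 2 + 2 * x) * (1 + x) ^ (-5 : ℤ)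

theorem F10_reflect (x : ℝ) : F10 (-x - 2) = F10 x := by
  have h : 1 + (-x - 2) = -(1 + x) := by ring
  unfold F10
  rw [h, abs_neg]
  ring

theorem G10_reflect (x : ℝ) : G10 (-x - 2) = -G10 x := by
  have h : 1 + (-x - 2) = -(1 + x) := by ring
  have hodd : Odd (-5 : ℤ) := by decide
  unfold G10
  rw [h, hodd.neg_zpow]
  ring

/-- the system `ẋ = y, ẏ = −F(x)y − G(x)` is invariant under
`x = −z − 2, y = −ϑ`; this change takes the equilibrium `(−2, 0)` to `(0, 0)`. -/
theorem lienard_symmetry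
    (x y : ℝ → ℝ) (hne : ∀ t, x t ≠ -1)
    (hx : ∀ t, HasDerivAt x (y t) t)
    (hy : ∀ t, HasDerivAt y (-(F10 (x t)) * y t - G10 (x t)) t) :
    (∀ t, HasDerivAt (fun s => -x s - 2) (-(y t)) t) ∧
    (∀ t, HasDerivAt (fun s => -y s)
      (-(F10 (-x t - 2)) * (-(y t)) - G10 (-x t - 2)) t) ∧
    ((-(-2 : ℝ) - 2, -(0 : ℝ)) = ((0 : ℝ), (0 : ℝ))) := by
  refine ⟨fun t => (hx t).neg.sub_const 2, fun t => ?_, by norm_num⟩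
  rw [F10_reflect, G10_reflect]
  exact (hy t).neg.congr_deriv (by ring)
end

section
/- Let f, g be continuous on (a, +∞), a ∈ ℝ, and suppose there are numbers a < ν₁ ≤ x₀ ≤ ν₂ such that: (1) g(x) → −∞ as x → a⁺, g(x) → +∞ as x → +∞, and ∫_{x₀}^{x} g(z)dz → +∞ both as x → a⁺ and as x → +∞; (2) f(x) > 0 for all x ∈ (a, ν₁) ∪ (ν₂, +∞), and ∫_{ν₂}^{ν₁} f(x)dx ≤ 0. Then there exist numbers μ₁ ∈ (a, ν₁) and μ₂ ∈ (ν₂, +∞) and a compact set K contained in the strip {μ₁ ≤ x ≤ μ₂} that is positively invariant for the system ẋ = y, ẏ = −f(x)y − g(x) and contains the segment [ν₁, ν₂] × {0} in its interior. -/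
/-!
With `F(x) = ∫_{ν₁}^x f` and `G(x) = ∫_{x₀}^x g`, the function `w = y + F(x)` satisfies
`ẋ = w - F(x)`, `ẇ = -g(x)`. The invariant region is a sublevel set `{U ≤ C}`, for large `C`, of
`U = u² / 2 + G(x)`, `u = w - ℓ(x)`, where `ℓ` is a `C¹` nondecreasing function. Along solutions

  `U̇ = ℓ'(x) (u (F(x) - ℓ(x)) - u²) + g(x) (ℓ(x) - F(x))`.

Choose `α < ν₁` and `β > ν₂` with `g < 0` on `(a, α]` and `g > 0` on `[β, ∞)`. Since `f > 0` outside
`[ν₁, ν₂]` and `F(ν₂) ≥ 0 = F(ν₁)`, we have `F < 0` on `(a, α]` and `F ≥ F(β) > 0` on `[β, ∞)`. Take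
`ℓ` with values in `[0, F(β)/2]`, with `ℓ' > 0` on `[α, β]` and `ℓ' = 0` outside a slightly larger
compact interval `[p, q]`. Then the second term of `U̇` is negative outside `[α, β]`, and if `C` is
large then `|u|` is large on `{U = C}` over `[p, q]`, so there the first term is nonpositive and
over `[α, β]` it dominates. Hence `U̇ < 0` on `{U = C}`. The region is compact because `G → +∞` at
both ends.

The function `ℓ` comes from `exists_C1_step`, and `sublevel_trapping` turns the sign of `U̇` on the
level set into forward invariance.
-/

open Filter Set intervalIntegral

lemma hasDerivAt_max_zero_sq (x : ℝ) :
    HasDerivAt (fun t : ℝ => (max 0 t) ^ 2) (2 * max 0 x) x := by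
  rcases lt_trichotomy x 0 with h | h | h
  · rw [max_eq_left h.le, mul_zero]
    refine (hasDerivAt_const x (0 : ℝ)).congr_of_eventuallyEq ?_
    filter_upwards [Iio_mem_nhds h] with t ht
    simp [max_eq_left (le_of_lt (mem_Iio.1 ht))]
  · subst h
    rw [max_self, mul_zero]
    rw [hasDerivAt_iff_isLittleO]
    have : (fun t : ℝ => t ^ 2) =o[nhds 0] fun t => t := by
      simpa using Asymptotics.isLittleO_pow_id (𝕜 := ℝ) (n := 2) (by norm_num)
    refine (Asymptotics.IsBigO.of_bound 1 ?_).trans_isLittleO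
      (this.congr_right fun t => (sub_zero t).symm)
    refine Eventually.of_forall fun t => ?_
    rcases le_total t 0 with ht | ht
    · simp [max_eq_left ht, sq_nonneg]
    · simp [max_eq_right ht]
  · rw [max_eq_right h.le]
    have := (hasDerivAt_id x).pow 2
    simp only [id] at this
    refine HasDerivAt.congr_of_eventuallyEq (by simpa using this) ?_
    filter_upwards [Ioi_mem_nhds h] with t ht
    simp [max_eq_right (le_of_lt (mem_Ioi.1 ht))]

/-- A nondecreasing `C¹` step from `0` to `1` which increases exactly on `(p, q)`, namely
`A² / (A² + B²)` with `A = (x - p)⁺` and `B = (q - x)⁺`. -/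
lemma exists_C1_step (p q : ℝ) (hpq : p < q) :
    ∃ φ φ' : ℝ → ℝ, (∀ x, HasDerivAt φ (φ' x) x) ∧ Continuous φ' ∧
      (∀ x, 0 ≤ φ x) ∧ (∀ x, φ x ≤ 1) ∧ (∀ x, 0 ≤ φ' x) ∧
      (∀ x, x ∉ Icc p q → φ' x = 0) ∧ (∀ x ∈ Ioo p q, 0 < φ' x) := by
  have hD : ∀ x, 0 < (max 0 (x - p)) ^ 2 + (max 0 (q - x)) ^ 2 := by
    intro x
    rcases lt_or_ge p x with h | h
    · have : 0 < max 0 (x - p) := lt_max_of_lt_right (by linarith)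
      positivity
    · have : 0 < max 0 (q - x) := lt_max_of_lt_right (by linarith)
      positivity
  refine ⟨fun x => (max 0 (x - p)) ^ 2 / ((max 0 (x - p)) ^ 2 + (max 0 (q - x)) ^ 2),
    fun x => 2 * max 0 (x - p) * max 0 (q - x) * (max 0 (x - p) + max 0 (q - x)) /
      ((max 0 (x - p)) ^ 2 + (max 0 (q - x)) ^ 2) ^ 2, ?_, ?_, ?_, ?_, ?_, ?_, ?_⟩
  · intro x
    have h1 : HasDerivAt (fun t : ℝ => (max 0 (t - p)) ^ 2) (2 * max 0 (x - p)) x := by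
      have := (hasDerivAt_max_zero_sq (x - p)).comp x ((hasDerivAt_id x).sub_const p)
      rwa [mul_one] at this
    have h2 : HasDerivAt (fun t : ℝ => (max 0 (q - t)) ^ 2) (-(2 * max 0 (q - x))) x := by
      have := (hasDerivAt_max_zero_sq (q - x)).comp x ((hasDerivAt_id x).const_sub q)
      rwa [mul_neg_one] at this
    refine (h1.div (h1.add h2) (hD x).ne').congr_deriv ?_
    simp only [Pi.add_apply]
    congr 1
    ring
  · refine Continuous.div (by fun_prop) (by fun_prop) fun x => ?_
    exact (pow_pos (hD x) 2).ne'
  · intro x; positivity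
  · intro x
    rw [div_le_one (hD x)]
    nlinarith [sq_nonneg (max 0 (q - x))]
  · intro x
    have h1 : 0 ≤ max 0 (x - p) := le_max_left _ _
    have h2 : 0 ≤ max 0 (q - x) := le_max_left _ _
    positivity
  · intro x hx
    rcases lt_or_ge x p with h | h
    · simp [max_eq_left (by linarith : x - p ≤ 0)]
    · have : q < x := by
        by_contra! h'
        exact hx ⟨h, h'⟩
      simp [max_eq_left (by linarith : q - x ≤ 0)]
  · intro x hx
    have h1 : 0 < max 0 (x - p) := lt_max_of_lt_right (by linarith [hx.1])
    have h2 : 0 < max 0 (q - x) := lt_max_of_lt_right (by linarith [hx.2])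
    have := hD x
    positivity

lemma hasDerivAt_primitive {a c x : ℝ} {h : ℝ → ℝ} (hh : ContinuousOn h (Ioi a)) (hc : a < c)
    (hx : a < x) : HasDerivAt (fun x => ∫ z in c..x, h z) (h x) x := by
  have hsub : uIcc c x ⊆ Ioi a := fun z hz => lt_of_lt_of_le (lt_min hc hx) hz.1
  refine integral_hasDerivAt_right (hh.mono hsub).intervalIntegrable ?_
    (hh.continuousAt (Ioi_mem_nhds hx))
  exact hh.stronglyMeasurableAtFilter isOpen_Ioi x hx

/-- Forward invariance holds because a differentiable function of time that starts at or below `C`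
and has negative derivative whenever it equals `C` cannot exceed `C`. The set is `{(y + E(x))² / 2 + G(x) ≤ C}`, restricted to a
vertical strip with `G > C` on both edges; here `E = F - ℓ`, with `E' = e`, and `hneg` is the sign
condition on the derivative along solutions. -/
lemma sublevel_trapping {f g E e G : ℝ → ℝ} {m₁ m₂ C : ℝ}
    (hE : ∀ x ∈ Icc m₁ m₂, HasDerivAt E (e x) x)
    (hG : ∀ x ∈ Icc m₁ m₂, HasDerivAt G (g x) x)
    (h₁ : C < G m₁) (h₂ : C < G m₂)
    (hneg : ∀ x ∈ Icc m₁ m₂, ∀ y, (y + E x) ^ 2 / 2 + G x = C →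
      (y + E x) * (-(f x) * y - g x + e x * y) + g x * y < 0)
    {K : Set (ℝ × ℝ)}
    (hK : K = {p : ℝ × ℝ | p.1 ∈ Icc m₁ m₂ ∧ (p.2 + E p.1) ^ 2 / 2 + G p.1 ≤ C}) :
    IsCompact K ∧
    (∀ x ∈ Ioo m₁ m₂, (E x) ^ 2 / 2 + G x < C → (x, (0 : ℝ)) ∈ interior K) ∧
    (∀ x y : ℝ → ℝ, (x 0, y 0) ∈ K →
        (∀ t ∈ Ici (0 : ℝ), HasDerivWithinAt x (y t) (Ici 0) t) →
        (∀ t ∈ Ici (0 : ℝ),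
          HasDerivWithinAt y (-(f (x t)) * y t - g (x t)) (Ici 0) t) →
        ∀ t ≥ (0 : ℝ), (x t, y t) ∈ K) := by
  have hEc : ContinuousOn E (Icc m₁ m₂) := fun x hx => (hE x hx).continuousAt.continuousWithinAt
  have hGc : ContinuousOn G (Icc m₁ m₂) := fun x hx => (hG x hx).continuousAt.continuousWithinAt
  have hcont : ContinuousOn (fun p : ℝ × ℝ => (p.2 + E p.1) ^ 2 / 2 + G p.1)
      (Icc m₁ m₂ ×ˢ univ) := by
    have h1 : ContinuousOn (fun p : ℝ × ℝ => E p.1) (Icc m₁ m₂ ×ˢ univ) :=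
      hEc.comp continuousOn_fst fun p hp => hp.1
    have h2 : ContinuousOn (fun p : ℝ × ℝ => G p.1) (Icc m₁ m₂ ×ˢ univ) :=
      hGc.comp continuousOn_fst fun p hp => hp.1
    exact (((continuousOn_snd.add h1).pow 2).div_const 2).add h2
  have hclosed : IsClosed K := by
    have := hcont.preimage_isClosed_of_isClosed (isClosed_Icc.prod isClosed_univ)
      (isClosed_Iic (a := C))
    convert this using 1
    rw [hK]
    ext p
    simp
  have hcompact : IsCompact K := by
    obtain ⟨B₁, hB₁⟩ := isCompact_Icc.exists_bound_of_continuousOn hEc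
    obtain ⟨B₂, hB₂⟩ := isCompact_Icc.exists_bound_of_continuousOn hGc
    -- On `K`, `|y + E| ≤ (y + E)² / 2 + 1 ≤ C - G + 1`.
    refine ((isCompact_Icc (a := m₁) (b := m₂)).prod (isCompact_Icc (a := -(C + B₂ + 1 + B₁))
      (b := C + B₂ + 1 + B₁))).of_isClosed_subset hclosed ?_
    rw [hK]
    rintro ⟨x, y⟩ ⟨hx, hU⟩
    have h1 := abs_le.1 (hB₁ x hx)
    have h2 := abs_le.1 (hB₂ x hx)
    simp only at hU hx
    refine ⟨hx, ?_, ?_⟩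
    · simp only
      nlinarith [sq_nonneg (y + E x + 1)]
    · simp only
      nlinarith [sq_nonneg (y + E x - 1)]
  -- Points with strictly smaller value, strictly inside the strip, are interior.
  have hint : ∀ p : ℝ × ℝ, p.1 ∈ Ioo m₁ m₂ → (p.2 + E p.1) ^ 2 / 2 + G p.1 < C →
      K ∈ nhds p := by
    intro p hp hU
    have hn : Icc m₁ m₂ ×ˢ univ ∈ nhds p := prod_mem_nhds (Icc_mem_nhds hp.1 hp.2) univ_mem
    have hca := (hcont.continuousAt hn).eventually (Iio_mem_nhds hU)
    rw [hK]
    filter_upwards [hn, hca] with r hr hr'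
    exact ⟨hr.1, le_of_lt hr'⟩
  refine ⟨hcompact, fun x hx hU => mem_interior_iff_mem_nhds.2 (hint (x, 0) hx (by simpa using hU)),
    ?_⟩
  intro x y h0 hx hy t ht
  have hxc : ContinuousOn x (Ici 0) := fun t ht => (hx t ht).continuousWithinAt
  have hyc : ContinuousOn y (Ici 0) := fun t ht => (hy t ht).continuousWithinAt
  have hxyc : ContinuousOn (fun t => (x t, y t)) (Ici 0) := hxc.prodMk hyc
  have key : Icc 0 t ⊆ {s | (x s, y s) ∈ K} := by
    refine IsClosed.Icc_subset_of_forall_mem_nhdsWithin ?_ h0 ?_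
    · have := (hxyc.mono (fun r (hr : r ∈ Icc 0 t) => hr.1)).preimage_isClosed_of_isClosed
        isClosed_Icc hclosed
      rwa [inter_comm] at this
    · rintro s ⟨hsK, hs0, -⟩
      change (x s, y s) ∈ K at hsK
      rw [hK] at hsK
      obtain ⟨hsx, hsU⟩ := hsK
      simp only at hsx hsU
      have hGs : G (x s) ≤ C := by nlinarith [sq_nonneg (y s + E (x s))]
      have hsx' : x s ∈ Ioo m₁ m₂ := by
        refine ⟨lt_of_le_of_ne hsx.1 fun h => ?_, lt_of_le_of_ne hsx.2 fun h => ?_⟩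
        · rw [← h] at hGs; linarith
        · rw [h] at hGs; linarith
      have hsub : Ioi s ⊆ Ici (0 : ℝ) := fun r hr => hs0.trans (le_of_lt hr)
      have htend : Tendsto (fun r => (x r, y r)) (nhdsWithin s (Ioi s)) (nhds (x s, y s)) :=
        (hxyc s hs0).mono hsub
      rcases hsU.lt_or_eq with hlt | heq
      · exact htend (hint (x s, y s) hsx' hlt)
      · have hx' := (hx s hs0).mono hsub
        have hy' := (hy s hs0).mono hsub
        have hE' := (hE _ hsx).comp_hasDerivWithinAt s hx'
        have hG' := (hG _ hsx).comp_hasDerivWithinAt s hx'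
        have hU' : HasDerivWithinAt (fun r => (y r + E (x r)) ^ 2 / 2 + G (x r))
            ((y s + E (x s)) * (-(f (x s)) * y s - g (x s) + e (x s) * y s) + g (x s) * y s)
            (Ioi s) s := by
          refine ((((hy'.add hE').pow 2).div_const 2).add hG').congr_deriv ?_
          simp only [Pi.add_apply, Function.comp_apply]
          push_cast
          ring
        have hneg' := hneg _ hsx _ heq
        rw [hasDerivWithinAt_iff_tendsto_slope' self_notMem_Ioi] at hU'
        have hev := hU'.eventually (Iio_mem_nhds hneg')
        have hstrip : ∀ᶠ r in nhdsWithin s (Ioi s), x r ∈ Icc m₁ m₂ :=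
          (continuous_fst.tendsto _ |>.comp htend) (Icc_mem_nhds hsx'.1 hsx'.2)
        filter_upwards [hev, hstrip, self_mem_nhdsWithin] with r hr hr2 hrs
        rw [hK]
        refine ⟨hr2, ?_⟩
        simp only [slope_def_field, heq] at hr
        have hpos : 0 < r - s := sub_pos.2 hrs
        have := (div_lt_iff₀ hpos).1 hr
        simp only
        linarith
  exact key ⟨ht, le_rfl⟩

/-- under conditions (1)–(2) on `f, g` on `(a, +∞)`, there exist
`μ₁ ∈ (a, ν₁)`, `μ₂ > ν₂` and a compact positively invariant set `K` for the system
`ẋ = y, ẏ = −f(x)y − g(x)`, contained in the strip `{μ₁ ≤ x ≤ μ₂}` and containing the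
segment `[ν₁, ν₂] × {0}` in its interior. -/
theorem generalized_lienard_invariant_region
    (a x₀ ν₁ ν₂ : ℝ) (f g : ℝ → ℝ)
    (hν₁ : a < ν₁) (hν₂ : ν₁ ≤ x₀) (hν₃ : x₀ ≤ ν₂)
    (hf : ContinuousOn f (Ioi a)) (hg : ContinuousOn g (Ioi a))
    -- condition 1)
    (hg_bot : Tendsto g (nhdsWithin a (Ioi a)) atBot)
    (hg_top : Tendsto g atTop atTop)
    (hG_a : Tendsto (fun x => ∫ z in x₀..x, g z) (nhdsWithin a (Ioi a)) atTop)
    (hG_top : Tendsto (fun x => ∫ z in x₀..x, g z) atTop atTop)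
    -- condition 2)
    (hf_pos : ∀ x ∈ Ioo a ν₁ ∪ Ioi ν₂, 0 < f x)
    (hf_int : (∫ x in ν₂..ν₁, f x) ≤ 0) :
    ∃ μ₁ ∈ Ioo a ν₁, ∃ μ₂ ∈ Ioi ν₂, ∃ K : Set (ℝ × ℝ),
      IsCompact K ∧
      K ⊆ {p : ℝ × ℝ | μ₁ ≤ p.1 ∧ p.1 ≤ μ₂} ∧
      (Icc ν₁ ν₂ ×ˢ ({0} : Set ℝ)) ⊆ interior K ∧
      (∀ x y : ℝ → ℝ, (x 0, y 0) ∈ K →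
        (∀ t ∈ Ici (0 : ℝ), HasDerivWithinAt x (y t) (Ici 0) t) →
        (∀ t ∈ Ici (0 : ℝ),
          HasDerivWithinAt y (-(f (x t)) * y t - g (x t)) (Ici 0) t) →
        ∀ t ≥ (0 : ℝ), (x t, y t) ∈ K) := by
  have hν₁₂ : ν₁ ≤ ν₂ := hν₂.trans hν₃
  have hx₀ : a < x₀ := hν₁.trans_le hν₂
  have haν₂ : a < ν₂ := hν₁.trans_le hν₁₂
  set F : ℝ → ℝ := fun x => ∫ z in ν₁..x, f z with hFdef
  set G : ℝ → ℝ := fun x => ∫ z in x₀..x, g z with hGdef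
  have hF : ∀ x, a < x → HasDerivAt F (f x) x := fun x hx => hasDerivAt_primitive hf hν₁ hx
  have hG : ∀ x, a < x → HasDerivAt G (g x) x := fun x hx => hasDerivAt_primitive hg hx₀ hx
  have hFν₁ : F ν₁ = 0 := by simp [hFdef]
  have hFν₂ : 0 ≤ F ν₂ := by
    rw [integral_symm] at hf_int
    simpa [hFdef] using hf_int
  have hFr : StrictMonoOn F (Ici ν₂) := by
    refine strictMonoOn_of_deriv_pos (convex_Ici _)
      (fun x hx => (hF x (haν₂.trans_le hx)).continuousAt.continuousWithinAt) fun x hx => ?_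
    rw [interior_Ici] at hx
    rw [(hF x (haν₂.trans hx)).deriv]
    exact hf_pos x (Or.inr hx)
  have hFl : StrictMonoOn F (Ioc a ν₁) := by
    refine strictMonoOn_of_deriv_pos (convex_Ioc _ _)
      (fun x hx => (hF x hx.1).continuousAt.continuousWithinAt) fun x hx => ?_
    rw [interior_Ioc] at hx
    rw [(hF x hx.1).deriv]
    exact hf_pos x (Or.inl hx)
  -- Thresholds beyond which `g` has the sign of its limit.
  obtain ⟨α, hα, hgα⟩ : ∃ α ∈ Ioo a ν₁, ∀ x, a < x → x ≤ α → g x < 0 := by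
    have h := hg_bot.eventually (eventually_lt_atBot 0)
    obtain ⟨u, hu, hu'⟩ := mem_nhdsGT_iff_exists_Ioc_subset.1 h
    obtain ⟨v, hv, hv'⟩ := exists_between (lt_min hν₁ (mem_Ioi.1 hu))
    exact ⟨v, ⟨hv, hv'.trans_le (min_le_left _ _)⟩,
      fun x hx hxv => hu' ⟨hx, hxv.trans (hv'.le.trans (min_le_right _ _))⟩⟩
  obtain ⟨β, hβ, hgβ⟩ : ∃ β, ν₂ < β ∧ ∀ x, β ≤ x → 0 < g x := by
    obtain ⟨u, hu⟩ := eventually_atTop.1 (hg_top.eventually (eventually_gt_atTop 0))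
    exact ⟨max u (ν₂ + 1), lt_max_of_lt_right (by linarith),
      fun x hx => hu x ((le_max_left _ _).trans hx)⟩
  have hFβ : 0 < F β := hFν₂.trans_lt (hFr self_mem_Ici hβ.le hβ)
  have hFα : F α < 0 := hFν₁ ▸ hFl ⟨hα.1, hα.2.le⟩ ⟨hν₁, le_rfl⟩ hα.2
  obtain ⟨p, hap, hpα⟩ := exists_between hα.1
  obtain ⟨q, hq⟩ : ∃ q, q = β + 1 := ⟨_, rfl⟩
  have hαβ : α < β := hα.2.trans (hν₁₂.trans_lt hβ)
  obtain ⟨φ, φ', hφ, hφ'c, hφ0, hφ1, hφ'0, hφ'out, hφ'pos⟩ :=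
    exists_C1_step p q (by linarith)
  set E : ℝ → ℝ := fun x => F x - F β / 2 * φ x with hEdef
  have hE : ∀ x, a < x → HasDerivAt E (f x - F β / 2 * φ' x) x := fun x hx =>
    (hF x hx).sub ((hφ x).const_mul _)
  have hEβ : ∀ x, β ≤ x → 0 < E x := by
    intro x hx
    have h1 : F β ≤ F x := hFr.monotoneOn hβ.le (hβ.le.trans hx) hx
    simp only [hEdef]
    nlinarith [hφ1 x]
  have hEα : ∀ x, a < x → x ≤ α → E x < 0 := by
    intro x hax hx
    have h1 : F x ≤ F α := hFl.monotoneOn ⟨hax, hx.trans hα.2.le⟩ ⟨hα.1, hα.2.le⟩ hx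
    simp only [hEdef]
    nlinarith [hφ0 x, mul_nonneg hFβ.le (hφ0 x)]
  have hpq : ∀ x ∈ Icc p q, a < x := fun x hx => hap.trans_le hx.1
  obtain ⟨D, hD⟩ := isCompact_Icc.exists_bound_of_continuousOn
    (s := Icc p q) (f := E) fun x hx => (hE x (hpq x hx)).continuousAt.continuousWithinAt
  obtain ⟨B, hB⟩ := isCompact_Icc.exists_bound_of_continuousOn
    (s := Icc p q) (f := G) fun x hx => (hG x (hpq x hx)).continuousAt.continuousWithinAt
  obtain ⟨M, hM⟩ := isCompact_Icc.exists_bound_of_continuousOn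
    (s := Icc p q) (f := fun x => g x * E x) fun x hx =>
      ((hg.continuousAt (Ioi_mem_nhds (hpq x hx))).mul
        (hE x (hpq x hx)).continuousAt).continuousWithinAt
  obtain ⟨z, hz, hzmin⟩ := isCompact_Icc.exists_isMinOn (nonempty_Icc.2 hαβ.le)
    hφ'c.continuousOn
  obtain ⟨σ, hσ⟩ : ∃ σ, σ = F β / 2 * φ' z := ⟨_, rfl⟩
  have hσ0 : 0 < σ := by
    rw [hσ]
    have := hφ'pos z ⟨by linarith [hz.1], by linarith [hz.2]⟩
    positivity
  have hαpq : α ∈ Icc p q := ⟨hpα.le, by linarith⟩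
  have hM0 : 0 ≤ M := (norm_nonneg _).trans (hM α hαpq)
  -- This level makes `u² > D² + 2 M / σ` on the level set over `[p, q]`.
  obtain ⟨C, hC⟩ : ∃ C, C = D ^ 2 / 2 + M / σ + B + 1 := ⟨_, rfl⟩
  obtain ⟨m₁, hm₁, hGm₁⟩ : ∃ m₁ ∈ Ioo a p, C < G m₁ := by
    have h := hG_a.eventually (eventually_gt_atTop C)
    obtain ⟨r, hr, hr'⟩ := (h.and (Ioo_mem_nhdsGT hap)).exists
    exact ⟨r, hr', hr⟩
  obtain ⟨m₂, hm₂, hGm₂⟩ : ∃ m₂, q < m₂ ∧ C < G m₂ := by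
    have h := hG_top.eventually (eventually_gt_atTop C)
    obtain ⟨r, hr, hr'⟩ := (h.and (eventually_gt_atTop q)).exists
    exact ⟨r, hr', hr⟩
  have hMσ : 0 ≤ M / σ := by positivity
  have hneg : ∀ x ∈ Icc m₁ m₂, ∀ y, (y + E x) ^ 2 / 2 + G x = C →
      (y + E x) * (-(f x) * y - g x + (f x - F β / 2 * φ' x) * y) + g x * y < 0 := by
    intro x hx y hU
    have hax : a < x := hm₁.1.trans_le hx.1
    obtain ⟨u, hu⟩ : ∃ u, u = y + E x := ⟨_, rfl⟩
    obtain ⟨k, hk⟩ : ∃ k, k = F β / 2 * φ' x := ⟨_, rfl⟩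
    have hk0 : 0 ≤ k := by rw [hk]; have := hφ'0 x; positivity
    have hform : (y + E x) * (-(f x) * y - g x + (f x - F β / 2 * φ' x) * y) + g x * y
        = -(k * (u ^ 2 - u * E x)) - g x * E x := by
      rw [← hk]
      have : y = u - E x := by linarith
      subst this
      ring
    rw [hform]
    rw [← hu] at hU
    -- Over `[p, q]` the first term is at most `-k M / σ`.
    have hin : x ∈ Icc p q → M / σ < u ^ 2 - u * E x := by
      intro hxpq
      have h1 := abs_le.1 (hB x hxpq)
      have h2 : E x ^ 2 ≤ D ^ 2 := by
        have := hD x hxpq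
        rw [Real.norm_eq_abs] at this
        exact sq_le_sq' (abs_le.1 this).1 (abs_le.1 this).2
      nlinarith [sq_nonneg (u - E x), h1.2]
    have hfirst : 0 ≤ k * (u ^ 2 - u * E x) := by
      by_cases hxpq : x ∈ Icc p q
      · exact mul_nonneg hk0 (hMσ.trans (hin hxpq).le)
      · rw [hk, hφ'out x hxpq]; simp
    rcases le_or_gt x α with h | h
    · nlinarith [mul_pos_of_neg_of_neg (hgα x hax h) (hEα x hax h)]
    rcases le_or_gt β x with h' | h'
    · nlinarith [mul_pos (hgβ x h') (hEβ x h')]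
    have hxpq : x ∈ Icc p q := ⟨by linarith, by linarith⟩
    have hkσ : σ ≤ k := by
      rw [hσ, hk]
      have : φ' z ≤ φ' x := hzmin ⟨h.le, h'.le⟩
      gcongr
    have h1 := (abs_le.1 (hM x hxpq)).1
    have h2 : M < σ * (u ^ 2 - u * E x) := by
      have := (div_lt_iff₀ hσ0).1 (hin hxpq)
      linarith
    have h3 : σ * (u ^ 2 - u * E x) ≤ k * (u ^ 2 - u * E x) :=
      mul_le_mul_of_nonneg_right hkσ (hMσ.trans (hin hxpq).le)
    linarith
  obtain ⟨hK1, hK2, hK3⟩ := sublevel_trapping (f := f)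
    (fun x hx => hE x (hm₁.1.trans_le hx.1)) (fun x hx => hG x (hm₁.1.trans_le hx.1))
    hGm₁ hGm₂ hneg rfl
  refine ⟨m₁, ⟨hm₁.1, by linarith [hm₁.2, hα.2]⟩, m₂, mem_Ioi.2 (by linarith), _, hK1,
    fun r hr => hr.1, ?_, hK3⟩
  rintro ⟨x, y⟩ ⟨hx, hy⟩
  obtain rfl : y = 0 := hy
  have hx' : x ∈ Icc p q := ⟨by linarith [hx.1, hα.2], by linarith [hx.2]⟩
  refine hK2 x ⟨hm₁.2.trans_le hx'.1, hx'.2.trans_lt hm₂⟩ ?_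
  have h1 := abs_le.1 (hB x hx')
  have h2 := abs_le.1 (hD x hx')
  have h3 : E x ^ 2 ≤ D ^ 2 := sq_le_sq' h2.1 h2.2
  linarith [h1.2]
end

section
/- Consider the planar quadratic system ẋ = a₁x² + b₁xy + α₁x + β₁y, ẏ = a₂x² + b₂xy + c₂y² + α₂x + β₂y with real coefficients, b₁ > 0, and set a = −β₁/b₁. Assume conditions (21): 0 < 2c₂ < b₁, β₁ > 0, a₁β₁/b₁ > α₁, a₁(2c₂ − b₁)/b₁ > b₂, and a₁(b₁b₂ − a₁c₂)/b₁² > a₂. Then every solution (x(t), y(t)) with x(0) > a remains in the half-plane {x > a} for all t ≥ 0 and is bounded for t ≥ 0; consequently its ω-limit set is a nonempty bounded set contained in the half-plane {x > a}. -/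
open Filter Set

/-!
Put `a = -β₁/b₁`, `u = x - a` and `z = y + (a₁/b₁) u + (2 a₁ a + α₁)/b₁`. The system becomes
`u' = b u z + m`, `z' = -A u² - B u z + c z² + D u + E z + F` with `b = b₁`, `c = c₂`, and
the coefficient hypotheses give `0 < 2c < b` and `m, A, B > 0`. As `u' = m > 0` on `u = 0`,
the half-plane `u > 0` is forward invariant (`pos_invariant`).

For boundedness, use the Lyapunov function
`V = u^(-2c/b) (z²/2 + p z + A u²/(2(b-c)) + R u + K)` on `u > 0`. The weight `u^(-2c/b)` cancels
the cubic term `c z³`, the coefficient of `u²` cancels `-A u² z`, and differentiating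
`p z u^(-2c/b)` produces `-p c z² - p A u²`. With `p` large, `R = (pB - D)/(b - 2c)` and `K` large,
`u^(2c/b) V' ≤ -S z²/2 - p A u²/2 + W - μ/u` with `S, μ > 0`. Hence `V'` can be nonnegative only on
a compact subset of `u > 0`, so `V` stays bounded along the solution; since `V` is proper on
`u > 0`, the solution stays in a compact subset of `u > 0` (`normal_form_bounded`). The claims on
the ω-limit set follow from compactness.
-/

/-- A quantity whose derivative equals `m > 0` whenever it vanishes stays positive. -/
lemma pos_invariant {u u' : ℝ → ℝ} {m : ℝ} (hm : 0 < m)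
    (hu : ∀ t ∈ Ici (0 : ℝ), HasDerivWithinAt u (u' t) (Ici 0) t)
    (h0 : 0 < u 0) (hz : ∀ t, u t = 0 → u' t = m) : ∀ t ≥ (0 : ℝ), 0 < u t := by
  have hnn : ∀ t ≥ (0 : ℝ), 0 ≤ u t := by
    intro T hT
    have := image_le_of_deriv_right_lt_deriv_boundary' (f := fun t => - u t)
      (f' := fun t => - u' t) (a := 0) (b := T) (B := fun _ => 0) (B' := fun _ => 0)
      (fun t ht => ((hu t ht.1).continuousWithinAt.mono (fun s hs => hs.1)).neg)
      (fun t ht => ((hu t ht.1).mono (fun s hs => le_trans ht.1 hs)).neg)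
      (by linarith) continuousOn_const (fun t _ => hasDerivWithinAt_const _ _ _)
      (fun t ht h => by
        have := hz t (by linarith)
        linarith)
    have := this (right_mem_Icc.2 hT)
    linarith
  intro t ht
  refine lt_of_le_of_ne (hnn t ht) fun h => ?_
  have htpos : 0 < t := by
    rcases eq_or_lt_of_le ht with h' | h'
    · rw [← h'] at h; linarith
    · exact h'
  -- A zero at `t > 0` is an interior minimum, so the derivative `m` would vanish.
  have hmin : IsLocalMin u t := by
    filter_upwards [Ici_mem_nhds htpos] with s hs
    rw [← h]
    exact hnn s hs
  have h1 := hmin.hasDerivAt_eq_zero ((hu t ht).hasDerivAt (Ici_mem_nhds htpos))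
  have h2 := hz t h.symm
  linarith

set_option maxHeartbeats 1000000 in
/-- In the normal form, forward orbits in `u > 0` stay in a compact subset of `u > 0`. -/
lemma normal_form_bounded (b c m A B D E F : ℝ) (hc : 0 < c) (hcb : 2 * c < b) (hm : 0 < m)
    (hA : 0 < A) (hB : 0 < B) (u z : ℝ → ℝ)
    (hu : ∀ t ∈ Ici (0 : ℝ), HasDerivWithinAt u (b * u t * z t + m) (Ici 0) t)
    (hz : ∀ t ∈ Ici (0 : ℝ), HasDerivWithinAt z
      (-A * u t ^ 2 - B * u t * z t + c * z t ^ 2 + D * u t + E * z t + F) (Ici 0) t)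
    (h0 : 0 < u 0) :
    ∃ u₀ u₁ Z : ℝ, 0 < u₀ ∧ ∀ t ≥ (0 : ℝ), u₀ ≤ u t ∧ u t ≤ u₁ ∧ |z t| ≤ Z := by
  have hb : 0 < b := by linarith
  have hpos : ∀ t ≥ (0 : ℝ), 0 < u t := pos_invariant hm hu h0 (fun t ht => by simp [ht])
  set r : ℝ := 2 * c / b with hr
  have hr0 : 0 < r := by positivity
  have hr1 : r < 1 := by rw [hr, div_lt_one hb]; exact hcb
  have hrb : r * b = 2 * c := by rw [hr]; field_simp
  obtain ⟨p, hp0, hpS⟩ : ∃ p : ℝ, 0 < p ∧ 0 < p * c - E := by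
    refine ⟨(|E| + 1) / c, by positivity, ?_⟩
    rw [div_mul_cancel₀ _ hc.ne']
    linarith [le_abs_self E]
  set S := p * c - E with hS
  have hb2c : 0 < b - 2 * c := by linarith
  have hbc : 0 < b - c := by linarith
  obtain ⟨G, hG0, hG⟩ : ∃ G : ℝ, 0 < G ∧ G * (2 * (b - c)) = A :=
    ⟨A / (2 * (b - c)), by positivity, by field_simp⟩
  obtain ⟨R, hR⟩ : ∃ R : ℝ, R * (b - 2 * c) = p * B - D :=
    ⟨(p * B - D) / (b - 2 * c), by field_simp⟩
  set K := p ^ 2 + R ^ 2 / (2 * G) + 1 with hK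
  have hT : 0 < 2 * K - p ^ 2 := by
    have : 0 ≤ R ^ 2 / (2 * G) := by positivity
    nlinarith [sq_nonneg p]
  let P : ℝ → ℝ → ℝ := fun u z => z ^ 2 / 2 + p * z + G * u ^ 2 + R * u + K
  have hPlow : ∀ u z : ℝ, z ^ 2 / 4 + G / 2 * u ^ 2 + 1 ≤ P u z := by
    intro u z
    have h1 : 0 ≤ G / 2 * (u + R / G) ^ 2 := by positivity
    have h2 : G / 2 * (u + R / G) ^ 2 = G / 2 * u ^ 2 + R * u + R ^ 2 / (2 * G) := by
      field_simp; ring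
    simp only [P, hK]
    nlinarith [sq_nonneg (z / 2 + p)]
  -- The Lyapunov function along the solution; `Q` is `u ^ r` times its derivative.
  let V : ℝ → ℝ := fun t => u t ^ (-r) * P (u t) (z t)
  let Q : ℝ → ℝ → ℝ := fun u z => -z ^ 2 * (B * u + S) - p * A * u ^ 2
    + (p * D + 2 * G * m) * u - r * G * m * u
    + (F + p * E - 2 * c * K) * z + (p * F + R * m * (1 - r))
    - r * m / 2 * ((z + p) ^ 2 + (2 * K - p ^ 2)) / u
  have hVd : ∀ t ∈ Ici (0 : ℝ),
      HasDerivWithinAt V (u t ^ (-r) * Q (u t) (z t)) (Ici 0) t := by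
    intro t ht
    have hut := hpos t ht
    have h1 := (hu t ht).rpow_const (p := -r) (Or.inl hut.ne')
    have h2 : HasDerivWithinAt (fun t => P (u t) (z t)) _ (Ici 0) t :=
      ((((((hz t ht).pow 2).div_const 2).add ((hz t ht).const_mul p)).add
        (((hu t ht).pow 2).const_mul G)).add ((hu t ht).const_mul R)).add_const K
    refine (h1.mul h2).congr_deriv ?_
    rw [Real.rpow_sub_one hut.ne']
    simp only [P, Q]
    have hD : D = p * B - R * (b - 2 * c) := by linarith
    have hE : E = p * c - S := by linarith
    have hcr : c = r * b / 2 := by linarith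
    rw [← hG, hD, hE]
    clear_value S K r
    subst hcr
    field_simp
    ring
  set L := p * D + 2 * G * m - r * G * m with hL
  set N := F + p * E - 2 * c * K with hN
  set W := |p * F + R * m * (1 - r)| + 1 + L ^ 2 / (2 * (p * A)) + N ^ 2 / (2 * S) with hW
  set μ := r * m / 2 * (2 * K - p ^ 2) with hμ
  have hμ0 : 0 < μ := by positivity
  have hpA : 0 < p * A := by positivity
  have hW0 : 0 < W := by positivity
  have hQ : ∀ u z : ℝ, 0 < u →
      Q u z ≤ -(S / 2) * z ^ 2 - p * A / 2 * u ^ 2 + W - μ / u := by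
    intro u z hu
    have h1 : 0 ≤ p * A / 2 * (u - L / (p * A)) ^ 2 := by positivity
    have h2 : p * A / 2 * (u - L / (p * A)) ^ 2
        = p * A / 2 * u ^ 2 - L * u + L ^ 2 / (2 * (p * A)) := by
      field_simp; ring
    have h3 : 0 ≤ S / 2 * (z - N / S) ^ 2 := by positivity
    have h4 : S / 2 * (z - N / S) ^ 2 = S / 2 * z ^ 2 - N * z + N ^ 2 / (2 * S) := by
      field_simp; ring
    have h5 : 0 ≤ z ^ 2 * (B * u) := by positivity
    have h6 : 0 ≤ r * m / 2 * (z + p) ^ 2 / u := by positivity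
    have h7 : r * m / 2 * ((z + p) ^ 2 + (2 * K - p ^ 2)) / u
        = r * m / 2 * (z + p) ^ 2 / u + μ / u := by rw [hμ]; ring
    have h8 := le_abs_self (p * F + R * m * (1 - r))
    simp only [Q]
    rw [h7, hW]
    have h9 : (p * D + 2 * G * m) * u - r * G * m * u = L * u := by rw [hL]; ring
    linarith
  -- `M` exceeds `V 0` and the values of `V` on the compact set where `Q` may be nonnegative.
  set M := |V 0| + 1 + (μ / W) ^ (-r) *
    ((W / S) + p * (2 * W / S + 1) + G * (2 * W / (p * A)) + |R| * (2 * W / (p * A) + 1) + K) with hM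
  have hK0 : 0 < K := by positivity
  have hM0 : 0 < M := by rw [hM]; positivity
  clear_value M W μ L N K S r
  have hVM : ∀ t ≥ (0 : ℝ), V t ≤ M := by
    intro τ hτ
    refine image_le_of_deriv_right_lt_deriv_boundary' (f := V)
      (f' := fun t => u t ^ (-r) * Q (u t) (z t)) (a := 0) (b := τ) (B := fun _ => M)
      (B' := fun _ => 0)
      (fun t ht => (hVd t ht.1).continuousWithinAt.mono (fun s hs => hs.1))
      (fun t ht => (hVd t ht.1).mono (fun s hs => le_trans ht.1 hs))
      ?_ continuousOn_const (fun t _ => hasDerivWithinAt_const _ _ _) ?_ (right_mem_Icc.2 hτ)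
    · have : 0 ≤ (μ / W) ^ (-r) * ((W / S) + p * (2 * W / S + 1) + G * (2 * W / (p * A))
          + |R| * (2 * W / (p * A) + 1) + K) := by positivity
      linarith [le_abs_self (V 0)]
    · intro t ht hVt
      have hut := hpos t ht.1
      by_contra hcon
      have hQ0 : 0 ≤ Q (u t) (z t) := by
        by_contra hlt
        exact hcon (mul_neg_of_pos_of_neg (Real.rpow_pos_of_pos hut _) (not_le.1 hlt))
      have hQt := hQ (u t) (z t) hut
      have i1 : 0 ≤ S / 2 * z t ^ 2 := by positivity
      have i2 : 0 ≤ p * A / 2 * u t ^ 2 := by positivity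
      have i3 : 0 < μ / u t := by positivity
      have j1 : z t ^ 2 ≤ 2 * W / S := by
        rw [le_div_iff₀ hpS]; linarith
      have j2 : u t ^ 2 ≤ 2 * W / (p * A) := by
        rw [le_div_iff₀ hpA]; linarith
      have j3 : μ / W ≤ u t := by
        have : μ / u t ≤ W := by linarith
        rw [div_le_iff₀ hut] at this
        rw [div_le_iff₀ hW0]; linarith
      have k1 : u t ^ (-r) ≤ (μ / W) ^ (-r) :=
        Real.rpow_le_rpow_of_nonpos (by positivity) j3 (by linarith)
      have k2 : P (u t) (z t) ≤ (W / S) + p * (2 * W / S + 1) + G * (2 * W / (p * A))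
          + |R| * (2 * W / (p * A) + 1) + K := by
        have l1 : p * z t ≤ p * (2 * W / S + 1) :=
          mul_le_mul_of_nonneg_left (by linarith [sq_nonneg (z t - 1), sq_nonneg (z t)]) hp0.le
        have l2 : G * u t ^ 2 ≤ G * (2 * W / (p * A)) := mul_le_mul_of_nonneg_left j2 hG0.le
        have l3 : R * u t ≤ |R| * (2 * W / (p * A) + 1) :=
          mul_le_mul (le_abs_self R) (by linarith [sq_nonneg (u t - 1), sq_nonneg (u t)]) hut.le (abs_nonneg R)
        have l4 : z t ^ 2 / 2 ≤ W / S := by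
          have : W / S = 2 * W / S / 2 := by ring
          linarith
        simp only [P]
        linarith
      have k3 : 0 ≤ P (u t) (z t) := by
        have := hPlow (u t) (z t)
        have : 0 ≤ z t ^ 2 / 4 + G / 2 * u t ^ 2 := by positivity
        linarith
      have k4 : V t ≤ _ := mul_le_mul k1 k2 k3 (Real.rpow_nonneg (by positivity) _)
      have := abs_nonneg (V 0)
      linarith
  have hPM : ∀ t ≥ (0 : ℝ), P (u t) (z t) ≤ M * u t ^ r := by
    intro t ht
    have h := hVM t ht
    have hur : 0 < u t ^ r := Real.rpow_pos_of_pos (hpos t ht) _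
    simp only [V] at h
    rw [Real.rpow_neg (hpos t ht).le, inv_mul_le_iff₀ hur] at h
    linarith
  -- As `0 < r < 1`, the power `u ^ r` is at most `1 + u`.
  have hur : ∀ t ≥ (0 : ℝ), u t ^ r ≤ 1 + u t := by
    intro t ht
    have hut := hpos t ht
    calc u t ^ r ≤ (1 + u t) ^ r := Real.rpow_le_rpow hut.le (by linarith) hr0.le
      _ ≤ (1 + u t) ^ (1 : ℝ) := Real.rpow_le_rpow_of_exponent_le (by linarith) hr1.le
      _ = 1 + u t := Real.rpow_one _
  have hup : ∀ t ≥ (0 : ℝ), u t ≤ 4 * M / G + 1 := by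
    intro t ht
    have hut := hpos t ht
    by_contra hlt
    push Not at hlt
    have h1 := hPlow (u t) (z t)
    have h2 := hPM t ht
    have h3 := mul_le_mul_of_nonneg_left (hur t ht) hM0.le
    have h4 : 0 < 4 * M / G := by positivity
    have h5 : 4 * M < G * u t := by
      have : 4 * M / G < u t := by linarith
      rw [div_lt_iff₀ hG0] at this
      linarith
    have h6 : 4 * M * u t < G * u t * u t := mul_lt_mul_of_pos_right h5 hut
    have h7 : M * 1 ≤ M * u t := mul_le_mul_of_nonneg_left (by linarith) hM0.le
    linarith [sq_nonneg (z t)]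
  set U := 4 * M / G + 1 with hU
  refine ⟨(1 / M) ^ (1 / r), U, 4 * (M * (1 + U)) + 1, by positivity, ?_⟩
  intro t ht
  have hut := hpos t ht
  have h1 := hPlow (u t) (z t)
  have h2 := hPM t ht
  have h3 := mul_le_mul_of_nonneg_left (hur t ht) hM0.le
  have h3' : M * (1 + u t) ≤ M * (1 + U) :=
    mul_le_mul_of_nonneg_left (by linarith [hup t ht]) hM0.le
  have h4 : 0 ≤ z t ^ 2 / 4 := by positivity
  have h5 : 0 ≤ G / 2 * u t ^ 2 := by positivity
  refine ⟨?_, hup t ht, ?_⟩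
  · have h6 : 1 / M ≤ u t ^ r := by rw [div_le_iff₀ hM0]; linarith
    have h7 := Real.rpow_le_rpow (by positivity) h6 (by positivity : 0 ≤ 1 / r)
    rwa [← Real.rpow_mul hut.le, mul_one_div_cancel hr0.ne', Real.rpow_one] at h7
  · have h8 : |z t| ^ 2 ≤ 4 * (M * (1 + U)) := by rw [sq_abs]; linarith
    linarith [sq_nonneg (|z t| - 1), abs_nonneg (z t)]

/-- Theorem 4: under conditions (21), every solution of the quadratic
system with `x 0 > a = −β₁/b₁` stays in `{x > a}` for `t ≥ 0`, is bounded for `t ≥ 0`,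
and its ω-limit set is nonempty, bounded and contained in `{x > a}`. -/
theorem quadratic_system_bounded_attractor
    (a₁ b₁ α₁ β₁ a₂ b₂ c₂ α₂ β₂ : ℝ) (hb₁ : 0 < b₁)
    -- conditions (21)
    (h21a : 0 < 2 * c₂) (h21b : 2 * c₂ < b₁) (h21c : 0 < β₁)
    (h21d : a₁ * β₁ / b₁ > α₁)
    (h21e : a₁ * (2 * c₂ - b₁) / b₁ > b₂)
    (h21f : a₁ * (b₁ * b₂ - a₁ * c₂) / b₁ ^ 2 > a₂)
    (x y : ℝ → ℝ)
    (hx : ∀ t ∈ Ici (0 : ℝ), HasDerivWithinAt x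
      (a₁ * x t ^ 2 + b₁ * x t * y t + α₁ * x t + β₁ * y t) (Ici 0) t)
    (hy : ∀ t ∈ Ici (0 : ℝ), HasDerivWithinAt y
      (a₂ * x t ^ 2 + b₂ * x t * y t + c₂ * y t ^ 2 + α₂ * x t + β₂ * y t) (Ici 0) t)
    (hx0 : x 0 > -β₁ / b₁) :
    (∀ t ≥ (0 : ℝ), x t > -β₁ / b₁) ∧
    Bornology.IsBounded ((fun t => (x t, y t)) '' Ici (0 : ℝ)) ∧
    ({p : ℝ × ℝ | MapClusterPt p atTop fun t : ℝ => (x t, y t)}.Nonempty ∧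
      Bornology.IsBounded {p : ℝ × ℝ | MapClusterPt p atTop fun t : ℝ => (x t, y t)} ∧
      {p : ℝ × ℝ | MapClusterPt p atTop fun t : ℝ => (x t, y t)}
        ⊆ {p : ℝ × ℝ | p.1 > -β₁ / b₁}) := by
  obtain ⟨a, ha⟩ : ∃ a, a = -β₁ / b₁ := ⟨_, rfl⟩
  obtain ⟨k, hk⟩ : ∃ k, k = a₁ / b₁ := ⟨_, rfl⟩
  obtain ⟨e, he⟩ : ∃ e, e = (2 * a₁ * a + α₁) / b₁ := ⟨_, rfl⟩
  have ha1 : a₁ = k * b₁ := by rw [hk]; field_simp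
  have hbe : β₁ = -(a * b₁) := by rw [ha]; field_simp
  have hal : α₁ = e * b₁ - 2 * k * b₁ * a := by
    rw [← sub_eq_zero, he, hk]; field_simp; ring
  have ha0 : a < 0 := by rw [ha]; exact div_neg_of_neg_of_pos (by linarith) hb₁
  rw [← ha] at hx0 ⊢
  have hm : 0 < a₁ * a ^ 2 + α₁ * a := by
    have : α₁ + a₁ * a < 0 := by
      have : a₁ * β₁ / b₁ = -(a₁ * a) := by rw [ha]; ring
      linarith
    nlinarith
  have hA : 0 < -(a₂ - b₂ * k + c₂ * k ^ 2) := by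
    have : a₁ * (b₁ * b₂ - a₁ * c₂) / b₁ ^ 2 = b₂ * k - c₂ * k ^ 2 := by
      rw [hk]; field_simp
    linarith
  have hB : 0 < -(b₂ - 2 * k * c₂ + a₁) := by
    have : a₁ * (2 * c₂ - b₁) / b₁ = 2 * k * c₂ - a₁ := by
      rw [hk]; field_simp
    linarith
  obtain ⟨u₀, u₁, Z, hu₀, hbd⟩ := normal_form_bounded b₁ c₂ (a₁ * a ^ 2 + α₁ * a)
    (-(a₂ - b₂ * k + c₂ * k ^ 2)) (-(b₂ - 2 * k * c₂ + a₁))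
    (2 * a₂ * a + b₂ * (-e - a * k) + 2 * c₂ * k * e + α₂ - β₂ * k)
    (b₂ * a - 2 * c₂ * e + β₂)
    (a₂ * a ^ 2 - b₂ * a * e + c₂ * e ^ 2 + α₂ * a - β₂ * e + k * (a₁ * a ^ 2 + α₁ * a))
    (by linarith) h21b hm hA hB
    (fun t => x t - a) (fun t => y t + k * (x t - a) + e)
    (fun t ht => ((hx t ht).sub_const a).congr_deriv (by
      rw [ha1, hal, hbe]; ring))
    (fun t ht => (((hy t ht).add (((hx t ht).sub_const a).const_mul k)).add_const e).congr_deriv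
      (by rw [ha1, hal, hbe]; ring))
    (by linarith)
  obtain ⟨Y, hY⟩ : ∃ Y, ∀ t ≥ (0 : ℝ), |y t| ≤ Y := by
    refine ⟨Z + |k| * u₁ + |e|, fun t ht => ?_⟩
    obtain ⟨h1, h2, h3⟩ := hbd t ht
    have h4 : |k * (x t - a)| ≤ |k| * u₁ := by
      rw [abs_mul, abs_of_pos (by linarith : 0 < x t - a)]
      exact mul_le_mul_of_nonneg_left h2 (abs_nonneg k)
    rw [abs_le] at h3 h4 ⊢
    have := neg_abs_le e
    have := le_abs_self e
    constructor <;> linarith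
  set C : Set (ℝ × ℝ) := Icc (a + u₀) (a + u₁) ×ˢ Icc (-Y) Y with hC
  have hCc : IsCompact C := isCompact_Icc.prod isCompact_Icc
  have hmem : ∀ t ≥ (0 : ℝ), (x t, y t) ∈ C := by
    intro t ht
    obtain ⟨h1, h2, -⟩ := hbd t ht
    exact ⟨⟨by simp only; linarith, by simp only; linarith⟩, abs_le.1 (hY t ht)⟩
  have hev : ∀ᶠ t : ℝ in atTop, (x t, y t) ∈ C := by
    filter_upwards [eventually_ge_atTop 0] with t ht using hmem t ht
  have hsub : {p : ℝ × ℝ | MapClusterPt p atTop fun t : ℝ => (x t, y t)} ⊆ C := by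
    intro p hp
    exact hCc.isClosed.mem_of_mapClusterPt hp hev
  refine ⟨fun t ht => ?_, ?_, ?_, hCc.isBounded.subset hsub, fun p hp => ?_⟩
  · have := (hbd t ht).1
    linarith
  · exact hCc.isBounded.subset (by rintro _ ⟨t, ht, rfl⟩; exact hmem t ht)
  · obtain ⟨p, -, hp⟩ := hCc.exists_mapClusterPt_of_frequently hev.frequently
    exact ⟨p, hp⟩
  · have := (hsub hp).1.1
    show a < p.1
    linarith
end

section
/- Consider the planar quadratic system ẋ = a₁x² + b₁xy + α₁x + β₁y, ẏ = a₂x² + b₂xy + c₂y² + α₂x + β₂y with real coefficients, b₁ > 0, and set a = −β₁/b₁. Under conditions (21): 0 < 2c₂ < b₁, β₁ > 0, a₁β₁/b₁ > α₁, a₁(2c₂ − b₁)/b₁ > b₂, a₁(b₁b₂ − a₁c₂)/b₁² > a₂, the closed half-plane {x ≥ a} is positively invariant: every solution with x(0) ≥ a satisfies x(t) ≥ a for all t ≥ 0 in its interval of existence. -/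
/-!
On the line `x = a = -β₁ / b₁` the terms in `y` cancel in `ẋ`, which becomes the constant
`(β₁ / b₁) * (a₁ * β₁ / b₁ - α₁)`. This is positive, so every solution crosses the line from left
to right only. The comparison lemma `image_le_of_deriv_right_lt_deriv_boundary`, applied to `-x`
and the constant bound `β₁ / b₁`, turns this into invariance of `{x ≥ a}`.
-/

open Set

/-- under conditions (21), the closed half-plane `{x ≥ a}` (`a = −β₁/b₁`) is
positively invariant for the quadratic system: every solution with `x 0 ≥ a` satisfies
`x t ≥ a` for all `t ≥ 0` in its interval of existence. -/
theorem quadratic_system_halfplane_invariant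
    (a₁ b₁ α₁ β₁ a₂ b₂ c₂ α₂ β₂ : ℝ) (hb₁ : 0 < b₁)
    -- conditions (21)
    (h21a : 0 < 2 * c₂) (h21b : 2 * c₂ < b₁) (h21c : 0 < β₁)
    (h21d : a₁ * β₁ / b₁ > α₁)
    (h21e : a₁ * (2 * c₂ - b₁) / b₁ > b₂)
    (h21f : a₁ * (b₁ * b₂ - a₁ * c₂) / b₁ ^ 2 > a₂)
    (I : Set ℝ) (hIopen : IsOpen I) (hIconn : I.OrdConnected) (h0 : (0 : ℝ) ∈ I)
    (x y : ℝ → ℝ)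
    (hx : ∀ t ∈ I, HasDerivAt x
      (a₁ * x t ^ 2 + b₁ * x t * y t + α₁ * x t + β₁ * y t) t)
    (hy : ∀ t ∈ I, HasDerivAt y
      (a₂ * x t ^ 2 + b₂ * x t * y t + c₂ * y t ^ 2 + α₂ * x t + β₂ * y t) t)
    (hx0 : x 0 ≥ -β₁ / b₁) :
    ∀ t ∈ I, 0 ≤ t → x t ≥ -β₁ / b₁ := by
  intro T hT hT0
  have hsub : Icc 0 T ⊆ I := hIconn.out h0 hT
  have hcmp : ∀ ⦃t⦄, t ∈ Icc 0 T → -x t ≤ β₁ / b₁ := by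
    refine image_le_of_deriv_right_lt_deriv_boundary (f := fun t => -x t) (B' := fun _ => 0)
      (fun t ht => (hx t (hsub ht)).continuousAt.neg.continuousWithinAt)
      (fun t ht => (hx t (hsub (Ico_subset_Icc_self ht))).neg.hasDerivWithinAt)
      (by linarith [neg_div b₁ β₁]) (fun t => hasDerivAt_const t (β₁ / b₁)) ?_
    intro t _ hxt
    have hxa : x t = -(β₁ / b₁) := by linarith
    have hpos : 0 < β₁ / b₁ * (a₁ * β₁ / b₁ - α₁) :=
      mul_pos (div_pos h21c hb₁) (by linarith)
    -- On the line `x = -β₁ / b₁` the coefficient `b₁ * x + β₁` of `y` vanishes.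
    have hval : a₁ * x t ^ 2 + b₁ * x t * y t + α₁ * x t + β₁ * y t
        = β₁ / b₁ * (a₁ * β₁ / b₁ - α₁) := by
      rw [hxa]
      field_simp
      ring
    linarith
  linarith [hcmp (right_mem_Icc.2 hT0), neg_div b₁ β₁]
end
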